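/- Let P1 and P2 be n×n skew-symmetric matrix pencils. Then orbᶜ(P2) ⊂ closure(orbᶜ(P1)) if and only if P2 can be obtained from P1 by changing the canonical blocks of P1 through a finite sequence of structure transitions, each of one of the following four types: (1) M_j ⊕ M_k ⇝ M_{j−1} ⊕ M_{k+1} for 1 ≤ j ≤ k; (2) H_{j−1}(μ) ⊕ H_{k+1}(μ) ⇝ H_j(μ) ⊕ H_k(μ) for 1 ≤ j ≤ k and μ ∈ ℂ ∪ {∞}; (3) M_{j+1} ⊕ H_k(μ) ⇝ M_j ⊕ H_{k+1}(μ) for j, k ≥ 0 and μ ∈ ℂ ∪ {∞}; (4) ⊕_{i=1}^t H_{k_i}(μ_i) ⇝ M_p ⊕ M_q, where p + q + 1 = Σ_{i=1}^t k_i and the μ_i ∈ ℂ ∪ {∞} are pairwise distinct. -/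

import Mathlib

/-!
Basic framework: a complex `m × n` matrix pencil `A - λ B` is formalized as the
pair `(A, B)` of matrices.  We define strict equivalence, congruence,
skew-symmetry, orbits, direct sums, and the cover relations for the orbit
closure hierarchies (in the Euclidean topology).
-/

open Matrix

noncomputable section

/-- An `m × n` complex matrix pencil `A - λ B`, formalized as the pair `(A, B)`. -/
abbrev Pencil (m n : ℕ) : Type :=
  Matrix (Fin m) (Fin n) ℂ × Matrix (Fin m) (Fin n) ℂ

namespace Pencil

/-- Strict equivalence of matrix pencils: `Q⁻¹ * A * R = C` and `Q⁻¹ * B * R = D`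
for some invertible `Q`, `R`. -/
def StrictEquiv {m n : ℕ} (P Q : Pencil m n) : Prop :=
  ∃ (S : Matrix (Fin m) (Fin m) ℂ) (R : Matrix (Fin n) (Fin n) ℂ),
    IsUnit S ∧ IsUnit R ∧ S⁻¹ * P.1 * R = Q.1 ∧ S⁻¹ * P.2 * R = Q.2

/-- The strict-equivalence orbit of a pencil. -/
def orbE {m n : ℕ} (P : Pencil m n) : Set (Pencil m n) :=
  {Q | StrictEquiv P Q}

/-- A pencil `A - λ B` is skew-symmetric if `Aᵀ = -A` and `Bᵀ = -B`. -/
def IsSkew {n : ℕ} (P : Pencil n n) : Prop :=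
  P.1ᵀ = -P.1 ∧ P.2ᵀ = -P.2

/-- Congruence of (square) matrix pencils: `Sᵀ * A * S = C` and `Sᵀ * B * S = D`
for some invertible `S`. -/
def Congruent {n : ℕ} (P Q : Pencil n n) : Prop :=
  ∃ S : Matrix (Fin n) (Fin n) ℂ,
    IsUnit S ∧ Sᵀ * P.1 * S = Q.1 ∧ Sᵀ * P.2 * S = Q.2

/-- The congruence orbit of a pencil. -/
def orbC {n : ℕ} (P : Pencil n n) : Set (Pencil n n) :=
  {Q | Congruent P Q}

/-- Direct (block-diagonal) sum of two pencils. -/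
def dsum {m n p q : ℕ} (P : Pencil m n) (Q : Pencil p q) : Pencil (m + p) (n + q) :=
  ((fromBlocks P.1 0 0 Q.1).submatrix finSumFinEquiv.symm finSumFinEquiv.symm,
   (fromBlocks P.2 0 0 Q.2).submatrix finSumFinEquiv.symm finSumFinEquiv.symm)

/-- Transport a pencil along equalities of its dimensions. -/
def cast {m n m' n' : ℕ} (hm : m = m') (hn : n = n') (P : Pencil m n) : Pencil m' n' :=
  (P.1.submatrix (finCongr hm.symm) (finCongr hn.symm),
   P.2.submatrix (finCongr hm.symm) (finCongr hn.symm))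

/-- `orbE P1` covers `orbE P2` in the closure hierarchy of strict-equivalence
orbits: `P1` is not strictly equivalent to `P2`, `orbE P2 ⊆ closure (orbE P1)`,
and there is no intermediate orbit strictly between them. -/
def CoversE {m n : ℕ} (P1 P2 : Pencil m n) : Prop :=
  ¬ StrictEquiv P1 P2 ∧ orbE P2 ⊆ closure (orbE P1) ∧
    ¬ ∃ P : Pencil m n, ¬ StrictEquiv P P1 ∧ ¬ StrictEquiv P P2 ∧
        orbE P ⊆ closure (orbE P1) ∧ orbE P2 ⊆ closure (orbE P)

/-- `orbC P1` covers `orbC P2` in the closure hierarchy of congruence orbits of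
skew-symmetric pencils: `P1` is not congruent to `P2`,
`orbC P2 ⊆ closure (orbC P1)`, and there is no congruence orbit of a
skew-symmetric pencil strictly between them. -/
def CoversC {n : ℕ} (P1 P2 : Pencil n n) : Prop :=
  ¬ Congruent P1 P2 ∧ orbC P2 ⊆ closure (orbC P1) ∧
    ¬ ∃ P : Pencil n n, IsSkew P ∧ ¬ Congruent P P1 ∧ ¬ Congruent P P2 ∧
        orbC P ⊆ closure (orbC P1) ∧ orbC P2 ⊆ closure (orbC P)

end Pencil

/-! Canonical building blocks. -/

/-- The `k × k` Jordan block `J_k(μ)`. -/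
def Jmat (k : ℕ) (μ : ℂ) : Matrix (Fin k) (Fin k) ℂ :=
  Matrix.of fun i j => if (j : ℕ) = (i : ℕ) then μ else if (j : ℕ) = (i : ℕ) + 1 then 1 else 0

/-- The `k × (k+1)` matrix `F_k` with ones on the superdiagonal. -/
def Fmat (k : ℕ) : Matrix (Fin k) (Fin (k + 1)) ℂ :=
  Matrix.of fun i j => if (j : ℕ) = (i : ℕ) + 1 then 1 else 0

/-- The `k × (k+1)` matrix `G_k` with ones on the diagonal. -/
def Gmat (k : ℕ) : Matrix (Fin k) (Fin (k + 1)) ℂ :=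
  Matrix.of fun i j => if (j : ℕ) = (i : ℕ) then 1 else 0

/-- The Kronecker block `E_k(μ) = J_k(μ) - λ I_k`. -/
def Eblk (k : ℕ) (μ : ℂ) : Pencil k k := (Jmat k μ, 1)

/-- The Kronecker block `E_k(∞) = I_k - λ J_k(0)`. -/
def EInfblk (k : ℕ) : Pencil k k := (1, Jmat k 0)

/-- The Kronecker block `L_k = F_k - λ G_k`. -/
def Lblk (k : ℕ) : Pencil k (k + 1) := (Fmat k, Gmat k)

/-- The Kronecker block `L_kᵀ = F_kᵀ - λ G_kᵀ`. -/
def LTblk (k : ℕ) : Pencil (k + 1) k := ((Fmat k)ᵀ, (Gmat k)ᵀ)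

/-- The skew-symmetric matrix `[[0, X], [-Xᵀ, 0]]`. -/
def skewPair {p q : ℕ} (X : Matrix (Fin p) (Fin q) ℂ) :
    Matrix (Fin (p + q)) (Fin (p + q)) ℂ :=
  (fromBlocks 0 X (-Xᵀ) 0).submatrix finSumFinEquiv.symm finSumFinEquiv.symm

/-- The skew-symmetric canonical block `H_h(μ)` (size `2h × 2h`). -/
def Hblk (h : ℕ) (μ : ℂ) : Pencil (h + h) (h + h) :=
  (skewPair (Jmat h μ), skewPair (1 : Matrix (Fin h) (Fin h) ℂ))

/-- The skew-symmetric canonical block `K_k = H_k(∞)` (size `2k × 2k`). -/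
def Kblk (k : ℕ) : Pencil (k + k) (k + k) :=
  (skewPair (1 : Matrix (Fin k) (Fin k) ℂ), skewPair (Jmat k 0))

/-- The skew-symmetric canonical block `M_m` (size `(2m+1) × (2m+1)`). -/
def Mblk (m : ℕ) : Pencil (m + (m + 1)) (m + (m + 1)) :=
  (skewPair (Fmat m), skewPair (Gmat m))

/-! Skew-symmetric (Thompson) canonical forms as multisets of block
descriptors. -/

/-- Descriptor of a skew-symmetric canonical block. -/
inductive SBlock : Type
  | H : ℕ → ℂ → SBlock    -- `H_h(μ)`, `μ ∈ ℂ`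
  | K : ℕ → SBlock         -- `K_k = H_k(∞)`
  | M : ℕ → SBlock         -- `M_m`

namespace SBlock

/-- Size of a block. -/
def size : SBlock → ℕ
  | H h _ => h + h
  | K k => k + k
  | M m => m + (m + 1)

/-- A block is valid (may occur in a canonical form) if the `H`- and `K`-blocks
have index at least one. -/
def valid : SBlock → Prop
  | H h _ => 1 ≤ h
  | K k => 1 ≤ k
  | M _ => True

/-- The pencil corresponding to a block descriptor. -/
def toPencil : (b : SBlock) → Pencil b.size b.size
  | H h μ => Hblk h μ
  | K k => Kblk k
  | M m => Mblk m

end SBlock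

/-- The block `H_h(μ)` for an eigenvalue `μ ∈ ℂ ∪ {∞}`; `none` encodes `∞`
(so `Hb none h` is the block `K_h`). -/
def Hb : Option ℂ → ℕ → SBlock
  | some μ, h => SBlock.H h μ
  | none, h => SBlock.K h

/-- Total size of a list of blocks. -/
def sizeSum : List SBlock → ℕ
  | [] => 0
  | b :: t => b.size + sizeSum t

/-- The direct sum of the blocks in a list. -/
def spencilOfList : (l : List SBlock) → Pencil (sizeSum l) (sizeSum l)
  | [] => (0, 0)
  | b :: t => Pencil.dsum b.toPencil (spencilOfList t)

/-- `s` is the multiset of blocks of the skew-symmetric canonical form of `P`,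
i.e. `P` is congruent to the direct sum of the blocks of `s`. -/
def RepresentsC {n : ℕ} (P : Pencil n n) (s : Multiset SBlock) : Prop :=
  (∀ b ∈ s, b.valid) ∧
  ∃ (l : List SBlock) (h : sizeSum l = n),
    (l : Multiset SBlock) = s ∧
    Pencil.Congruent (Pencil.cast h h (spencilOfList l)) P

/-- Like `RepresentsC`, but also allowing degenerate (empty) blocks such as
`H_0(μ)` among the summands. -/
def WeakRepresentsC {n : ℕ} (P : Pencil n n) (s : Multiset SBlock) : Prop :=
  ∃ (l : List SBlock) (h : sizeSum l = n),
    (l : Multiset SBlock) = s ∧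
    Pencil.Congruent (Pencil.cast h h (spencilOfList l)) P

/-- One structure transition of the four types of Theorem 3.4 on a
skew-symmetric canonical form, viewed as a multiset of blocks (`Hb none`
encodes the blocks `H_k(∞) = K_k`). -/
def TransSkew (s t : Multiset SBlock) : Prop :=
  -- (1): `M_j ⊕ M_k ⇝ M_{j-1} ⊕ M_{k+1}`, `1 ≤ j ≤ k`
  (∃ (j k : ℕ) (rest : Multiset SBlock), 1 ≤ j ∧ j ≤ k ∧
      s = SBlock.M j ::ₘ SBlock.M k ::ₘ rest ∧
      t = SBlock.M (j - 1) ::ₘ SBlock.M (k + 1) ::ₘ rest) ∨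
  -- (2): `H_{j-1}(μ) ⊕ H_{k+1}(μ) ⇝ H_j(μ) ⊕ H_k(μ)`, `1 ≤ j ≤ k`, `μ ∈ ℂ ∪ {∞}`
  (∃ (j k : ℕ) (μ : Option ℂ) (rest : Multiset SBlock), 1 ≤ j ∧ j ≤ k ∧
      s = Hb μ (j - 1) ::ₘ Hb μ (k + 1) ::ₘ rest ∧
      t = Hb μ j ::ₘ Hb μ k ::ₘ rest) ∨
  -- (3): `M_{j+1} ⊕ H_k(μ) ⇝ M_j ⊕ H_{k+1}(μ)`, `j, k ≥ 0`, `μ ∈ ℂ ∪ {∞}`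
  (∃ (j k : ℕ) (μ : Option ℂ) (rest : Multiset SBlock),
      s = SBlock.M (j + 1) ::ₘ Hb μ k ::ₘ rest ∧
      t = SBlock.M j ::ₘ Hb μ (k + 1) ::ₘ rest) ∨
  -- (4): `⊕ᵢ H_{kᵢ}(μᵢ) ⇝ M_p ⊕ M_q`, `p + q + 1 = Σ kᵢ`, `μᵢ` pairwise distinct
  (∃ (ek : List (Option ℂ × ℕ)) (p q : ℕ) (rest : Multiset SBlock),
      (ek.map Prod.fst).Nodup ∧
      p + q + 1 = (ek.map Prod.snd).sum ∧
      s = ↑(ek.map fun x => Hb x.1 x.2) + rest ∧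
      t = SBlock.M p ::ₘ SBlock.M q ::ₘ rest)

namespace SkewPencil

/-- A square matrix pencil with rows and columns indexed by an arbitrary type. -/
abbrev FormPair (ι : Type) : Type := Matrix ι ι ℂ × Matrix ι ι ℂ

namespace FormPair

section Basic

variable {ι κ τ υ : Type} [Fintype ι] [DecidableEq ι] [Fintype κ] [DecidableEq κ]
  [Fintype τ] [DecidableEq τ] [Fintype υ] [DecidableEq υ]

/-- Congruence of pencils over possibly different index types. -/
def Cong (P : FormPair ι) (Q : FormPair κ) : Prop :=
  ∃ (S : Matrix ι κ ℂ) (T : Matrix κ ι ℂ),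
    S * T = 1 ∧ T * S = 1 ∧ Sᵀ * P.1 * S = Q.1 ∧ Sᵀ * P.2 * S = Q.2

theorem Cong.refl (P : FormPair ι) : Cong P P :=
  ⟨1, 1, by simp, by simp, by simp, by simp⟩

theorem Cong.symm {P : FormPair ι} {Q : FormPair κ} (h : Cong P Q) : Cong Q P := by
  obtain ⟨S, T, h1, h2, h3, h4⟩ := h
  have ht : Tᵀ * Sᵀ = 1 := by rw [← transpose_mul, h1, transpose_one]
  refine ⟨T, S, h2, h1, ?_, ?_⟩
  · rw [← h3]
    calc Tᵀ * (Sᵀ * P.1 * S) * T = (Tᵀ * Sᵀ) * P.1 * (S * T) := by simp only [Matrix.mul_assoc]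
      _ = P.1 := by rw [ht, h1]; simp
  · rw [← h4]
    calc Tᵀ * (Sᵀ * P.2 * S) * T = (Tᵀ * Sᵀ) * P.2 * (S * T) := by simp only [Matrix.mul_assoc]
      _ = P.2 := by rw [ht, h1]; simp

theorem Cong.trans {P : FormPair ι} {Q : FormPair κ} {R : FormPair τ}
    (h : Cong P Q) (h' : Cong Q R) : Cong P R := by
  obtain ⟨S, T, h1, h2, h3, h4⟩ := h
  obtain ⟨S', T', h1', h2', h3', h4'⟩ := h'
  refine ⟨S * S', T' * T, ?_, ?_, ?_, ?_⟩
  · calc S * S' * (T' * T) = S * (S' * T') * T := by simp only [Matrix.mul_assoc]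
      _ = 1 := by rw [h1', Matrix.mul_one, h1]
  · calc T' * T * (S * S') = T' * (T * S) * S' := by simp only [Matrix.mul_assoc]
      _ = 1 := by rw [h2, Matrix.mul_one, h2']
  · rw [← h3', ← h3, transpose_mul]; simp only [Matrix.mul_assoc]
  · rw [← h4', ← h4, transpose_mul]; simp only [Matrix.mul_assoc]

/-- Relabel the rows and columns of a pencil. -/
def reindex (e : κ → ι) (P : FormPair ι) : FormPair κ :=
  (P.1.submatrix e e, P.2.submatrix e e)

theorem cong_reindex (e : κ ≃ ι) (P : FormPair ι) : Cong P (reindex e P) := by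
  refine ⟨(1 : Matrix ι ι ℂ).submatrix id e, (1 : Matrix ι ι ℂ).submatrix e id, ?_, ?_, ?_, ?_⟩
  · rw [submatrix_mul_equiv]; simp
  · rw [← submatrix_mul _ _ _ _ _ Function.bijective_id]; simp
  · ext i j
    simp [reindex, Matrix.mul_apply, Matrix.one_apply]
  · ext i j
    simp [reindex, Matrix.mul_apply, Matrix.one_apply]

/-- Direct sum of pencils. -/
def ds (P : FormPair ι) (Q : FormPair κ) : FormPair (ι ⊕ κ) :=
  (fromBlocks P.1 0 0 Q.1, fromBlocks P.2 0 0 Q.2)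

theorem Cong.ds {P : FormPair ι} {Q : FormPair κ} {P' : FormPair τ} {Q' : FormPair υ}
    (h : Cong P P') (h' : Cong Q Q') : Cong (ds P Q) (FormPair.ds P' Q') := by
  obtain ⟨S, T, h1, h2, h3, h4⟩ := h
  obtain ⟨S', T', h1', h2', h3', h4'⟩ := h'
  refine ⟨fromBlocks S 0 0 S', fromBlocks T 0 0 T', ?_, ?_, ?_, ?_⟩ <;>
  simp [fromBlocks_multiply, fromBlocks_transpose, FormPair.ds, *]

theorem ds_comm (P : FormPair ι) (Q : FormPair κ) : Cong (ds P Q) (ds Q P) := by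
  convert cong_reindex (Equiv.sumComm κ ι) (ds P Q) using 1
  apply Prod.ext <;> ext i j <;> rcases i with i | i <;> rcases j with j | j <;> rfl

theorem ds_assoc (P : FormPair ι) (Q : FormPair κ) (R : FormPair τ) :
    Cong (ds (ds P Q) R) (ds P (ds Q R)) := by
  convert cong_reindex (Equiv.sumAssoc ι κ τ).symm (ds (ds P Q) R) using 1
  apply Prod.ext <;> ext i j <;> rcases i with i | i | i <;> rcases j with j | j | j <;> rfl

theorem ds_empty [IsEmpty κ] (P : FormPair ι) (Q : FormPair κ) : Cong (ds P Q) P := by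
  convert cong_reindex (Equiv.sumEmpty ι κ).symm (ds P Q) using 1
  apply Prod.ext <;> rfl

theorem empty_ds [IsEmpty κ] (P : FormPair ι) (Q : FormPair κ) : Cong (ds Q P) P :=
  (ds_comm Q P).trans (ds_empty P Q)

theorem ds_left_comm (P : FormPair ι) (Q : FormPair κ) (R : FormPair τ) :
    Cong (ds P (ds Q R)) (ds Q (ds P R)) :=
  (ds_assoc P Q R).symm.trans (((ds_comm P Q).ds (Cong.refl R)).trans (ds_assoc Q P R))

/-- `Degen P Q` states that `Q` lies in the closure of the congruence orbit of `P`. -/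
def Degen (P : FormPair ι) (Q : FormPair κ) : Prop := Q ∈ closure {R : FormPair κ | Cong P R}

theorem Cong.degen {P : FormPair ι} {Q : FormPair κ} (h : Cong P Q) : Degen P Q :=
  subset_closure h

theorem Degen.map {P : FormPair ι} {Q : FormPair κ} {P' : FormPair τ} (h : Degen P Q)
    (g : FormPair κ → FormPair υ) (hg : Continuous g)
    (hP : ∀ R, Cong P R → Degen P' (g R)) : Degen P' (g Q) := by
  have h1 : g Q ∈ closure (g '' {R : FormPair κ | Cong P R}) :=
    image_closure_subset_closure_image hg ⟨Q, h, rfl⟩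
  refine closure_minimal ?_ isClosed_closure h1
  rintro _ ⟨R, hR, rfl⟩
  exact hP R hR

theorem Degen.cong_right {P : FormPair ι} {Q : FormPair κ} {Q' : FormPair τ} (h : Degen P Q)
    (h' : Cong Q Q') : Degen P Q' := by
  obtain ⟨S, T, h1, h2, h3, h4⟩ := h'
  have := h.map (P' := P) (fun R : FormPair κ => (Sᵀ * R.1 * S, Sᵀ * R.2 * S)) (by fun_prop)
    (fun R hR => (hR.trans ⟨S, T, h1, h2, rfl, rfl⟩).degen)
  rwa [show Q' = (Sᵀ * Q.1 * S, Sᵀ * Q.2 * S) from Prod.ext h3.symm h4.symm]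

theorem Degen.trans {P : FormPair ι} {Q : FormPair κ} {R : FormPair τ}
    (h : Degen P Q) (h' : Degen Q R) : Degen P R := by
  refine closure_minimal ?_ isClosed_closure h'
  exact fun R' hR' => h.cong_right hR'

theorem Degen.cong_left {P : FormPair ι} {Q : FormPair κ} {P' : FormPair τ}
    (h' : Cong P' P) (h : Degen P Q) : Degen P' Q :=
  h'.degen.trans h

theorem Degen.ds_right {P : FormPair ι} {Q : FormPair κ} (h : Degen P Q) (R : FormPair τ) :
    Degen (ds P R) (ds Q R) :=
  h.map (fun Q => ds Q R)
    (by
      refine Continuous.prodMk ?_ ?_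
      · exact (continuous_fst.matrix_fromBlocks continuous_const continuous_const continuous_const)
      · exact (continuous_snd.matrix_fromBlocks continuous_const continuous_const continuous_const))
    (fun _ hR' => (hR'.ds (Cong.refl R)).degen)

/-- To degenerate it suffices to exhibit a one-parameter family inside the orbit. -/
theorem Degen.of_family {P : FormPair ι} {Q : FormPair κ} (E : FormPair κ)
    (h : ∀ c : ℂ, c ≠ 0 → Cong P (Q + c • E)) : Degen P Q := by
  have hc : Continuous (fun c : ℂ => Q + c • E) := by fun_prop
  have : (fun c : ℂ => Q + c • E) 0 ∈
      closure ((fun c : ℂ => Q + c • E) '' {(0 : ℂ)}ᶜ) := by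
    apply image_closure_subset_closure_image hc
    refine ⟨0, ?_, rfl⟩
    rw [(dense_compl_singleton (0 : ℂ)).closure_eq]
    trivial
  simp only [zero_smul, add_zero] at this
  refine closure_mono ?_ this
  rintro _ ⟨c, hc, rfl⟩
  exact h c hc

end Basic

/-- The pencil of a list of blocks. -/
abbrev ofList (l : List SBlock) : FormPair (Fin (sizeSum l)) := spencilOfList l

theorem cong_dsum {m n : ℕ} (P : FormPair (Fin m)) (Q : FormPair (Fin n)) :
    Cong (ds P Q) (Pencil.dsum P Q : FormPair (Fin (m + n))) :=
  cong_reindex finSumFinEquiv.symm (ds P Q)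

theorem ofList_cons (b : SBlock) (l : List SBlock) :
    Cong (ds (b.toPencil : FormPair (Fin b.size)) (ofList l)) (ofList (b :: l)) :=
  cong_dsum _ _

theorem ofList_append (l l' : List SBlock) :
    Cong (ds (ofList l) (ofList l')) (ofList (l ++ l')) := by
  induction l with
  | nil =>
    have : IsEmpty (Fin (sizeSum [])) := Fin.isEmpty
    exact empty_ds (ofList l') (ofList [])
  | cons b t ih =>
    refine ((ofList_cons b t).symm.ds (Cong.refl _)).trans ?_
    refine (ds_assoc _ _ _).trans ?_
    exact ((Cong.refl _).ds ih).trans (ofList_cons b (t ++ l'))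

theorem ofList_perm {l l' : List SBlock} (h : l.Perm l') : Cong (ofList l) (ofList l') := by
  induction h with
  | nil => exact Cong.refl _
  | cons b _ ih =>
    exact (ofList_cons _ _).symm.trans (((Cong.refl _).ds ih).trans (ofList_cons _ _))
  | swap a b t =>
    refine (ofList_cons _ _).symm.trans (((Cong.refl _).ds (ofList_cons _ _).symm).trans ?_)
    exact (ds_left_comm _ _ _).trans (((Cong.refl _).ds (ofList_cons _ _)).trans (ofList_cons _ _))
  | trans _ _ ih1 ih2 => exact ih1.trans ih2

theorem ofList_singleton (b : SBlock) :
    Cong (b.toPencil : FormPair (Fin b.size)) (ofList [b]) := by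
  have : IsEmpty (Fin (sizeSum [])) := Fin.isEmpty
  exact (ds_empty _ (ofList [])).symm.trans (ofList_cons b [])

theorem congruent_iff_cong {n : ℕ} (P Q : Pencil n n) :
    Pencil.Congruent P Q ↔ Cong (P : FormPair (Fin n)) Q := by
  constructor
  · rintro ⟨S, hS, h1, h2⟩
    rw [Matrix.isUnit_iff_isUnit_det] at hS
    exact ⟨S, S⁻¹, Matrix.mul_nonsing_inv S hS, Matrix.nonsing_inv_mul S hS, h1, h2⟩
  · rintro ⟨S, T, h1, h2, h3, h4⟩
    exact ⟨S, IsUnit.of_mul_eq_one _ h1, h3, h4⟩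

theorem cong_card {ι κ : Type} [Fintype ι] [DecidableEq ι] [Fintype κ] [DecidableEq κ]
    {P : FormPair ι} {Q : FormPair κ} (h : Cong P Q) : Fintype.card ι = Fintype.card κ := by
  obtain ⟨S, T, h1, h2, -⟩ := h
  exact (Matrix.square_of_invertible S T h1 h2)

theorem weakRepresentsC_iff {n : ℕ} (P : Pencil n n) (s : Multiset SBlock) :
    WeakRepresentsC P s ↔ ∃ l : List SBlock, (l : Multiset SBlock) = s ∧
      Cong (ofList l) (P : FormPair (Fin n)) := by
  constructor
  · rintro ⟨l, h, hl, hc⟩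
    refine ⟨l, hl, ?_⟩
    rw [congruent_iff_cong] at hc
    exact (cong_reindex (finCongr h.symm) (ofList l)).trans hc
  · rintro ⟨l, hl, hc⟩
    have h : sizeSum l = n := by simpa using cong_card hc
    refine ⟨l, h, hl, ?_⟩
    rw [congruent_iff_cong]
    exact (cong_reindex (finCongr h.symm) (ofList l)).symm.trans hc

/-- Degeneration between direct sums of canonical blocks. -/
def BlockDegen (s t : Multiset SBlock) : Prop :=
  ∀ l l' : List SBlock, (l : Multiset SBlock) = s → (l' : Multiset SBlock) = t →
    Degen (ofList l) (ofList l')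

theorem BlockDegen.of_lists {l l' : List SBlock} (h : Degen (ofList l) (ofList l')) :
    BlockDegen l l' := by
  intro k k' hk hk'
  exact ((ofList_perm (Multiset.coe_eq_coe.mp hk)).degen.trans h).cong_right
    (ofList_perm (Multiset.coe_eq_coe.mp hk'.symm))

theorem BlockDegen.trans {s t u : Multiset SBlock} (h : BlockDegen s t) (h' : BlockDegen t u) :
    BlockDegen s u := by
  intro l l' hl hl'
  exact (h l t.toList hl (by simp)).trans (h' t.toList l' (by simp) hl')

theorem BlockDegen.add_right {s t : Multiset SBlock} (h : BlockDegen s t) (r : Multiset SBlock) :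
    BlockDegen (s + r) (t + r) := by
  have hs : s + r = ((s.toList ++ r.toList : List SBlock) : Multiset SBlock) := by
    rw [← Multiset.coe_add]; simp
  have ht : t + r = ((t.toList ++ r.toList : List SBlock) : Multiset SBlock) := by
    rw [← Multiset.coe_add]; simp
  rw [hs, ht]
  apply BlockDegen.of_lists
  refine Degen.cong_left (ofList_append _ _).symm ?_
  exact ((h s.toList t.toList (by simp) (by simp)).ds_right _).cong_right (ofList_append _ _)

end FormPair

/-- A rectangular matrix pencil. -/
abbrev RectPair (ρ κ : Type) : Type := Matrix ρ κ ℂ × Matrix ρ κ ℂ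

namespace FormPair

section Skew

variable {ρ κ ρ' κ' : Type} [Fintype ρ] [DecidableEq ρ] [Fintype κ] [DecidableEq κ]
  [Fintype ρ'] [DecidableEq ρ'] [Fintype κ'] [DecidableEq κ']

/-- The skew-symmetric pencil with off-diagonal block `X`. -/
def sk (X : RectPair ρ κ) : FormPair (ρ ⊕ κ) :=
  (fromBlocks 0 X.1 (-X.1ᵀ) 0, fromBlocks 0 X.2 (-X.2ᵀ) 0)

theorem sk_cong {X : RectPair ρ κ} {Y : RectPair ρ' κ'} (S : Matrix ρ' ρ ℂ) (S' : Matrix ρ ρ' ℂ)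
    (T : Matrix κ' κ ℂ) (T' : Matrix κ κ' ℂ) (hS : S * S' = 1) (hS' : S' * S = 1)
    (hT : T * T' = 1) (hT' : T' * T = 1)
    (h1 : S * X.1 * Tᵀ = Y.1) (h2 : S * X.2 * Tᵀ = Y.2) : Cong (sk X) (sk Y) := by
  have tr : ∀ {α β : Type} [Fintype α] [Fintype β] [DecidableEq α] [DecidableEq β]
      (U : Matrix α β ℂ) (V : Matrix β α ℂ), U * V = 1 → Vᵀ * Uᵀ = 1 := by
    intro α β _ _ _ _ U V h
    rw [← transpose_mul, h, transpose_one]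
  refine ⟨fromBlocks Sᵀ 0 0 Tᵀ, fromBlocks S'ᵀ 0 0 T'ᵀ, ?_, ?_, ?_, ?_⟩
  · simp [fromBlocks_multiply, tr _ _ hS', tr _ _ hT']
  · simp [fromBlocks_multiply, tr _ _ hS, tr _ _ hT]
  · simp [sk, fromBlocks_multiply, fromBlocks_transpose, ← h1, Matrix.mul_assoc]
  · simp [sk, fromBlocks_multiply, fromBlocks_transpose, ← h2, Matrix.mul_assoc]

/-- If the target has no common left or right kernel, then a square equivalence is automatically
invertible. -/
theorem sk_cong_of_kernel_trivial {X : RectPair ρ κ} {Y : RectPair ρ' κ'} (S : Matrix ρ' ρ ℂ)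
    (T : Matrix κ' κ ℂ) (hρ : Fintype.card ρ' = Fintype.card ρ)
    (hκ : Fintype.card κ' = Fintype.card κ)
    (h1 : S * X.1 * Tᵀ = Y.1) (h2 : S * X.2 * Tᵀ = Y.2)
    (hl : ∀ v, v ᵥ* Y.1 = 0 → v ᵥ* Y.2 = 0 → v = 0)
    (hr : ∀ v, Y.1 *ᵥ v = 0 → Y.2 *ᵥ v = 0 → v = 0) : Cong (sk X) (sk Y) := by
  have key : ∀ {α β : Type} [Fintype α] [Fintype β] [DecidableEq α] [DecidableEq β]
      (U : Matrix α β ℂ), Fintype.card α = Fintype.card β → (∀ v, v ᵥ* U = 0 → v = 0) →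
      ∃ V : Matrix β α ℂ, U * V = 1 ∧ V * U = 1 := by
    intro α β _ _ _ _ U hc hU
    let e : α ≃ β := Fintype.equivOfCardEq hc
    have hW : IsUnit (U.submatrix id e) := by
      rw [← Matrix.vecMul_injective_iff_isUnit, ← Matrix.coe_vecMulLinear,
        ← LinearMap.ker_eq_bot, LinearMap.ker_eq_bot']
      intro v hv
      apply hU
      ext b
      have := congrFun hv (e.symm b)
      simpa [Matrix.vecMul, dotProduct] using this
    rw [Matrix.isUnit_iff_isUnit_det] at hW
    refine ⟨((U.submatrix id e)⁻¹).submatrix e.symm id, ?_, ?_⟩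
    · have := Matrix.mul_nonsing_inv _ hW
      rw [← this]
      ext a b
      simp only [Matrix.mul_apply, submatrix_apply, id]
      exact (Fintype.sum_equiv e _ _ (by simp)).symm
    · have := Matrix.nonsing_inv_mul _ hW
      ext a b
      have h := congrFun (congrFun this (e.symm a)) (e.symm b)
      simpa [Matrix.mul_apply, Matrix.one_apply] using h
  obtain ⟨S', hS, hS'⟩ := key S hρ (fun v hv => hl v
    (by rw [← h1, Matrix.mul_assoc, ← vecMul_vecMul, hv, zero_vecMul])
    (by rw [← h2, Matrix.mul_assoc, ← vecMul_vecMul, hv, zero_vecMul]))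
  obtain ⟨T', hT, hT'⟩ := key T hκ (fun v hv => hr v
    (by rw [← h1, ← mulVec_mulVec, mulVec_transpose, hv, mulVec_zero])
    (by rw [← h2, ← mulVec_mulVec, mulVec_transpose, hv, mulVec_zero]))
  exact sk_cong S S' T T' hS hS' hT hT' h1 h2

/-- Direct sum of rectangular pencils. -/
def rds (X : RectPair ρ κ) (Y : RectPair ρ' κ') : RectPair (ρ ⊕ ρ') (κ ⊕ κ') :=
  (fromBlocks X.1 0 0 Y.1, fromBlocks X.2 0 0 Y.2)

theorem sk_rds (X : RectPair ρ κ) (Y : RectPair ρ' κ') :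
    Cong (ds (sk X) (sk Y)) (sk (rds X Y)) := by
  convert cong_reindex (Equiv.sumSumSumComm ρ ρ' κ κ') (ds (sk X) (sk Y)) using 1
  apply Prod.ext <;> ext i j <;> rcases i with (i | i) | (i | i) <;>
    rcases j with (j | j) | (j | j) <;> simp [sk, rds, ds, reindex]

theorem degen_of_rect_pair {ρ₁ ρ₂ κ₁ κ₂ : Type} [Fintype ρ₁] [DecidableEq ρ₁] [Fintype ρ₂]
    [DecidableEq ρ₂] [Fintype κ₁] [DecidableEq κ₁] [Fintype κ₂] [DecidableEq κ₂] {ι : Type}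
    [Fintype ι] [DecidableEq ι] (P : FormPair ι) (X' : RectPair ρ₁ κ₁) (Y' : RectPair ρ₂ κ₂)
    (E : RectPair ρ₂ κ₁)
    (h : ∀ c : ℂ, c ≠ 0 → Cong P
      (sk (fromBlocks X'.1 0 (c • E.1) Y'.1, fromBlocks X'.2 0 (c • E.2) Y'.2))) :
    Degen P (ds (sk X') (sk Y')) := by
  refine Degen.cong_right ?_ (sk_rds X' Y').symm
  refine Degen.of_family (fromBlocks 0 (fromBlocks 0 0 E.1 0) (-(fromBlocks 0 0 E.1 0)ᵀ) 0,
    fromBlocks 0 (fromBlocks 0 0 E.2 0) (-(fromBlocks 0 0 E.2 0)ᵀ) 0) ?_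
  intro c hc
  convert h c hc using 1
  apply Prod.ext <;> ext i j <;> rcases i with (i | i) | (i | i) <;>
    rcases j with (j | j) | (j | j) <;> simp [sk, rds]

theorem degen_of_rect {ρ₁ ρ₂ κ₁ κ₂ : Type} [Fintype ρ₁] [DecidableEq ρ₁] [Fintype ρ₂]
    [DecidableEq ρ₂] [Fintype κ₁] [DecidableEq κ₁] [Fintype κ₂] [DecidableEq κ₂]
    (X : RectPair ρ κ) (Y : RectPair ρ' κ') (X' : RectPair ρ₁ κ₁) (Y' : RectPair ρ₂ κ₂)
    (E : Matrix ρ₂ κ₁ ℂ)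
    (h : ∀ c : ℂ, c ≠ 0 → Cong (sk (rds X Y))
      (sk (fromBlocks X'.1 0 (c • E) Y'.1, fromBlocks X'.2 0 0 Y'.2))) :
    Degen (ds (sk X) (sk Y)) (ds (sk X') (sk Y')) := by
  refine Degen.cong_left (sk_rds X Y) (degen_of_rect_pair _ X' Y' (E, 0) fun c hc => ?_)
  simpa using h c hc

end Skew

/-- The `m × n` pencil with ones on the superdiagonal of the first and on the diagonal of the
second matrix. -/
def shiftPair (m n : ℕ) : RectPair (Fin m) (Fin n) :=
  (Matrix.of fun i j => if (j : ℕ) = i + 1 then 1 else 0,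
   Matrix.of fun i j => if (j : ℕ) = i then 1 else 0)

/-- The standard basis vector with index `i`, zero if `i` is out of range. -/
def bv (m i : ℕ) : Fin m → ℂ := fun t => if (t : ℕ) = i then 1 else 0

theorem bv_dotProduct {m : ℕ} (i : ℕ) (v : Fin m → ℂ) :
    bv m i ⬝ᵥ v = if h : i < m then v ⟨i, h⟩ else 0 := by
  split_ifs with h
  · rw [dotProduct, Finset.sum_eq_single ⟨i, h⟩]
    · simp [bv]
    · intro b _ hb
      have : (b : ℕ) ≠ i := fun hh => hb (Fin.ext hh)
      simp [bv, this]
    · simp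
  · rw [dotProduct]
    apply Finset.sum_eq_zero
    intro b _
    have : (b : ℕ) ≠ i := by omega
    simp [bv, this]

theorem mulVec_bv {m : ℕ} {α : Type} (A : Matrix α (Fin m) ℂ) (i : ℕ) (a : α) :
    (A *ᵥ bv m i) a = if h : i < m then A a ⟨i, h⟩ else 0 := by
  rw [mulVec, dotProduct_comm, bv_dotProduct]

theorem bv_shiftPair_fst {m n : ℕ} (i j : ℕ) :
    bv m i ⬝ᵥ (shiftPair m n).1 *ᵥ bv n j = if i < m ∧ j < n ∧ j = i + 1 then 1 else 0 := by
  rw [bv_dotProduct]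
  simp only [mulVec_bv, shiftPair, of_apply]
  split_ifs <;> first | rfl | (exfalso; omega)

theorem bv_shiftPair_snd {m n : ℕ} (i j : ℕ) :
    bv m i ⬝ᵥ (shiftPair m n).2 *ᵥ bv n j = if i < m ∧ j < n ∧ j = i then 1 else 0 := by
  rw [bv_dotProduct]
  simp only [mulVec_bv, shiftPair, of_apply]
  split_ifs <;> first | rfl | (exfalso; omega)

/-- The matrix unit with (natural number) indices `i`, `j`. -/
def mu (m n i j : ℕ) : Matrix (Fin m) (Fin n) ℂ :=
  Matrix.of fun a b => if (a : ℕ) = i ∧ (b : ℕ) = j then 1 else 0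

theorem bv_mu {m n : ℕ} (i j a b : ℕ) :
    bv m i ⬝ᵥ (mu m n a b) *ᵥ bv n j = if i < m ∧ j < n ∧ i = a ∧ j = b then 1 else 0 := by
  rw [bv_dotProduct]
  simp only [mulVec_bv, mu, of_apply]
  split_ifs <;> first | rfl | (exfalso; omega)

theorem shiftPair_left {m n : ℕ} (h : m ≤ n) (v : Fin m → ℂ)
    (hv : v ᵥ* (shiftPair m n).2 = 0) : v = 0 := by
  ext i
  have := congrFun hv ⟨i, by omega⟩
  simp only [vecMul, dotProduct, shiftPair, of_apply, Pi.zero_apply] at this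
  rw [Finset.sum_eq_single i] at this
  · simpa using this
  · intro b _ hb
    have : ¬ (i : ℕ) = b := fun hh => hb (Fin.ext hh.symm)
    simp [this]
  · simp

theorem shiftPair_right {m n : ℕ} (h : n ≤ m + 1) (h' : n ≤ m ∨ 1 ≤ m) (v : Fin n → ℂ)
    (hv : (shiftPair m n).1 *ᵥ v = 0) (hv' : (shiftPair m n).2 *ᵥ v = 0) : v = 0 := by
  ext i
  rcases lt_or_ge (i : ℕ) m with him | him
  · have := congrFun hv' ⟨i, him⟩
    simp only [mulVec, dotProduct, shiftPair, of_apply, Pi.zero_apply] at this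
    rw [Finset.sum_eq_single i] at this
    · simpa using this
    · intro b _ hb
      have : ¬ (b : ℕ) = i := fun hh => hb (Fin.ext hh)
      simp [this]
    · simp
  · have := congrFun hv ⟨i - 1, by omega⟩
    simp only [mulVec, dotProduct, shiftPair, of_apply, Pi.zero_apply] at this
    have h3 : (i : ℕ) - 1 + 1 = i := by omega
    rw [Finset.sum_eq_single i] at this
    · simpa [h3] using this
    · intro b _ hb
      have : ¬ (b : ℕ) = i := fun hh => hb (Fin.ext hh)
      simp [h3, this]
    · simp

theorem rds_left {ρ κ ρ' κ' : Type} [Fintype ρ] [Fintype κ] [Fintype ρ'] [Fintype κ']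
    {X : RectPair ρ κ} {Y : RectPair ρ' κ'}
    (hX : ∀ v, v ᵥ* X.1 = 0 → v ᵥ* X.2 = 0 → v = 0)
    (hY : ∀ v, v ᵥ* Y.1 = 0 → v ᵥ* Y.2 = 0 → v = 0) (v : ρ ⊕ ρ' → ℂ)
    (h1 : v ᵥ* (rds X Y).1 = 0) (h2 : v ᵥ* (rds X Y).2 = 0) : v = 0 := by
  rw [rds, ← Sum.elim_comp_inl_inr v, vecMul_fromBlocks] at h1 h2
  have e1 := hX (v ∘ Sum.inl) (by ext i; simpa using congrFun h1 (Sum.inl i))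
    (by ext i; simpa using congrFun h2 (Sum.inl i))
  have e2 := hY (v ∘ Sum.inr) (by ext i; simpa using congrFun h1 (Sum.inr i))
    (by ext i; simpa using congrFun h2 (Sum.inr i))
  rw [← Sum.elim_comp_inl_inr v, e1, e2]
  ext i; rcases i with i | i <;> rfl

theorem rds_right {ρ κ ρ' κ' : Type} [Fintype ρ] [Fintype κ] [Fintype ρ'] [Fintype κ']
    {X : RectPair ρ κ} {Y : RectPair ρ' κ'}
    (hX : ∀ v, X.1 *ᵥ v = 0 → X.2 *ᵥ v = 0 → v = 0)
    (hY : ∀ v, Y.1 *ᵥ v = 0 → Y.2 *ᵥ v = 0 → v = 0) (v : κ ⊕ κ' → ℂ)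
    (h1 : (rds X Y).1 *ᵥ v = 0) (h2 : (rds X Y).2 *ᵥ v = 0) : v = 0 := by
  rw [rds, ← Sum.elim_comp_inl_inr v, fromBlocks_mulVec] at h1 h2
  have e1 := hX (v ∘ Sum.inl) (by ext i; simpa using congrFun h1 (Sum.inl i))
    (by ext i; simpa using congrFun h2 (Sum.inl i))
  have e2 := hY (v ∘ Sum.inr) (by ext i; simpa using congrFun h1 (Sum.inr i))
    (by ext i; simpa using congrFun h2 (Sum.inr i))
  rw [← Sum.elim_comp_inl_inr v, e1, e2]
  ext i; rcases i with i | i <;> rfl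

theorem sandwich_apply {ρ κ ρ' κ' : Type} [Fintype ρ] [Fintype κ] (S : ρ' → ρ → ℂ)
    (A : Matrix ρ κ ℂ) (T : κ' → κ → ℂ) (i : ρ') (j : κ') :
    (Matrix.of S * A * (Matrix.of T)ᵀ) i j = S i ⬝ᵥ A *ᵥ T j := by
  rw [Matrix.mul_assoc]
  simp only [Matrix.mul_apply, dotProduct, mulVec, transpose_apply, of_apply]

theorem elim_fromBlocks {ρ κ ρ' κ' : Type} [Fintype ρ] [Fintype κ] [Fintype ρ'] [Fintype κ']
    (A : Matrix ρ κ ℂ) (E : Matrix ρ' κ ℂ) (D : Matrix ρ' κ' ℂ) (a : ρ → ℂ) (b : ρ' → ℂ)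
    (a' : κ → ℂ) (b' : κ' → ℂ) :
    Sum.elim a b ⬝ᵥ fromBlocks A 0 E D *ᵥ Sum.elim a' b' =
      a ⬝ᵥ A *ᵥ a' + b ⬝ᵥ E *ᵥ a' + b ⬝ᵥ D *ᵥ b' := by
  rw [fromBlocks_mulVec, sumElim_dotProduct_sumElim]
  simp [dotProduct_add, add_assoc]

theorem shiftPair_grow (j k n : ℕ) (hkn : k ≤ n) (hnk : n ≤ k + 1) (h0 : n ≤ k ∨ j ≤ k)
    (h1 : n ≤ k ∨ 1 ≤ k) :
    Degen (ds (sk (shiftPair (j + 1) (j + 2))) (sk (shiftPair k n)))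
      (ds (sk (shiftPair j (j + 1))) (sk (shiftPair (k + 1) (n + 1)))) := by
  refine degen_of_rect _ _ _ _ (mu (k + 1) (j + 1) 0 0) ?_
  intro c hc
  apply Cong.symm
  refine sk_cong_of_kernel_trivial
    (Matrix.of (Sum.elim
      (fun i : Fin (j + 1) => Sum.elim (if (i : ℕ) = 0 then 0 else c • bv j (i - 1)) (bv (k + 1) i))
      (fun i : Fin k => Sum.elim (0 : Fin j → ℂ) (bv (k + 1) (i + 1)))))
    (Matrix.of (Sum.elim
      (fun i : Fin (j + 2) => Sum.elim (if (i : ℕ) = 0 then 0 else c⁻¹ • bv (j + 1) (i - 1))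
        (if (i : ℕ) = 0 then bv (n + 1) 0 else 0))
      (fun i : Fin n => Sum.elim (-(c⁻¹ • bv (j + 1) i)) (bv (n + 1) (i + 1)))))
    (by simp; omega) (by simp; omega) ?_ ?_ ?_ ?_
  · ext a b
    rw [sandwich_apply]
    rcases a with ⟨a, ha⟩ | ⟨a, ha⟩ <;> rcases b with ⟨b, hb⟩ | ⟨b, hb⟩ <;>
    simp only [Sum.elim_inl, Sum.elim_inr, elim_fromBlocks, rds, fromBlocks_apply₁₁,
      fromBlocks_apply₁₂, fromBlocks_apply₂₁, fromBlocks_apply₂₂] <;>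
    (try split_ifs) <;>
    simp only [zero_dotProduct, dotProduct_zero, mulVec_zero, smul_dotProduct, dotProduct_smul,
      mulVec_smul, mulVec_neg, dotProduct_neg, smul_mulVec, bv_shiftPair_fst, bv_mu] <;>
    simp only [shiftPair, of_apply, Matrix.zero_apply] <;>
    (try split_ifs) <;>
    first | (exfalso; omega) | (simp [hc]; done) | (exfalso; tauto)
  · ext a b
    rw [sandwich_apply]
    rcases a with ⟨a, ha⟩ | ⟨a, ha⟩ <;> rcases b with ⟨b, hb⟩ | ⟨b, hb⟩ <;>
    simp only [Sum.elim_inl, Sum.elim_inr, elim_fromBlocks, rds, fromBlocks_apply₁₁,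
      fromBlocks_apply₁₂, fromBlocks_apply₂₁, fromBlocks_apply₂₂] <;>
    (try split_ifs) <;>
    simp only [zero_dotProduct, dotProduct_zero, mulVec_zero, zero_mulVec,
      smul_dotProduct, dotProduct_smul,
      mulVec_smul, mulVec_neg, dotProduct_neg, bv_shiftPair_snd] <;>
    simp only [shiftPair, of_apply, Matrix.zero_apply] <;>
    (try split_ifs) <;>
    first | (exfalso; omega) | (simp [hc]; done) | (exfalso; tauto)
  · exact rds_left (fun v _ hv => shiftPair_left (by omega) v hv)
      (fun v _ hv => shiftPair_left (by omega) v hv)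
  · exact rds_right (fun v hv hv' => shiftPair_right (by omega) (by omega) v hv hv')
      (fun v hv hv' => shiftPair_right (by omega) (by omega) v hv hv')

theorem shiftPair_balance (j k : ℕ) (hjk : j + 1 ≤ k) :
    Degen (ds (sk (shiftPair j j)) (sk (shiftPair (k + 1) (k + 1))))
      (ds (sk (shiftPair (j + 1) (j + 1))) (sk (shiftPair k k))) := by
  refine degen_of_rect _ _ _ _ (mu k (j + 1) (k - 1) j) ?_
  intro c hc
  apply Cong.symm
  refine sk_cong_of_kernel_trivial
    (Matrix.of (Sum.elim
      (fun i : Fin j => Sum.elim (bv (j + 1) i) (-(c⁻¹ • bv k (k - j + i))))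
      (fun i : Fin (k + 1) => Sum.elim (if (i : ℕ) = k then c • bv (j + 1) j else 0)
        (bv k i))))
    (Matrix.of (Sum.elim
      (fun i : Fin j => Sum.elim (bv (j + 1) i) 0)
      (fun i : Fin (k + 1) =>
        Sum.elim (if k - j ≤ (i : ℕ) then c⁻¹ • bv (j + 1) (i - (k - j)) else 0) (bv k i))))
    (by simp; omega) (by simp; omega) ?_ ?_ ?_ ?_
  · ext a b
    rw [sandwich_apply]
    rcases a with ⟨a, ha⟩ | ⟨a, ha⟩ <;> rcases b with ⟨b, hb⟩ | ⟨b, hb⟩ <;>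
    simp only [Sum.elim_inl, Sum.elim_inr, elim_fromBlocks, rds, fromBlocks_apply₁₁,
      fromBlocks_apply₁₂, fromBlocks_apply₂₁, fromBlocks_apply₂₂] <;>
    (try split_ifs) <;>
    simp only [zero_dotProduct, dotProduct_zero, mulVec_zero, smul_dotProduct, dotProduct_smul,
      mulVec_smul, neg_dotProduct, smul_mulVec, bv_shiftPair_fst, bv_mu] <;>
    simp only [shiftPair, of_apply, Matrix.zero_apply] <;>
    (try split_ifs) <;>
    first | (exfalso; omega) | (simp [hc])
  · ext a b
    rw [sandwich_apply]
    rcases a with ⟨a, ha⟩ | ⟨a, ha⟩ <;> rcases b with ⟨b, hb⟩ | ⟨b, hb⟩ <;>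
    simp only [Sum.elim_inl, Sum.elim_inr, elim_fromBlocks, rds, fromBlocks_apply₁₁,
      fromBlocks_apply₁₂, fromBlocks_apply₂₁, fromBlocks_apply₂₂] <;>
    (try split_ifs) <;>
    simp only [zero_dotProduct, dotProduct_zero, mulVec_zero, zero_mulVec,
      smul_dotProduct, dotProduct_smul,
      mulVec_smul, neg_dotProduct, bv_shiftPair_snd] <;>
    simp only [shiftPair, of_apply, Matrix.zero_apply] <;>
    (try split_ifs) <;>
    first | (exfalso; omega) | (simp [hc])
  · exact rds_left (fun v _ hv => shiftPair_left le_rfl v hv)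
      (fun v _ hv => shiftPair_left le_rfl v hv)
  · exact rds_right (fun v hv hv' => shiftPair_right (by omega) (by omega) v hv hv')
      (fun v hv hv' => shiftPair_right (by omega) (by omega) v hv hv')

section Twist

variable {ι κ : Type}

/-- Move the eigenvalue `0` to `o`. -/
def twist (o : Option ℂ) (P : FormPair ι) : FormPair ι :=
  match o with
  | some μ => (P.1 + μ • P.2, P.2)
  | none => (P.2, P.1)

theorem twist_ds (o : Option ℂ) (P : FormPair ι) (Q : FormPair κ) :
    twist o (ds P Q) = ds (twist o P) (twist o Q) := by
  cases o <;> simp [twist, ds, fromBlocks_add, fromBlocks_smul]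

variable [Fintype ι] [DecidableEq ι] [Fintype κ] [DecidableEq κ]

theorem Cong.twist {P : FormPair ι} {Q : FormPair κ} (h : Cong P Q) (o : Option ℂ) :
    Cong (twist o P) (FormPair.twist o Q) := by
  obtain ⟨S, T, h1, h2, h3, h4⟩ := h
  refine ⟨S, T, h1, h2, ?_, ?_⟩ <;> cases o <;>
    simp [FormPair.twist, Matrix.mul_add, Matrix.add_mul, h3, h4]

theorem Degen.twist {P : FormPair ι} {Q : FormPair κ} (h : Degen P Q) (o : Option ℂ) :
    Degen (twist o P) (FormPair.twist o Q) := by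
  refine h.map (FormPair.twist o) ?_ (fun R hR => (hR.twist o).degen)
  cases o
  · exact continuous_snd.prodMk continuous_fst
  · change Continuous fun P : FormPair κ => (P.1 + _ • P.2, P.2)
    fun_prop

end Twist

theorem skewPair_eq {p q : ℕ} (X : RectPair (Fin p) (Fin q)) :
    Cong (sk X) ((skewPair X.1, skewPair X.2) : FormPair (Fin (p + q))) :=
  cong_reindex finSumFinEquiv.symm (sk X)

theorem Jmat_eq (h : ℕ) (μ : ℂ) : Jmat h μ = (shiftPair h h).1 + μ • (1 : Matrix _ _ ℂ) := by
  ext i j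
  simp only [Jmat, shiftPair, of_apply, Matrix.add_apply, Matrix.smul_apply, Matrix.one_apply,
    Fin.ext_iff, smul_eq_mul]
  split_ifs <;> first | (exfalso; omega) | simp

theorem shiftPair_self_snd (h : ℕ) : (shiftPair h h).2 = 1 := by
  ext i j
  simp only [shiftPair, of_apply, Matrix.one_apply, Fin.ext_iff, eq_comm]

theorem cong_Hb (o : Option ℂ) (h : ℕ) :
    Cong (twist o (sk (shiftPair h h))) ((Hb o h).toPencil : FormPair (Fin (Hb o h).size)) := by
  cases o with
  | none =>
    have e : twist none (sk (shiftPair h h)) = sk (1, Jmat h 0) := by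
      simp [twist, sk, Jmat_eq, shiftPair_self_snd]
    rw [e]
    exact skewPair_eq _
  | some μ =>
    have e : twist (some μ) (sk (shiftPair h h)) = sk (Jmat h μ, 1) := by
      simp [twist, sk, Jmat_eq, shiftPair_self_snd, fromBlocks_add, fromBlocks_smul, add_comm]
    rw [e]
    exact skewPair_eq _

theorem cong_M (m : ℕ) :
    Cong (sk (shiftPair m (m + 1))) ((SBlock.M m).toPencil : FormPair (Fin (SBlock.M m).size)) :=
  skewPair_eq _

/-- The matrix of binomial expansions of `(X + μ) ^ i`. -/
def binom (μ : ℂ) (n : ℕ) : Matrix (Fin n) (Fin n) ℂ :=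
  Matrix.of fun i j => ((Polynomial.X + Polynomial.C μ) ^ (i : ℕ)).coeff j

theorem binom_inv (μ : ℂ) (n : ℕ) :
    ∃ T : Matrix (Fin n) (Fin n) ℂ, binom μ n * T = 1 ∧ T * binom μ n = 1 := by
  have hdet : (binom μ n).det = 1 := by
    rw [Matrix.det_of_isLowerTriangular]
    · apply Finset.prod_eq_one
      intro i _
      simp [binom, Polynomial.coeff_X_add_C_pow]
    · intro i j hij
      have hij' : (i : ℕ) < j := hij
      simp [binom, Polynomial.coeff_X_add_C_pow, Nat.choose_eq_zero_of_lt hij']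
  have hu : IsUnit (binom μ n).det := by rw [hdet]; exact isUnit_one
  exact ⟨_, Matrix.mul_nonsing_inv _ hu, Matrix.nonsing_inv_mul _ hu⟩

theorem shiftPair_fst_mul {m n : ℕ} (B : Matrix (Fin n) (Fin n) ℂ) (i : Fin m) (j : Fin n) :
    ((shiftPair m n).1 * B) i j = if h : (i : ℕ) + 1 < n then B ⟨i + 1, h⟩ j else 0 := by
  rw [Matrix.mul_apply]
  split_ifs with h
  · rw [Finset.sum_eq_single ⟨i + 1, h⟩]
    · simp [shiftPair]
    · intro b _ hb
      have : (b : ℕ) ≠ i + 1 := fun hh => hb (Fin.ext hh)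
      simp [shiftPair, this]
    · simp
  · apply Finset.sum_eq_zero
    intro b _
    have : (b : ℕ) ≠ i + 1 := by omega
    simp [shiftPair, this]

theorem shiftPair_snd_mul {m n : ℕ} (B : Matrix (Fin n) (Fin n) ℂ) (i : Fin m) (j : Fin n) :
    ((shiftPair m n).2 * B) i j = if h : (i : ℕ) < n then B ⟨i, h⟩ j else 0 := by
  rw [Matrix.mul_apply]
  split_ifs with h
  · rw [Finset.sum_eq_single ⟨i, h⟩]
    · simp [shiftPair]
    · intro b _ hb
      have : (b : ℕ) ≠ i := fun hh => hb (Fin.ext hh)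
      simp [shiftPair, this]
    · simp
  · apply Finset.sum_eq_zero
    intro b _
    have : (b : ℕ) ≠ i := by omega
    simp [shiftPair, this]

theorem mul_shiftPair_fst {m n : ℕ} (B : Matrix (Fin m) (Fin m) ℂ) (i : Fin m) (j : Fin n) :
    (B * (shiftPair m n).1) i j =
      if h : 1 ≤ (j : ℕ) ∧ (j : ℕ) - 1 < m then B i ⟨j - 1, h.2⟩ else 0 := by
  rw [Matrix.mul_apply]
  split_ifs with h
  · rw [Finset.sum_eq_single ⟨j - 1, h.2⟩]
    · have : (j : ℕ) = j - 1 + 1 := by omega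
      simp [shiftPair, ← this]
    · intro b _ hb
      have : ¬ (j : ℕ) = b + 1 := fun hh => hb (Fin.ext (by simp; omega))
      simp [shiftPair, this]
    · simp
  · apply Finset.sum_eq_zero
    intro b _
    have : ¬ (j : ℕ) = b + 1 := by omega
    simp [shiftPair, this]

theorem mul_shiftPair_snd {m n : ℕ} (B : Matrix (Fin m) (Fin m) ℂ) (i : Fin m) (j : Fin n) :
    (B * (shiftPair m n).2) i j = if h : (j : ℕ) < m then B i ⟨j, h⟩ else 0 := by
  rw [Matrix.mul_apply]
  split_ifs with h
  · rw [Finset.sum_eq_single ⟨j, h⟩]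
    · simp [shiftPair]
    · intro b _ hb
      have : ¬ (j : ℕ) = b := fun hh => hb (Fin.ext (by simp; omega))
      simp [shiftPair, this]
    · simp
  · apply Finset.sum_eq_zero
    intro b _
    have : ¬ (j : ℕ) = b := by omega
    simp [shiftPair, this]

theorem twist_M (o : Option ℂ) (m : ℕ) :
    Cong (twist o (sk (shiftPair m (m + 1)))) (sk (shiftPair m (m + 1))) := by
  cases o with
  | none =>
    have : twist none (sk (shiftPair m (m + 1))) =
      sk ((shiftPair m (m + 1)).2, (shiftPair m (m + 1)).1) := rfl
    rw [this]
    convert cong_reindex (Equiv.sumCongr Fin.revPerm Fin.revPerm)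
      (sk ((shiftPair m (m + 1)).2, (shiftPair m (m + 1)).1)) using 1
    apply Prod.ext <;> ext i j <;> rcases i with i | i <;> rcases j with j | j <;>
      simp only [sk, reindex, shiftPair, submatrix_apply, Equiv.sumCongr_apply, Sum.map_inl,
        Sum.map_inr, fromBlocks_apply₁₁, fromBlocks_apply₁₂, fromBlocks_apply₂₁,
        fromBlocks_apply₂₂, of_apply, Fin.revPerm_apply, Fin.val_rev, Matrix.zero_apply,
        Matrix.neg_apply, transpose_apply] <;>
      split_ifs <;> first | rfl | (exfalso; omega)
  | some μ =>
    have : twist (some μ) (sk (shiftPair m (m + 1))) =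
        sk ((shiftPair m (m + 1)).1 + μ • (shiftPair m (m + 1)).2, (shiftPair m (m + 1)).2) := by
      simp [twist, sk, fromBlocks_add, fromBlocks_smul, add_comm]
    rw [this]
    obtain ⟨S', hS, hS'⟩ := binom_inv μ m
    obtain ⟨T', hT, hT'⟩ := binom_inv μ (m + 1)
    have h2 : binom μ m * (shiftPair m (m + 1)).2 = (shiftPair m (m + 1)).2 * binom μ (m + 1) := by
      ext i j
      rw [mul_shiftPair_snd, shiftPair_snd_mul, dif_pos (show (i : ℕ) < m + 1 by omega)]
      split_ifs with h
      · simp [binom]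
      · have : (i : ℕ) < j := by omega
        simp [binom, Polynomial.coeff_X_add_C_pow, Nat.choose_eq_zero_of_lt this]
    have h1 : binom μ m * ((shiftPair m (m + 1)).1 + μ • (shiftPair m (m + 1)).2) =
        (shiftPair m (m + 1)).1 * binom μ (m + 1) := by
      rw [Matrix.mul_add, Matrix.mul_smul, h2]
      ext i j
      rw [Matrix.add_apply, Matrix.smul_apply, shiftPair_fst_mul, shiftPair_snd_mul,
        dif_pos (show (i : ℕ) < m + 1 by omega), dif_pos (show (i : ℕ) + 1 < m + 1 by omega),
        mul_shiftPair_fst]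
      simp only [binom, of_apply, pow_succ, mul_add, Polynomial.coeff_add, Polynomial.coeff_mul_C,
        smul_eq_mul]
      rcases Nat.eq_zero_or_pos (j : ℕ) with h | h
      · simp [h, mul_comm]
      · rw [dif_pos (by omega)]
        obtain ⟨j', hj'⟩ : ∃ j', (j : ℕ) = j' + 1 := ⟨j - 1, by omega⟩
        simp [hj', mul_comm]
    refine sk_cong (binom μ m) S' T'ᵀ (binom μ (m + 1))ᵀ hS hS' ?_ ?_ ?_ ?_
    · rw [← transpose_mul, hT, transpose_one]
    · rw [← transpose_mul, hT', transpose_one]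
    · simp only [transpose_transpose]
      rw [h1, Matrix.mul_assoc, hT, Matrix.mul_one]
    · simp only [transpose_transpose]
      rw [h2, Matrix.mul_assoc, hT, Matrix.mul_one]

theorem cong_twist_M (o : Option ℂ) (m : ℕ) :
    Cong (twist o (sk (shiftPair m (m + 1))))
      ((SBlock.M m).toPencil : FormPair (Fin (SBlock.M m).size)) :=
  (twist_M o m).trans (cong_M m)

theorem ofList_pair {ι κ : Type} [Fintype ι] [DecidableEq ι] [Fintype κ] [DecidableEq κ]
    {P : FormPair ι} {Q : FormPair κ} {b c : SBlock}
    (hb : Cong P (b.toPencil : FormPair (Fin b.size)))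
    (hc : Cong Q (c.toPencil : FormPair (Fin c.size))) : Cong (ds P Q) (ofList [b, c]) :=
  ((hb.ds hc).trans ((Cong.refl _).ds (ofList_singleton c))).trans (ofList_cons b [c])

theorem blockDegen_M_M (j k : ℕ) (hjk : j + 1 ≤ k) :
    BlockDegen ([SBlock.M (j + 1), SBlock.M k] : List SBlock)
      ([SBlock.M j, SBlock.M (k + 1)] : List SBlock) :=
  BlockDegen.of_lists ((Degen.cong_left (ofList_pair (cong_M _) (cong_M _)).symm
    (shiftPair_grow j k (k + 1) (by omega) le_rfl (by omega) (by omega))).cong_right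
    (ofList_pair (cong_M _) (cong_M _)))

theorem blockDegen_Hb_Hb (o : Option ℂ) (j k : ℕ) (hjk : j + 1 ≤ k) :
    BlockDegen ([Hb o j, Hb o (k + 1)] : List SBlock) ([Hb o (j + 1), Hb o k] : List SBlock) := by
  have h := (shiftPair_balance j k hjk).twist o
  rw [twist_ds, twist_ds] at h
  exact BlockDegen.of_lists ((Degen.cong_left (ofList_pair (cong_Hb _ _) (cong_Hb _ _)).symm
    h).cong_right (ofList_pair (cong_Hb _ _) (cong_Hb _ _)))

theorem blockDegen_M_Hb (o : Option ℂ) (j k : ℕ) :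
    BlockDegen ([SBlock.M (j + 1), Hb o k] : List SBlock)
      ([SBlock.M j, Hb o (k + 1)] : List SBlock) := by
  have h := (shiftPair_grow j k k le_rfl (by omega) (by omega) (by omega)).twist o
  rw [twist_ds, twist_ds] at h
  exact BlockDegen.of_lists ((Degen.cong_left (ofList_pair (cong_twist_M o _) (cong_Hb _ _)).symm
    h).cong_right (ofList_pair (cong_twist_M o _) (cong_Hb _ _)))

end FormPair

section Chains

variable {ρ κ ρ' κ' : Type}

/-- Prepend a zero to a finite sequence and extend it by zero. -/
def pad (k : ℕ) (x : Fin k → κ → ℂ) : ℕ → κ → ℂ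
  | 0 => 0
  | i + 1 => if h : i < k then x ⟨i, h⟩ else 0

theorem pad_add (k : ℕ) (x y : Fin k → κ → ℂ) (i : ℕ) :
    pad k (x + y) i = pad k x i + pad k y i := by
  cases i with
  | zero => simp [pad]
  | succ i => simp only [pad]; split_ifs <;> simp

theorem pad_smul (k : ℕ) (c : ℂ) (x : Fin k → κ → ℂ) (i : ℕ) :
    pad k (c • x) i = c • pad k x i := by
  cases i with
  | zero => simp [pad]
  | succ i => simp only [pad]; split_ifs <;> simp

theorem pad_map {k : ℕ} (T : (κ → ℂ) → (κ' → ℂ)) (hT : T 0 = 0) (x : Fin k → κ → ℂ) (i : ℕ) :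
    pad k (fun j => T (x j)) i = T (pad k x i) := by
  cases i with
  | zero => simp [pad, hT]
  | succ i => simp only [pad]; split_ifs <;> simp [hT]

variable [Fintype κ] [Fintype κ']

/-- The defect of a sequence from being a chain of the pencil `X`. -/
def chainMap (r k : ℕ) (X : RectPair ρ κ) : (Fin k → κ → ℂ) →ₗ[ℂ] (Fin r → ρ → ℂ) where
  toFun x i := X.1 *ᵥ pad k x (i + 1) - X.2 *ᵥ pad k x i
  map_add' x y := by
    ext i : 1
    simp only [pad_add, mulVec_add, Pi.add_apply]
    abel
  map_smul' c x := by
    ext i : 1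
    simp only [pad_smul, mulVec_smul, Pi.smul_apply, RingHom.id_apply, smul_sub]

/-- The dimension of the space of chains of length `k` of the pencil `X` satisfying the first `r`
chain conditions. -/
def nu (r k : ℕ) (X : RectPair ρ κ) : ℕ := Module.finrank ℂ (LinearMap.ker (chainMap r k X))

theorem mem_ker_chainMap {r k : ℕ} {X : RectPair ρ κ} {x : Fin k → κ → ℂ} :
    x ∈ LinearMap.ker (chainMap r k X) ↔
      ∀ i < r, X.1 *ᵥ pad k x (i + 1) = X.2 *ᵥ pad k x i := by
  rw [LinearMap.mem_ker]
  constructor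
  · intro h i hi
    exact sub_eq_zero.mp (congrFun h ⟨i, hi⟩)
  · intro h
    ext i : 1
    exact sub_eq_zero.mpr (h i i.2)

theorem nu_le (r k : ℕ) {X : RectPair ρ κ} {X' : RectPair ρ' κ'} (T : (κ → ℂ) →ₗ[ℂ] (κ' → ℂ))
    (hT : Function.Injective T)
    (h : ∀ v w, X.1 *ᵥ v = X.2 *ᵥ w → X'.1 *ᵥ T v = X'.2 *ᵥ T w) : nu r k X ≤ nu r k X' := by
  let F : (Fin k → κ → ℂ) →ₗ[ℂ] (Fin k → κ' → ℂ) :=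
    LinearMap.pi fun j => T ∘ₗ LinearMap.proj j
  have hF : ∀ x, F x = fun j => T (x j) := fun x => rfl
  have hmem : ∀ x ∈ LinearMap.ker (chainMap r k X), F x ∈ LinearMap.ker (chainMap r k X') := by
    intro x hx
    rw [mem_ker_chainMap] at hx ⊢
    intro i hi
    rw [hF, pad_map T (map_zero T), pad_map T (map_zero T)]
    exact h _ _ (hx i hi)
  refine LinearMap.finrank_le_finrank_of_injective (f := F.restrict hmem) ?_
  intro x y hxy
  apply Subtype.ext
  ext j : 1
  apply hT
  have := congrArg Subtype.val hxy
  exact congrFun this j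

theorem nu_add (r k : ℕ) {ρ'' : Type} (X : RectPair ρ κ) (Y : RectPair ρ' κ')
    (Z : RectPair ρ'' (κ ⊕ κ'))
    (h : ∀ v w : κ ⊕ κ' → ℂ, Z.1 *ᵥ v = Z.2 *ᵥ w ↔
      X.1 *ᵥ (v ∘ Sum.inl) = X.2 *ᵥ (w ∘ Sum.inl) ∧
      Y.1 *ᵥ (v ∘ Sum.inr) = Y.2 *ᵥ (w ∘ Sum.inr)) :
    nu r k Z = nu r k X + nu r k Y := by
  have hl : ∀ (x : Fin k → κ ⊕ κ' → ℂ) i, pad k (fun j => x j ∘ Sum.inl) i =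
      pad k x i ∘ Sum.inl := fun x i => pad_map (fun v => v ∘ Sum.inl) rfl x i
  have hr : ∀ (x : Fin k → κ ⊕ κ' → ℂ) i, pad k (fun j => x j ∘ Sum.inr) i =
      pad k x i ∘ Sum.inr := fun x i => pad_map (fun v => v ∘ Sum.inr) rfl x i
  have key : ∀ x : Fin k → κ ⊕ κ' → ℂ, x ∈ LinearMap.ker (chainMap r k Z) ↔
      (fun j => x j ∘ Sum.inl) ∈ LinearMap.ker (chainMap r k X) ∧
      (fun j => x j ∘ Sum.inr) ∈ LinearMap.ker (chainMap r k Y) := by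
    intro x
    simp only [mem_ker_chainMap, hl, hr, h]
    exact ⟨fun H => ⟨fun i hi => (H i hi).1, fun i hi => (H i hi).2⟩,
      fun H i hi => ⟨H.1 i hi, H.2 i hi⟩⟩
  let e : LinearMap.ker (chainMap r k Z) ≃ₗ[ℂ]
      LinearMap.ker (chainMap r k X) × LinearMap.ker (chainMap r k Y) :=
    { toFun := fun x => (⟨fun j => x.1 j ∘ Sum.inl, ((key x.1).1 x.2).1⟩,
        ⟨fun j => x.1 j ∘ Sum.inr, ((key x.1).1 x.2).2⟩)
      invFun := fun p => ⟨fun j => Sum.elim (p.1.1 j) (p.2.1 j),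
        (key _).2 ⟨p.1.2, p.2.2⟩⟩
      map_add' := fun x y => rfl
      map_smul' := fun c x => rfl
      left_inv := fun x => by
        apply Subtype.ext
        ext j i
        rcases i with i | i <;> rfl
      right_inv := fun p => rfl }
  rw [nu, e.finrank_eq, Module.finrank_prod]
  rfl

theorem nu_rds (r k : ℕ) (X : RectPair ρ κ) (Y : RectPair ρ' κ') :
    nu r k (FormPair.rds X Y) = nu r k X + nu r k Y := by
  apply nu_add
  intro v w
  simp only [FormPair.rds, fromBlocks_mulVec, zero_mulVec, add_zero, zero_add]
  rw [Sum.elim_eq_iff]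

theorem nu_sk [Fintype ρ] (r k : ℕ) (X : RectPair ρ κ) :
    nu r k (FormPair.sk X) = nu r k ((X.1ᵀ, X.2ᵀ) : RectPair κ ρ) + nu r k X := by
  apply nu_add
  intro v w
  simp only [FormPair.sk, fromBlocks_mulVec, zero_mulVec, add_zero, zero_add, neg_mulVec]
  rw [Sum.elim_eq_iff, neg_inj]
  exact and_comm

theorem nu_eq_zero_of_fst (r k : ℕ) (hr : k ≤ r) {X : RectPair ρ κ}
    (h : ∀ v, X.1 *ᵥ v = 0 → v = 0) : nu r k X = 0 := by
  rw [nu, Submodule.finrank_eq_zero, Submodule.eq_bot_iff]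
  intro x hx
  rw [mem_ker_chainMap] at hx
  have : ∀ i ≤ k, pad k x i = 0 := by
    intro i
    induction i with
    | zero => intro _; rfl
    | succ i ih =>
      intro hi
      apply h
      rw [hx i (by omega), ih (by omega), mulVec_zero]
  ext j : 1
  have := this (j + 1) (by omega)
  simpa [pad] using this

theorem nu_eq_zero_of_snd (k : ℕ) {X : RectPair ρ κ}
    (h : ∀ v, X.2 *ᵥ v = 0 → v = 0) : nu (k + 1) k X = 0 := by
  rw [nu, Submodule.finrank_eq_zero, Submodule.eq_bot_iff]
  intro x hx
  rw [mem_ker_chainMap] at hx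
  have : ∀ i ≤ k, pad k x (k + 1 - i) = 0 := by
    intro i
    induction i with
    | zero => intro _; simp [pad]
    | succ i ih =>
      intro hi
      apply h
      rw [← hx (k + 1 - (i + 1)) (by omega), show k + 1 - (i + 1) + 1 = k + 1 - i by omega,
        ih (by omega), mulVec_zero]
  ext j : 1
  have := this (k - j) (by omega)
  rw [show k + 1 - (k - j) = j + 1 by omega] at this
  simpa [pad] using this

end Chains

section Invariance

variable {ι κ : Type} [Fintype ι] [DecidableEq ι] [Fintype κ] [DecidableEq κ]

theorem FormPair.Cong.nu_le {P : FormPair ι} {Q : FormPair κ} (h : FormPair.Cong P Q) (r k : ℕ) :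
    nu r k Q ≤ nu r k P := by
  obtain ⟨S, T, h1, h2, h3, h4⟩ := h
  refine SkewPencil.nu_le r k (Matrix.mulVecLin S) ?_ ?_
  · intro v w hvw
    have := congrArg (T *ᵥ ·) hvw
    simpa [mulVec_mulVec, h2] using this
  · intro v w hvw
    rw [← h3, ← h4, ← mulVec_mulVec, ← mulVec_mulVec, ← mulVec_mulVec, ← mulVec_mulVec] at hvw
    have := congrArg (Tᵀ *ᵥ ·) hvw
    have ht : Tᵀ * Sᵀ = 1 := by rw [← transpose_mul, h1, transpose_one]
    simpa [mulVec_mulVec, ← Matrix.mul_assoc, ht] using this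

theorem FormPair.Cong.nu_eq {P : FormPair ι} {Q : FormPair κ} (h : FormPair.Cong P Q)
    (r k : ℕ) : nu r k P = nu r k Q :=
  le_antisymm (h.symm.nu_le r k) (h.nu_le r k)

theorem FormPair.Degen.nu_le {P : FormPair ι} {Q : FormPair κ} (h : FormPair.Degen P Q)
    (r k : ℕ) : nu r k P ≤ nu r k Q := by
  obtain ⟨b, hb⟩ : ∃ b : Fin (Module.finrank ℂ (LinearMap.range (chainMap r k Q))) →
      (Fin k → κ → ℂ), LinearIndependent ℂ (fun a => chainMap r k Q (b a)) := by
    let B := Module.finBasis ℂ (LinearMap.range (chainMap r k Q))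
    choose b hb using fun a => (B a).2
    refine ⟨b, ?_⟩
    have := B.linearIndependent.map' (Submodule.subtype _) (Submodule.ker_subtype _)
    have e : (fun a => chainMap r k Q (b a)) = Submodule.subtype _ ∘ B := funext hb
    rw [e]
    exact this
  have hopen : IsOpen {R : FormPair κ | LinearIndependent ℂ (fun a => chainMap r k R (b a))} := by
    refine isOpen_setOfPred_linearIndependent.preimage (f := fun R : FormPair κ =>
      fun a => chainMap r k R (b a)) ?_
    refine continuous_pi fun a => continuous_pi fun i => ?_
    change Continuous fun R : FormPair κ => R.1 *ᵥ pad k (b a) (i + 1) - R.2 *ᵥ pad k (b a) i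
    exact (continuous_fst.matrix_mulVec continuous_const).sub
      (continuous_snd.matrix_mulVec continuous_const)
  obtain ⟨R, hR, hPR⟩ := mem_closure_iff.mp h _ hopen hb
  rw [FormPair.Cong.nu_eq hPR]
  have e1 := LinearMap.finrank_range_add_finrank_ker (chainMap r k R)
  have e2 := LinearMap.finrank_range_add_finrank_ker (chainMap r k Q)
  have e3 : Module.finrank ℂ (LinearMap.range (chainMap r k Q)) ≤
      Module.finrank ℂ (LinearMap.range (chainMap r k R)) := by
    have hR' : LinearIndependent ℂ (fun a => (⟨chainMap r k R (b a), LinearMap.mem_range_self _ _⟩ :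
        LinearMap.range (chainMap r k R))) :=
      LinearIndependent.of_comp (Submodule.subtype _) hR
    simpa using hR'.fintype_card_le_finrank
  unfold nu
  omega

end Invariance

end SkewPencil

namespace SkewPencil
open FormPair

section ShiftPair

theorem shiftPair_fst_mulVec {m n : ℕ} (v : Fin n → ℂ) (i : Fin m) :
    ((shiftPair m n).1 *ᵥ v) i = if h : (i : ℕ) + 1 < n then v ⟨i + 1, h⟩ else 0 := by
  rw [mulVec, dotProduct]
  split_ifs with h
  · rw [Finset.sum_eq_single ⟨i + 1, h⟩]
    · simp [shiftPair]
    · intro b _ hb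
      have : (b : ℕ) ≠ i + 1 := fun hh => hb (Fin.ext hh)
      simp [shiftPair, this]
    · simp
  · apply Finset.sum_eq_zero
    intro b _
    have : (b : ℕ) ≠ i + 1 := by omega
    simp [shiftPair, this]

theorem shiftPair_snd_mulVec {m n : ℕ} (v : Fin n → ℂ) (i : Fin m) :
    ((shiftPair m n).2 *ᵥ v) i = if h : (i : ℕ) < n then v ⟨i, h⟩ else 0 := by
  rw [mulVec, dotProduct]
  split_ifs with h
  · rw [Finset.sum_eq_single ⟨i, h⟩]
    · simp [shiftPair]
    · intro b _ hb
      have : (b : ℕ) ≠ i := fun hh => hb (Fin.ext hh)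
      simp [shiftPair, this]
    · simp
  · apply Finset.sum_eq_zero
    intro b _
    have : (b : ℕ) ≠ i := by omega
    simp [shiftPair, this]

/-- The chains of `shiftPair m n` are constant along diagonals. -/
theorem mem_ker_chainMap_shiftPair {r k m n : ℕ} (hmn : m ≤ n) {x : Fin k → Fin n → ℂ} :
    x ∈ LinearMap.ker (chainMap r k (shiftPair m n)) ↔ ∀ i < r, ∀ t (ht : t < m),
      (if h : t + 1 < n then pad k x (i + 1) ⟨t + 1, h⟩ else 0) =
        pad k x i ⟨t, ht.trans_le hmn⟩ := by
  rw [mem_ker_chainMap]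
  constructor
  · intro h i hi t ht
    have := congrFun (h i hi) ⟨t, ht⟩
    rwa [shiftPair_fst_mulVec, shiftPair_snd_mulVec, dif_pos (ht.trans_le hmn)] at this
  · intro h i hi
    ext ⟨t, ht⟩
    rw [shiftPair_fst_mulVec, shiftPair_snd_mulVec, dif_pos (ht.trans_le hmn)]
    exact h i hi t ht

theorem nu_shiftPair {r k m n a d : ℕ} (hmn : m ≤ n) (hnm : n ≤ m + 1) (hk : k ≤ r)
    (had : a + d ≤ k) (hn : 0 < n ∨ d = 0)
    (hz : ∀ x ∈ LinearMap.ker (chainMap r k (shiftPair m n)), ∀ i (hi : i < k) (h0 : 0 < n),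
      (i < a ∨ a + d ≤ i) → x ⟨i, hi⟩ ⟨0, h0⟩ = 0)
    (hr : ∀ i < r, ∀ t < m, ∀ l < d, i = a + t + l + 1 → t + 1 < n ∧ i < k) :
    nu r k (shiftPair m n) = d := by
  apply le_antisymm
  · let F : (Fin k → Fin n → ℂ) →ₗ[ℂ] (Fin d → ℂ) :=
      LinearMap.pi fun l => if h0 : 0 < n then
        LinearMap.proj (⟨0, h0⟩ : Fin n) ∘ₗ LinearMap.proj (⟨a + l, by omega⟩ : Fin k) else 0
    have hF : ∀ x l (h0 : 0 < n), F x l = x ⟨a + l, by omega⟩ ⟨0, h0⟩ := by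
      intro x l h0
      simp [F, h0]
    have hinj : Function.Injective
        (F ∘ₗ (LinearMap.ker (chainMap r k (shiftPair m n))).subtype) := by
      rw [← LinearMap.ker_eq_bot, LinearMap.ker_eq_bot']
      rintro ⟨x, hx⟩ hx0
      have hx0 : F x = 0 := hx0
      have hx' := (mem_ker_chainMap_shiftPair hmn).1 hx
      have key : ∀ t (ht : t < n), ∀ i ≤ k, pad k x i ⟨t, ht⟩ = 0 := by
        intro t
        induction t with
        | zero =>
          intro ht i hi
          cases i with
          | zero => rfl
          | succ i =>
            simp only [pad]
            rw [dif_pos (show i < k by omega)]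
            by_cases hia : i < a ∨ a + d ≤ i
            · exact hz x hx i _ ht hia
            · have := congrFun hx0 ⟨i - a, by omega⟩
              rw [hF _ _ ht] at this
              simp only [Pi.zero_apply] at this
              convert this using 3
              omega
        | succ t ih =>
          intro ht i hi
          cases i with
          | zero => rfl
          | succ i =>
            have := hx' i (by omega) t (by omega)
            rw [dif_pos ht] at this
            rw [this]
            exact ih _ i (by omega)
      apply Subtype.ext
      ext i t
      have := key t t.2 (i + 1) (by omega)
      simpa [pad] using this
    simpa [nu] using LinearMap.finrank_le_finrank_of_injective hinj
  · let e (φ : Fin d → ℂ) (i t : ℕ) : ℂ :=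
      if h : a + t ≤ i ∧ i - (a + t) < d then φ ⟨i - (a + t), h.2⟩ else 0
    have e_succ : ∀ φ i t, e φ (i + 1) (t + 1) = e φ i t := by
      intro φ i t
      have h1 : i + 1 - (a + (t + 1)) = i - (a + t) := by omega
      have h2 : a + (t + 1) ≤ i + 1 ↔ a + t ≤ i := by omega
      simp only [e, h1, h2]
    have e_zero : ∀ φ i t, ¬ (a + t ≤ i ∧ i - (a + t) < d) → e φ i t = 0 := by
      intro φ i t h
      exact dif_neg h
    let G : (Fin d → ℂ) →ₗ[ℂ] (Fin k → Fin n → ℂ) :=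
      { toFun := fun φ i t => e φ i t
        map_add' := by
          intro φ ψ
          ext i t
          simp only [e, Pi.add_apply]
          split_ifs <;> simp
        map_smul' := by
          intro c φ
          ext i t
          simp only [e, Pi.smul_apply]
          split_ifs <;> simp }
    have hG : ∀ φ (i : Fin k) (t : Fin n), G φ i t = e φ i t := fun _ _ _ => rfl
    have hpad : ∀ φ i (t : Fin n), i ≤ k → pad k (G φ) i t = e φ i (t + 1) := by
      intro φ i t hi
      cases i with
      | zero => rw [e_zero _ _ _ (by omega)]; simp [pad]
      | succ i =>
        simp only [pad]
        rw [dif_pos (show i < k by omega), hG, e_succ]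
    have hpad' : ∀ φ i (t : Fin n), k < i → pad k (G φ) i t = 0 := by
      intro φ i t hi
      cases i with
      | zero => omega
      | succ i =>
        simp only [pad]
        rw [dif_neg (show ¬ i < k by omega)]
        rfl
    have hker : ∀ φ, G φ ∈ LinearMap.ker (chainMap r k (shiftPair m n)) := by
      intro φ
      rw [mem_ker_chainMap_shiftPair hmn]
      intro i hi t ht
      have key : ¬ (t + 1 < n ∧ i < k) → e φ i (t + 1) = 0 := by
        intro h
        apply e_zero
        rintro ⟨h1, h2⟩
        exact h (hr i hi t ht _ h2 (by omega))
      have hR : pad k (G φ) i ⟨t, ht.trans_le hmn⟩ = e φ i (t + 1) := by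
        by_cases hik : i ≤ k
        · exact hpad _ _ _ hik
        · rw [hpad' _ _ _ (by omega), key (by omega)]
      rw [hR]
      split_ifs with h1
      · by_cases hik : i < k
        · rw [hpad _ _ _ (by omega), e_succ]
        · rw [hpad' _ _ _ (by omega), key (by omega)]
      · rw [key (by omega)]
    have hinj : Function.Injective (G.codRestrict _ hker) := by
      rw [← LinearMap.ker_eq_bot, LinearMap.ker_codRestrict, LinearMap.ker_eq_bot']
      intro φ hφ
      ext l
      have hn' : 0 < n := by have := l.2; omega
      have := congrFun (congrFun hφ ⟨a + l, by omega⟩) ⟨0, hn'⟩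
      rw [hG] at this
      simpa [e] using this
    simpa [nu] using LinearMap.finrank_le_finrank_of_injective hinj

end ShiftPair

section Values

theorem nu_shiftPair_global (m k : ℕ) : nu (k + 1) k (shiftPair m (m + 1)) = k - m := by
  refine nu_shiftPair (a := 0) (by omega) le_rfl (by omega) (by omega) (by omega) ?_ (by omega)
  intro x hx i hi h0 hi'
  rw [mem_ker_chainMap_shiftPair (by omega)] at hx
  have key : ∀ s, ∀ h : s < m + 1, i + 1 + s ≤ k + 1 →
      pad k x (i + 1) ⟨0, h0⟩ = pad k x (i + 1 + s) ⟨s, h⟩ := by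
    intro s
    induction s with
    | zero => intro _ _; rfl
    | succ s ih =>
      intro h h'
      have := hx (i + 1 + s) (by omega) s (by omega)
      rw [dif_pos h] at this
      rw [ih (by omega) (by omega), ← this]
      rfl
  have h1 := key (k - i) (by omega) (by omega)
  rw [show i + 1 + (k - i) = k + 1 by omega] at h1
  simpa [pad, hi] using h1

theorem nu_shiftPair_local (m k : ℕ) : nu k k (shiftPair m (m + 1)) = k :=
  nu_shiftPair (a := 0) (by omega) le_rfl le_rfl (by omega) (by omega)
    (by omega) (by omega)

theorem nu_shiftPair_square (h k : ℕ) : nu k k (shiftPair h h) = min h k := by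
  refine nu_shiftPair (a := k - h) le_rfl (by omega) le_rfl (by omega) (by omega) ?_ (by omega)
  intro x hx i hi h0 hi'
  rw [mem_ker_chainMap_shiftPair le_rfl] at hx
  have key : ∀ s, ∀ h' : s < h,
      pad k x (i + 1) ⟨0, h0⟩ = pad k x (i + 1 + s) ⟨s, h'⟩ := by
    intro s
    induction s with
    | zero => intro _; rfl
    | succ s ih =>
      intro h'
      have := hx (i + 1 + s) (by omega) s (by omega)
      rw [dif_pos h'] at this
      rw [ih (by omega), ← this]
      rfl
  have h1 := key (h - 1) (by omega)
  have h2 := hx (i + 1 + (h - 1)) (by omega) (h - 1) (by omega)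
  rw [dif_neg (by omega)] at h2
  rw [← h2] at h1
  simpa [pad, hi] using h1

theorem shiftPair_fst_transpose_injective (m : ℕ) (v : Fin m → ℂ)
    (hv : (shiftPair m (m + 1)).1ᵀ *ᵥ v = 0) : v = 0 := by
  ext i
  have h1 := congrFun hv i.succ
  rw [mulVec, dotProduct, Finset.sum_eq_single i] at h1
  · simpa [shiftPair] using h1
  · intro j _ hj
    have : (i : ℕ) ≠ j := fun h => hj (Fin.ext h.symm)
    simp [shiftPair, this]
  · simp

theorem nu_sk_M_global (m k : ℕ) : nu (k + 1) k (sk (shiftPair m (m + 1))) = k - m := by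
  rw [nu_sk, nu_shiftPair_global, nu_eq_zero_of_fst _ _ (by omega), zero_add]
  exact shiftPair_fst_transpose_injective m

theorem nu_sk_M_local (m k : ℕ) : nu k k (sk (shiftPair m (m + 1))) = k := by
  rw [nu_sk, nu_shiftPair_local, nu_eq_zero_of_fst _ _ le_rfl, zero_add]
  exact shiftPair_fst_transpose_injective m

theorem shiftPair_transpose_reindex (h : ℕ) :
    (shiftPair h h).1ᵀ = (shiftPair h h).1.submatrix Fin.revPerm Fin.revPerm ∧
    (shiftPair h h).2ᵀ = (shiftPair h h).2.submatrix Fin.revPerm Fin.revPerm := by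
  constructor <;> ext i j <;> simp only [shiftPair, transpose_apply, of_apply, submatrix_apply,
    Fin.revPerm_apply, Fin.val_rev] <;> congr 1 <;> apply propext <;> omega

theorem nu_reindex_le {r k : ℕ} {ρ κ : Type} [Fintype ρ] [Fintype κ] (X : RectPair ρ κ)
    (e : ρ ≃ ρ) (e' : κ ≃ κ) :
    nu r k X ≤ nu r k ((X.1.submatrix e e', X.2.submatrix e e') : RectPair ρ κ) := by
  refine nu_le r k (LinearMap.funLeft ℂ ℂ e') (LinearMap.funLeft_injective_of_surjective _ _ _
    e'.surjective) ?_
  intro v w hvw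
  simp only [LinearMap.funLeft, submatrix_mulVec_equiv]
  have hc : ∀ v : κ → ℂ, (v ∘ e') ∘ e'.symm = v := fun v => by ext; simp
  change (X.1 *ᵥ ((v ∘ e') ∘ e'.symm)) ∘ e = (X.2 *ᵥ ((w ∘ e') ∘ e'.symm)) ∘ e
  rw [hc, hc, hvw]

theorem nu_shiftPair_square_transpose (h k : ℕ) :
    nu k k (((shiftPair h h).1ᵀ, (shiftPair h h).2ᵀ) : RectPair (Fin h) (Fin h)) = min h k := by
  obtain ⟨h1, h2⟩ := shiftPair_transpose_reindex h
  rw [h1, h2, ← nu_shiftPair_square h k]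
  apply le_antisymm
  · refine (nu_reindex_le _ Fin.revPerm Fin.revPerm).trans_eq ?_
    congr 1
    apply Prod.ext <;> ext i j <;> simp
  · exact nu_reindex_le _ Fin.revPerm Fin.revPerm

theorem nu_sk_square_local (h k : ℕ) : nu k k (sk (shiftPair h h)) = 2 * min h k := by
  rw [nu_sk, nu_shiftPair_square, nu_shiftPair_square_transpose, two_mul]

theorem det_shiftPair_comb (h : ℕ) (a b : ℂ) :
    (a • (shiftPair h h).1 + b • (shiftPair h h).2).det = b ^ h := by
  rw [Matrix.det_of_isUpperTriangular]
  · simp [shiftPair]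
  · intro i j hij
    have hij : (j : ℕ) < i := hij
    have h1 : (j : ℕ) ≠ i + 1 := by omega
    have h2 : (j : ℕ) ≠ i := by omega
    simp [shiftPair, h1, h2]

theorem nu_sk_square_eq_zero (h r k : ℕ) (hr : k ≤ r) (a b c d : ℂ) (hb : b ≠ 0) :
    nu r k (sk ((a • (shiftPair h h).1 + b • (shiftPair h h).2,
      c • (shiftPair h h).1 + d • (shiftPair h h).2) : RectPair (Fin h) (Fin h))) = 0 := by
  have h0 : (a • (shiftPair h h).1 + b • (shiftPair h h).2).det ≠ 0 := by
    rw [det_shiftPair_comb]; exact pow_ne_zero _ hb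
  rw [nu_sk, nu_eq_zero_of_fst _ _ hr, nu_eq_zero_of_fst _ _ hr]
  · exact fun v hv => Matrix.eq_zero_of_mulVec_eq_zero h0 hv
  · exact fun v hv => Matrix.eq_zero_of_mulVec_eq_zero
      (by rwa [det_transpose]) hv

theorem twist_sk {ρ κ : Type} (o : Option ℂ) (X : RectPair ρ κ) :
    twist o (sk X) = sk (match o with
      | some μ => ((X.1 + μ • X.2, X.2) : RectPair ρ κ)
      | none => (X.2, X.1)) := by
  cases o <;> simp [twist, sk, fromBlocks_add, fromBlocks_smul]; abel_nf

theorem nu_sk_square_global (o : Option ℂ) (h k : ℕ) :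
    nu (k + 1) k (twist o (sk (shiftPair h h))) = 0 := by
  cases o with
  | none =>
    rw [twist_sk]
    have := nu_sk_square_eq_zero h (k + 1) k (by omega) 0 1 1 0 one_ne_zero
    simpa using this
  | some μ =>
    rw [twist_sk, nu_sk, nu_eq_zero_of_snd, nu_eq_zero_of_snd]
    · intro v hv
      simpa [shiftPair_self_snd] using hv
    · intro v hv
      simpa [shiftPair_self_snd] using hv

/-- The number of local chain parameters at the eigenvalue `o`. -/
def localNu (o : Option ℂ) (k : ℕ) {ι : Type} [Fintype ι] (P : FormPair ι) : ℕ :=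
  nu k k (twist (o.map Neg.neg) P)

/-- The number of global chain parameters. -/
def globalNu (k : ℕ) {ι : Type} [Fintype ι] (P : FormPair ι) : ℕ := nu (k + 1) k P

theorem localNu_Hb_self (o : Option ℂ) (h k : ℕ) :
    localNu o k (twist o (sk (shiftPair h h))) = 2 * min h k := by
  rw [localNu, ← nu_sk_square_local]
  congr 1
  cases o <;> simp [twist]

theorem localNu_Hb_ne (o o' : Option ℂ) (ho : o ≠ o') (h k : ℕ) :
    localNu o k (twist o' (sk (shiftPair h h))) = 0 := by
  rw [localNu, twist_sk]
  cases o with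
  | none =>
    cases o' with
    | none => exact absurd rfl ho
    | some μ' =>
      have := nu_sk_square_eq_zero h k k le_rfl 0 1 1 μ' one_ne_zero
      simpa [twist_sk] using this
  | some μ =>
    cases o' with
    | none =>
      have := nu_sk_square_eq_zero h k k le_rfl (-μ) 1 1 0 one_ne_zero
      simpa [twist_sk, add_comm] using this
    | some μ' =>
      have := nu_sk_square_eq_zero h k k le_rfl 1 (μ' - μ) 0 1
        (fun h0 => ho (by rw [sub_eq_zero.1 h0]))
      simpa [twist_sk, sub_smul, add_assoc, sub_eq_add_neg, add_smul] using this

theorem localNu_M (o : Option ℂ) (m k : ℕ) : localNu o k (sk (shiftPair m (m + 1))) = k := by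
  rw [localNu, (twist_M _ m).nu_eq, nu_sk_M_local]

theorem FormPair.Degen.globalNu_le {ι κ : Type} [Fintype ι] [DecidableEq ι]
    [Fintype κ] [DecidableEq κ]
    {P : FormPair ι} {Q : FormPair κ} (h : Degen P Q) (k : ℕ) : globalNu k P ≤ globalNu k Q :=
  h.nu_le _ _

theorem FormPair.Degen.localNu_le {ι κ : Type} [Fintype ι] [DecidableEq ι]
    [Fintype κ] [DecidableEq κ]
    {P : FormPair ι} {Q : FormPair κ} (h : Degen P Q) (o : Option ℂ) (k : ℕ) :
    localNu o k P ≤ localNu o k Q :=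
  (h.twist _).nu_le _ _

open Classical in
/-- The contribution of a block to `localNu`. -/
def localVal (o : Option ℂ) (k : ℕ) : SBlock → ℕ
  | .H h μ => if o = some μ then 2 * min h k else 0
  | .K h => if o = none then 2 * min h k else 0
  | .M _ => k

/-- The contribution of a block to `globalNu`. -/
def globalVal (k : ℕ) : SBlock → ℕ
  | .H _ _ => 0
  | .K _ => 0
  | .M m => k - m

theorem globalNu_block (k : ℕ) (b : SBlock) :
    globalNu k (b.toPencil : FormPair (Fin b.size)) = globalVal k b := by
  cases b with
  | H h μ => exact ((cong_Hb (some μ) h).symm.nu_eq _ _).trans (nu_sk_square_global _ _ _)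
  | K h => exact ((cong_Hb none h).symm.nu_eq _ _).trans (nu_sk_square_global _ _ _)
  | M m => exact ((cong_M m).symm.nu_eq _ _).trans (nu_sk_M_global _ _)

theorem localNu_Hb (o o' : Option ℂ) [Decidable (o = o')] (h k : ℕ) :
    localNu o k ((Hb o' h).toPencil : FormPair (Fin (Hb o' h).size)) =
      if o = o' then 2 * min h k else 0 := by
  have h1 : localNu o k ((Hb o' h).toPencil : FormPair (Fin (Hb o' h).size)) =
    localNu o k (twist o' (sk (shiftPair h h))) := ((cong_Hb o' h).symm.twist _).nu_eq _ _
  rw [h1]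
  split_ifs with ho
  · rw [ho, localNu_Hb_self]
  · exact localNu_Hb_ne o o' ho h k

theorem localNu_block (o : Option ℂ) (k : ℕ) (b : SBlock) :
    localNu o k (b.toPencil : FormPair (Fin b.size)) = localVal o k b := by
  cases b with
  | H h μ => exact localNu_Hb o (some μ) h k
  | K h => exact localNu_Hb o none h k
  | M m => exact (((cong_M m).symm.twist _).nu_eq _ _).trans (localNu_M o m k)

theorem nu_ofIsEmpty {r k : ℕ} {ι : Type} [Fintype ι] [IsEmpty ι] (P : FormPair ι) :
    nu r k P = 0 :=
  Module.finrank_zero_of_subsingleton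

theorem globalNu_ofList (k : ℕ) (l : List SBlock) :
    globalNu k (ofList l) = (l.map (globalVal k)).sum := by
  induction l with
  | nil =>
    have : IsEmpty (Fin (sizeSum [])) := Fin.isEmpty
    exact nu_ofIsEmpty _
  | cons b l ih =>
    rw [List.map_cons, List.sum_cons, ← ih, ← globalNu_block]
    exact ((ofList_cons b l).symm.nu_eq _ _).trans (nu_rds _ _ _ _)

theorem localNu_ofList (o : Option ℂ) (k : ℕ) (l : List SBlock) :
    localNu o k (ofList l) = (l.map (localVal o k)).sum := by
  induction l with
  | nil =>
    have : IsEmpty (Fin (sizeSum [])) := Fin.isEmpty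
    exact nu_ofIsEmpty _
  | cons b l ih =>
    rw [List.map_cons, List.sum_cons, ← ih, ← localNu_block]
    refine (((ofList_cons b l).symm.twist _).nu_eq _ _).trans ?_
    rw [twist_ds]
    exact nu_rds _ _ _ _

end Values

end SkewPencil

namespace SkewPencil

section Majorization

/-- The sum of the positive parts `k - m`, `m ∈ A`. -/
def defect (A : Multiset ℕ) (k : ℕ) : ℕ := (A.map (k - ·)).sum

/-- The sum of the truncations `min h k`, `h ∈ X`. -/
def trunc (X : Multiset ℕ) (k : ℕ) : ℕ := (X.map (min · k)).sum

@[simp] theorem defect_zero (k : ℕ) : defect 0 k = 0 := rfl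

@[simp] theorem defect_cons (m : ℕ) (A : Multiset ℕ) (k : ℕ) :
    defect (m ::ₘ A) k = k - m + defect A k := by simp [defect]

@[simp] theorem trunc_zero (k : ℕ) : trunc 0 k = 0 := rfl

@[simp] theorem trunc_cons (m : ℕ) (A : Multiset ℕ) (k : ℕ) :
    trunc (m ::ₘ A) k = min m k + trunc A k := by simp [trunc]

theorem trunc_add_defect (X : Multiset ℕ) (k : ℕ) : trunc X k + defect X k = X.card * k := by
  induction X using Multiset.induction with
  | empty => simp
  | cons m X ih =>
    rw [trunc_cons, defect_cons, Multiset.card_cons, add_mul, ← ih]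
    omega

theorem card_mul_le_defect (A : Multiset ℕ) (k : ℕ) : A.card * k ≤ defect A k + A.sum := by
  induction A using Multiset.induction with
  | empty => simp
  | cons m X ih =>
    rw [defect_cons, Multiset.card_cons, add_mul, Multiset.sum_cons]
    omega

theorem defect_add_sum {A : Multiset ℕ} {k : ℕ} (h : ∀ m ∈ A, m ≤ k) :
    defect A k + A.sum = A.card * k := by
  induction A using Multiset.induction with
  | empty => simp
  | cons m X ih =>
    have h1 := ih fun m hm => h m (Multiset.mem_cons_of_mem hm)
    have h2 := h m (Multiset.mem_cons_self _ _)
    rw [defect_cons, Multiset.card_cons, add_mul, Multiset.sum_cons, ← h1]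
    omega

theorem defect_add_le (A : Multiset ℕ) (k j : ℕ) :
    defect A (k + j) ≤ defect A k + A.card * j := by
  induction A using Multiset.induction with
  | empty => simp
  | cons m X ih =>
    rw [defect_cons, defect_cons, Multiset.card_cons, add_mul]
    omega

theorem trunc_le_sum (X : Multiset ℕ) (k : ℕ) : trunc X k ≤ X.sum := by
  induction X using Multiset.induction with
  | empty => simp
  | cons m X ih => rw [trunc_cons, Multiset.sum_cons]; omega

theorem trunc_eq_sum {X : Multiset ℕ} {k : ℕ} (h : ∀ m ∈ X, m ≤ k) : trunc X k = X.sum := by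
  induction X using Multiset.induction with
  | empty => simp
  | cons m X ih =>
    have h1 := ih fun m hm => h m (Multiset.mem_cons_of_mem hm)
    have h2 := h m (Multiset.mem_cons_self _ _)
    rw [trunc_cons, Multiset.sum_cons, h1]; omega

theorem exists_le_bound (X : Multiset ℕ) : ∃ N, ∀ m ∈ X, m ≤ N :=
  ⟨X.sum, fun _ hm => Multiset.single_le_sum (fun _ _ => Nat.zero_le _) _ hm⟩

theorem exists_max_cons {A : Multiset ℕ} (hA : A ≠ 0) :
    ∃ q R, A = q ::ₘ R ∧ ∀ m ∈ R, m ≤ q := by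
  obtain ⟨q, hq, hmax⟩ := Multiset.exists_max_image id hA
  obtain ⟨R, rfl⟩ := Multiset.exists_cons_of_mem hq
  exact ⟨q, R, rfl, fun m hm => hmax m (Multiset.mem_cons_of_mem hm)⟩

theorem defect_succ (A : Multiset ℕ) (k : ℕ) :
    defect A (k + 1) = defect A k + (A.filter (· ≤ k)).card := by
  induction A using Multiset.induction with
  | empty => simp
  | cons m X ih =>
    by_cases h : m ≤ k
    · rw [defect_cons, defect_cons, Multiset.filter_cons_of_pos (p := (· ≤ k)) _ h,
        Multiset.card_cons, ih]
      omega
    · rw [defect_cons, defect_cons, Multiset.filter_cons_of_neg (p := (· ≤ k)) _ h, ih]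
      omega

theorem mem_of_card_filter_lt {A : Multiset ℕ} {k : ℕ}
    (h : k = 0 ∧ 0 < (A.filter (· ≤ k)).card ∨
      0 < k ∧ (A.filter (· ≤ k - 1)).card < (A.filter (· ≤ k)).card) : k ∈ A := by
  by_contra hk
  have h1 : ∀ m ∈ A, m ≤ k ↔ m < k := fun m hm =>
    ⟨fun hle => lt_of_le_of_ne hle (fun he => hk (he ▸ hm)), le_of_lt⟩
  rw [Multiset.filter_congr h1] at h
  rcases h with ⟨rfl, h⟩ | ⟨h0, h⟩
  · simp at h
  · refine h.ne (congrArg _ (Multiset.filter_congr fun m _ => ?_))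
    omega

/-- One unit of spreading apart. -/
def Spread (X Y : Multiset ℕ) : Prop :=
  ∃ j k R, j + 1 ≤ k ∧ X = (j + 1) ::ₘ k ::ₘ R ∧ Y = j ::ₘ (k + 1) ::ₘ R

theorem eq_of_defect_eq {X Y : Multiset ℕ} (h : ∀ k, defect X k = defect Y k) : X = Y := by
  have h1 : ∀ k, (X.filter (· ≤ k)).card = (Y.filter (· ≤ k)).card := by
    intro k
    have := h (k + 1)
    rw [defect_succ, defect_succ, h k] at this
    omega
  have h2 : ∀ (Z : Multiset ℕ) k, Z.count (k + 1) + (Z.filter (· ≤ k)).card =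
      (Z.filter (· ≤ k + 1)).card := by
    intro Z k
    induction Z using Multiset.induction with
    | empty => simp
    | cons m Z ih =>
      simp only [Multiset.count_cons, Multiset.filter_cons, Multiset.card_add] at ih ⊢
      have e : ∀ (p : Prop) [Decidable p],
          (if p then ({m} : Multiset ℕ) else 0).card = if p then 1 else 0 := by
        intro p _; split_ifs <;> rfl
      rw [e, e]
      split_ifs <;> omega
  have h3 : ∀ (Z : Multiset ℕ), Z.count 0 = (Z.filter (· ≤ 0)).card := by
    intro Z
    rw [Multiset.count_eq_card_filter_eq]
    congr 1
    exact Multiset.filter_congr fun m _ => by omega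
  ext k
  cases k with
  | zero => rw [h3, h3, h1]
  | succ k =>
    have := h2 X k
    have := h2 Y k
    have := h1 k
    have := h1 (k + 1)
    omega

theorem reflTransGen_spread {X Y : Multiset ℕ} (hc : X.card = Y.card) (hs : X.sum = Y.sum)
    (h : ∀ k, defect X k ≤ defect Y k) : Relation.ReflTransGen Spread X Y := by
  obtain ⟨NX, hNX⟩ := exists_le_bound X
  obtain ⟨NY, hNY⟩ := exists_le_bound Y
  obtain ⟨N, hN⟩ : ∃ N, N = max NX NY := ⟨_, rfl⟩
  replace hNX : ∀ m ∈ X, m ≤ N := fun m hm => (hNX m hm).trans (by omega)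
  replace hNY : ∀ m ∈ Y, m ≤ N := fun m hm => (hNY m hm).trans (by omega)
  clear hN
  induction hD : ∑ k ∈ Finset.range N, defect Y k using Nat.strong_induction_on generalizing Y with
  | _ D ih =>
  by_cases heq : ∀ k, defect X k = defect Y k
  · rw [eq_of_defect_eq heq]
  push Not at heq
  obtain ⟨z, hz⟩ := heq
  have hbig : ∀ k, N ≤ k → defect X k = defect Y k := by
    intro k hk
    have h1 := defect_add_sum fun m hm => (hNX m hm).trans hk
    have h2 := defect_add_sum fun m hm => (hNY m hm).trans hk
    rw [hc, ← h2, hs] at h1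
    omega
  have hzN : z < N := by
    by_contra hcon
    exact hz (hbig z (by omega))
  -- the left end of the interval
  obtain ⟨x, hxz, hx, hxlt⟩ : ∃ x < z, defect X x = defect Y x ∧
      ∀ k, x < k → k ≤ z → defect X k < defect Y k := by
    have h0 : defect X 0 = defect Y 0 := by
      have e : ∀ A, defect A 0 = 0 := by intro A; simp [defect]
      rw [e, e]
    have hex := Nat.findGreatest_spec (P := fun x => defect X x = defect Y x) (Nat.zero_le z) h0
    refine ⟨_, lt_of_le_of_ne (Nat.findGreatest_le z) ?_, hex, ?_⟩
    · intro he
      rw [he] at hex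
      exact hz hex
    · intro k hk hkz
      exact lt_of_le_of_ne (h k) (Nat.findGreatest_is_greatest
        (P := fun x => defect X x = defect Y x) hk hkz)
  -- the right end of the interval
  obtain ⟨y, hzy, hyN, hy, hylt⟩ : ∃ y, z < y ∧ y ≤ N ∧ defect X y = defect Y y ∧
      ∀ k, z ≤ k → k < y → defect X k < defect Y k := by
    have hex : ∃ y, z ≤ y ∧ defect X y = defect Y y := ⟨N, hzN.le, hbig N le_rfl⟩
    have hsp := Nat.find_spec hex
    refine ⟨Nat.find hex, lt_of_le_of_ne hsp.1 ?_, Nat.find_min' hex ⟨hzN.le, hbig N le_rfl⟩,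
      hsp.2, ?_⟩
    · intro he
      apply hz
      rw [he]
      exact hsp.2
    · intro k hk hky
      exact lt_of_le_of_ne (h k) fun he => Nat.find_min hex hky ⟨hk, he⟩
  have hmid : ∀ k, x < k → k < y → defect X k < defect Y k := by
    intro k h1 h2
    rcases le_total k z with h3 | h3
    · exact hxlt k h1 h3
    · exact hylt k h3 h2
  have hxY : x ∈ Y := by
    apply mem_of_card_filter_lt
    have h1 := hmid (x + 1) (by omega) (by omega)
    rw [defect_succ, defect_succ, hx] at h1
    rcases Nat.eq_zero_or_pos x with h0 | h0
    · left; omega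
    · right
      refine ⟨h0, ?_⟩
      have h2 := h (x - 1)
      have h3 := defect_succ X (x - 1)
      have h4 := defect_succ Y (x - 1)
      have h5 : (X.filter (· ≤ x - 1)).card ≤ (X.filter (· ≤ x)).card :=
        Multiset.card_le_card (Multiset.monotone_filter_right X fun m hm => by omega)
      rw [Nat.sub_add_cancel h0] at h3 h4
      omega
  have hyY : y ∈ Y := by
    apply mem_of_card_filter_lt
    right
    refine ⟨by omega, ?_⟩
    have h1 := hmid (y - 1) (by omega) (by omega)
    have h2 := h (y + 1)
    rw [defect_succ, defect_succ, hy] at h2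
    have h3 := defect_succ X (y - 1)
    have h4 := defect_succ Y (y - 1)
    have h5 : (X.filter (· ≤ y - 1)).card ≤ (X.filter (· ≤ y)).card :=
      Multiset.card_le_card (Multiset.monotone_filter_right X fun m hm => by omega)
    rw [Nat.sub_add_cancel (by omega : 1 ≤ y)] at h3 h4
    omega
  obtain ⟨R, rfl⟩ := Multiset.exists_cons_of_mem hxY
  have hyR : y ∈ R := by
    rcases Multiset.mem_cons.1 hyY with h1 | h1
    · omega
    · exact h1
  obtain ⟨R, rfl⟩ := Multiset.exists_cons_of_mem hyR
  obtain ⟨y, rfl⟩ : ∃ y', y = y' + 1 := ⟨y - 1, by omega⟩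
  refine Relation.ReflTransGen.tail (b := (x + 1) ::ₘ y ::ₘ R) ?_
    ⟨x, y, R, by omega, rfl, rfl⟩
  have hval : ∀ k, defect ((x + 1) ::ₘ y ::ₘ R) k =
      defect (x ::ₘ (y + 1) ::ₘ R) k - if x < k ∧ k < y + 1 then 1 else 0 := by
    intro k
    simp only [defect_cons]
    split_ifs <;> omega
  refine ih _ ?_ ?_ ?_ ?_ ?_ rfl
  · rw [← hD]
    apply Finset.sum_lt_sum
    · intro k _
      rw [hval]
      exact Nat.sub_le _ _
    · refine ⟨z, Finset.mem_range.2 hzN, ?_⟩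
      rw [hval, if_pos ⟨hxz, hzy⟩]
      have := hmid z hxz hzy
      omega
  · simpa using hc
  · rw [hs]
    simp only [Multiset.sum_cons]
    omega
  · intro k
    rw [hval]
    split_ifs with hk
    · have := hmid k hk.1 hk.2
      omega
    · exact h k
  · intro m hm
    simp only [Multiset.mem_cons] at hm
    rcases hm with rfl | rfl | hm
    · omega
    · omega
    · exact hNY m (by simp [hm])

end Majorization

section Reach

/-- The multiset of blocks with `M`-indices `A` and, at each `μ ∈ S`, `H`-indices `β μ`. -/
def blocks (S : Finset (Option ℂ)) (A : Multiset ℕ) (β : Option ℂ → Multiset ℕ) :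
    Multiset SBlock :=
  A.map SBlock.M + ∑ μ ∈ S, (β μ).map (Hb μ)

/-- Reachability by structure transitions, up to adding empty blocks. -/
def Reach (s t : Multiset SBlock) : Prop :=
  ∃ z z' : Multiset SBlock, (∀ b ∈ z, b.size = 0) ∧ (∀ b ∈ z', b.size = 0) ∧
    Relation.ReflTransGen TransSkew (s + z) (t + z')

theorem TransSkew.add_right {s t : Multiset SBlock} (h : TransSkew s t) (r : Multiset SBlock) :
    TransSkew (s + r) (t + r) := by
  rcases h with ⟨j, k, rest, h1, h2, rfl, rfl⟩ | ⟨j, k, μ, rest, h1, h2, rfl, rfl⟩ |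
    ⟨j, k, μ, rest, rfl, rfl⟩ | ⟨ek, p, q, rest, h1, h2, rfl, rfl⟩
  · exact Or.inl ⟨j, k, rest + r, h1, h2, by simp, by simp⟩
  · exact Or.inr (Or.inl ⟨j, k, μ, rest + r, h1, h2, by simp, by simp⟩)
  · exact Or.inr (Or.inr (Or.inl ⟨j, k, μ, rest + r, by simp, by simp⟩))
  · exact Or.inr (Or.inr (Or.inr ⟨ek, p, q, rest + r, h1, h2, by rw [add_assoc], by simp⟩))

theorem reflTransGen_add_right {s t : Multiset SBlock}
    (h : Relation.ReflTransGen TransSkew s t) (r : Multiset SBlock) :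
    Relation.ReflTransGen TransSkew (s + r) (t + r) :=
  h.lift (· + r) fun _ _ h => TransSkew.add_right h r

theorem Reach.refl (s : Multiset SBlock) : Reach s s :=
  ⟨0, 0, by simp, by simp, Relation.ReflTransGen.refl⟩

theorem Reach.single {s t : Multiset SBlock} (h : TransSkew s t) : Reach s t :=
  ⟨0, 0, by simp, by simp, by simpa using Relation.ReflTransGen.single h⟩

theorem Reach.trans {s t u : Multiset SBlock} (h : Reach s t) (h' : Reach t u) : Reach s u := by
  obtain ⟨z, z', h1, h2, h3⟩ := h
  obtain ⟨y, y', h1', h2', h3'⟩ := h'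
  refine ⟨z + y, y' + z', ?_, ?_, ?_⟩
  · simp only [Multiset.mem_add]
    rintro b (hb | hb)
    exacts [h1 b hb, h1' b hb]
  · simp only [Multiset.mem_add]
    rintro b (hb | hb)
    exacts [h2' b hb, h2 b hb]
  · have e1 := reflTransGen_add_right h3 y
    have e2 := reflTransGen_add_right h3' z'
    rw [← add_assoc, ← add_assoc]
    refine e1.trans ?_
    rwa [add_right_comm]

theorem Reach.add_right {s t : Multiset SBlock} (h : Reach s t) (r : Multiset SBlock) :
    Reach (s + r) (t + r) := by
  obtain ⟨z, z', h1, h2, h3⟩ := h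
  refine ⟨z, z', h1, h2, ?_⟩
  rw [add_right_comm s, add_right_comm t]
  exact reflTransGen_add_right h3 r

theorem Reach.add {s t s' t' : Multiset SBlock} (h : Reach s t) (h' : Reach s' t') :
    Reach (s + s') (t + t') :=
  (h.add_right s').trans (by
    rw [add_comm t, add_comm t]
    exact h'.add_right t)

theorem Reach.add_empty (s z : Multiset SBlock) (hz : ∀ b ∈ z, b.size = 0) : Reach s (s + z) :=
  ⟨z, 0, hz, by simp, by simpa using Relation.ReflTransGen.refl⟩

theorem Reach.of_add_empty (s z : Multiset SBlock) (hz : ∀ b ∈ z, b.size = 0) : Reach (s + z) s :=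
  ⟨0, z, by simp, hz, by simpa using Relation.ReflTransGen.refl⟩

theorem Reach.sum (S : Finset (Option ℂ)) (f g : Option ℂ → Multiset SBlock)
    (h : ∀ μ ∈ S, Reach (f μ) (g μ)) : Reach (∑ μ ∈ S, f μ) (∑ μ ∈ S, g μ) := by
  classical
  induction S using Finset.induction_on with
  | empty => exact Reach.refl _
  | insert a S ha ih =>
    rw [Finset.sum_insert ha, Finset.sum_insert ha]
    exact (h a (Finset.mem_insert_self _ _)).add
      (ih fun μ hμ => h μ (Finset.mem_insert_of_mem hμ))

theorem Spread.reach_M {X Y : Multiset ℕ} (h : Spread X Y) :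
    Reach (X.map SBlock.M) (Y.map SBlock.M) := by
  obtain ⟨j, k, R, hjk, rfl, rfl⟩ := h
  exact Reach.single (Or.inl ⟨j + 1, k, R.map SBlock.M, by omega, hjk, by simp, by simp⟩)

theorem Spread.reach_Hb {X Y : Multiset ℕ} (h : Spread X Y) (μ : Option ℂ) :
    Reach (Y.map (Hb μ)) (X.map (Hb μ)) := by
  obtain ⟨j, k, R, hjk, rfl, rfl⟩ := h
  exact Reach.single (Or.inr (Or.inl ⟨j + 1, k, μ, R.map (Hb μ), by omega, hjk,
    by simp, by simp⟩))

theorem reach_M_of_spread {X Y : Multiset ℕ} (h : Relation.ReflTransGen Spread X Y) :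
    Reach (X.map SBlock.M) (Y.map SBlock.M) := by
  induction h with
  | refl => exact Reach.refl _
  | tail _ h ih => exact ih.trans h.reach_M

theorem reach_Hb_of_spread {X Y : Multiset ℕ} (h : Relation.ReflTransGen Spread X Y)
    (μ : Option ℂ) : Reach (Y.map (Hb μ)) (X.map (Hb μ)) := by
  induction h with
  | refl => exact Reach.refl _
  | tail _ h ih => exact (h.reach_Hb μ).trans ih

theorem Hb_zero_size (μ : Option ℂ) : (Hb μ 0).size = 0 := by cases μ <;> rfl

theorem reach_Hb {X Y : Multiset ℕ} (hs : X.sum = Y.sum) (h : ∀ k, trunc X k ≤ trunc Y k)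
    (μ : Option ℂ) : Reach (X.map (Hb μ)) (Y.map (Hb μ)) := by
  have hz : ∀ n, ∀ b ∈ (Multiset.replicate n 0).map (Hb μ), b.size = 0 := by
    intro n b hb
    rw [Multiset.map_replicate] at hb
    rw [Multiset.eq_of_mem_replicate hb, Hb_zero_size]
  refine (Reach.add_empty _ _ (hz Y.card)).trans
    (Reach.trans ?_ (Reach.of_add_empty _ _ (hz X.card)))
  rw [← Multiset.map_add, ← Multiset.map_add]
  apply reach_Hb_of_spread
  have ht : ∀ (Z : Multiset ℕ) n k, trunc (Z + Multiset.replicate n 0) k = trunc Z k := by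
    intro Z n k
    simp [trunc]
  apply reflTransGen_spread
  · simp [add_comm]
  · simp [hs]
  · intro k
    have h1 := trunc_add_defect (X + Multiset.replicate Y.card 0) k
    have h2 := trunc_add_defect (Y + Multiset.replicate X.card 0) k
    rw [ht] at h1 h2
    simp only [Multiset.card_add, Multiset.card_replicate] at h1 h2
    rw [add_comm Y.card, ← h1] at h2
    have := h k
    omega

open Classical in
theorem blocks_update (S : Finset (Option ℂ)) (A : Multiset ℕ) (β : Option ℂ → Multiset ℕ)
    {μ : Option ℂ} (hμ : μ ∈ S) (X : Multiset ℕ) :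
    blocks S A (Function.update β μ X) = blocks S A (Function.update β μ 0) + X.map (Hb μ) := by
  rw [blocks, blocks, ← Finset.add_sum_erase _ _ hμ, ← Finset.add_sum_erase _ _ hμ]
  have e : ∀ Y, ∑ x ∈ S.erase μ, (Function.update β μ Y x).map (Hb x) =
      ∑ x ∈ S.erase μ, (β x).map (Hb x) := by
    intro Y
    refine Finset.sum_congr rfl fun x hx => ?_
    rw [Function.update_of_ne (Finset.ne_of_mem_erase hx)]
  rw [e, e]
  simp only [Function.update_self, Multiset.map_zero, zero_add]
  abel

theorem blocks_cons (S : Finset (Option ℂ)) (m : ℕ) (A : Multiset ℕ) (β : Option ℂ → Multiset ℕ) :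
    blocks S (m ::ₘ A) β = SBlock.M m ::ₘ blocks S A β := by
  simp [blocks]

open Classical in
theorem sum_update (S : Finset (Option ℂ)) (β : Option ℂ → Multiset ℕ) {μ : Option ℂ}
    (hμ : μ ∈ S) (X : Multiset ℕ) :
    ∑ ν ∈ S, (Function.update β μ X ν).sum + (β μ).sum = ∑ ν ∈ S, (β ν).sum + X.sum := by
  rw [← Finset.add_sum_erase _ _ hμ, ← Finset.add_sum_erase S (fun ν => (β ν).sum) hμ]
  have e : ∑ x ∈ S.erase μ, (Function.update β μ X x).sum = ∑ x ∈ S.erase μ, (β x).sum := by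
    refine Finset.sum_congr rfl fun x hx => ?_
    rw [Function.update_of_ne (Finset.ne_of_mem_erase hx)]
  rw [e, Function.update_self]
  abel

/-- The inequalities between the invariants of two canonical forms. -/
structure Dominates (S : Finset (Option ℂ)) (A : Multiset ℕ) (β : Option ℂ → Multiset ℕ)
    (A' : Multiset ℕ) (β' : Option ℂ → Multiset ℕ) (d : ℕ) : Prop where
  card : A'.card = A.card + 2 * d
  size : A.sum + ∑ μ ∈ S, (β μ).sum = A'.sum + d + ∑ μ ∈ S, (β' μ).sum
  glob : ∀ k, defect A k ≤ defect A' k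
  loc : ∀ μ ∈ S, ∀ k, trunc (β μ) k ≤ trunc (β' μ) k + d * k

variable {S : Finset (Option ℂ)} {A A' : Multiset ℕ} {β β' : Option ℂ → Multiset ℕ} {d : ℕ}

theorem Dominates.defect_lt (h : Dominates S A β A' β' d)
    (h0 : d = 0 → A'.sum < A.sum) {q : ℕ} (hq : ∀ m ∈ A', m ≤ q) {k : ℕ} (hk : q < k) :
    defect A k < defect A' k := by
  have e1 := defect_add_sum hq
  have e2 : defect A' k + A'.sum = _ := defect_add_sum fun m hm => (hq m hm).trans hk.le
  obtain ⟨j, rfl⟩ : ∃ j, k = q + (j + 1) := ⟨k - q - 1, by omega⟩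
  have e3 := h.glob q
  have e4 := h.card
  rcases Nat.eq_zero_or_pos d with hd | hd
  · subst hd
    rw [mul_zero, add_zero] at e4
    by_cases hA : ∀ m ∈ A, m ≤ q + (j + 1)
    · have e5 := defect_add_sum hA
      rw [← e4, ← e2] at e5
      have := h0 rfl
      omega
    · push Not at hA
      obtain ⟨m, hm, hmk⟩ := hA
      obtain ⟨R, rfl⟩ := Multiset.exists_cons_of_mem hm
      have e5 := defect_add_le R q (j + 1)
      rw [defect_cons] at e3 ⊢
      rw [Multiset.card_cons] at e4
      rw [e4] at e1 e2
      have e6 : (R.card + 1) * (q + (j + 1)) =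
        (R.card + 1) * q + R.card * (j + 1) + (j + 1) := by ring
      omega
  · have e5 := defect_add_le A q (j + 1)
    obtain ⟨d, rfl⟩ : ∃ d', d = d' + 1 := ⟨d - 1, by omega⟩
    rw [e4] at e1 e2
    have e6 : (A.card + 2 * (d + 1)) * (q + (j + 1)) =
      (A.card + 2 * (d + 1)) * q + A.card * (j + 1) + 2 * (d + 1) * (j + 1) := by ring
    have e7 : 0 < 2 * (d + 1) * (j + 1) := by positivity
    omega

open Classical in
/-- Undo a transition of type (3). -/
theorem Dominates.exists_shrink (h : Dominates S A β A' β' d) {μ : Option ℂ} (hμ : μ ∈ S)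
    {a : ℕ} {X : Multiset ℕ} (hX : β' μ = (a + 1) ::ₘ X)
    (hlt : ∀ k, a + 1 ≤ k → trunc (β μ) k < trunc (β' μ) k + d * k) :
    ∃ A'' , Dominates S A β A'' (Function.update β' μ (a ::ₘ X)) d ∧
      Reach (blocks S A'' (Function.update β' μ (a ::ₘ X))) (blocks S A' β') := by
  have h0 : d = 0 → A'.sum < A.sum := by
    rintro rfl
    have hs := h.size
    have hall : ∀ ν ∈ S, (β ν).sum ≤ (β' ν).sum := by
      intro ν hν
      obtain ⟨N, hN⟩ := exists_le_bound (β ν)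
      have := h.loc ν hν N
      rw [trunc_eq_sum hN] at this
      exact this.trans (by simpa using trunc_le_sum _ _)
    have : ∑ ν ∈ S, (β ν).sum < ∑ ν ∈ S, (β' ν).sum := by
      refine Finset.sum_lt_sum hall ⟨μ, hμ, ?_⟩
      obtain ⟨N, hN⟩ := exists_le_bound (β μ)
      have := hlt (N + a + 1) (by omega)
      rw [trunc_eq_sum (fun m hm => (hN m hm).trans (by omega))] at this
      exact this.trans_le (by simpa using trunc_le_sum _ _)
    omega
  have hA' : A' ≠ 0 := by
    rintro rfl
    have e1 := h.card
    rw [Multiset.card_zero] at e1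
    have e2 : A = 0 := by rw [← Multiset.card_eq_zero]; omega
    have := h0 (by omega)
    rw [e2] at this
    simp at this
  obtain ⟨q, R, rfl, hR⟩ := exists_max_cons hA'
  have hval : ∀ k, trunc (Function.update β' μ (a ::ₘ X) μ) k =
      trunc (β' μ) k - if a + 1 ≤ k then 1 else 0 := by
    intro k
    rw [Function.update_self, hX, trunc_cons, trunc_cons]
    split_ifs <;> omega
  refine ⟨(q + 1) ::ₘ R, ⟨?_, ?_, ?_, ?_⟩, ?_⟩
  · simpa using h.card
  · have e1 := sum_update S β' hμ (a ::ₘ X)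
    have e2 := h.size
    rw [hX] at e1
    simp only [Multiset.sum_cons] at e1 e2 ⊢
    omega
  · intro k
    have e1 := h.glob k
    rcases le_or_gt k q with hk | hk
    · rw [defect_cons] at e1 ⊢
      omega
    · have e2 := h.defect_lt h0 (q := q) (by simpa using hR) hk
      rw [defect_cons] at e2 ⊢
      omega
  · intro ν hν k
    have e1 := h.loc ν hν k
    by_cases hνμ : ν = μ
    · subst hνμ
      rw [hval]
      split_ifs with hk
      · have := hlt k hk
        have : 0 < trunc (β' ν) k := by
          rw [hX, trunc_cons]; omega
        omega
      · exact e1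
    · rwa [Function.update_of_ne hνμ]
  · have e : β' = Function.update β' μ ((a + 1) ::ₘ X) := by rw [← hX, Function.update_eq_self]
    conv_rhs => rw [e]
    rw [blocks_cons, blocks_cons, blocks_update S R β' hμ, blocks_update S R β' hμ ((a + 1) ::ₘ X)]
    refine Reach.single (Or.inr (Or.inr (Or.inl
      ⟨q, a, μ, blocks S R (Function.update β' μ 0) + X.map (Hb μ), ?_, ?_⟩)))
    · simp
    · simp

/-- No transition of type (3) can be undone. -/
def Stuck (S : Finset (Option ℂ)) (β β' : Option ℂ → Multiset ℕ) (d : ℕ) : Prop :=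
  ∀ μ ∈ S, ∃ k, (∀ b ∈ β' μ, b ≤ k) ∧ trunc (β μ) k = trunc (β' μ) k + d * k

theorem Dominates.exists_stuck (h : Dominates S A β A' β' d) :
    ∃ A'' β'', Dominates S A β A'' β'' d ∧ Stuck S β β'' d ∧
      Reach (blocks S A'' β'') (blocks S A' β') := by
  classical
  induction hn : ∑ μ ∈ S, (β' μ).sum using Nat.strong_induction_on generalizing A' β' with
  | _ n ih =>
  by_cases hst : Stuck S β β' d
  · exact ⟨A', β', h, hst, Reach.refl _⟩
  rw [Stuck] at hst
  push Not at hst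
  obtain ⟨μ, hμ, hk⟩ := hst
  have h0 : β' μ ≠ 0 := by
    intro h0
    refine hk 0 (by simp [h0]) ?_
    have := h.loc μ hμ 0
    have := trunc_add_defect (β μ) 0
    simp [h0] at *
    omega
  obtain ⟨a, X, hX, hmax⟩ := exists_max_cons h0
  have hlt : ∀ k, a ≤ k → trunc (β μ) k < trunc (β' μ) k + d * k := by
    intro k hak
    refine lt_of_le_of_ne (h.loc μ hμ k) (hk k ?_)
    rw [hX]
    simp only [Multiset.mem_cons]
    rintro b (rfl | hb)
    exacts [hak, (hmax b hb).trans hak]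
  cases a with
  | zero =>
    have h1 := hlt 0 le_rfl
    have := trunc_add_defect (β' μ) 0
    omega
  | succ a =>
    obtain ⟨A'', h1, h2⟩ := h.exists_shrink hμ hX hlt
    have e1 := sum_update S β' hμ (a ::ₘ X)
    rw [hX] at e1
    simp only [Multiset.sum_cons] at e1
    obtain ⟨A₃, β₃, h3, h4, h5⟩ := ih _ (by omega) h1 rfl
    exact ⟨A₃, β₃, h3, h4, h5.trans h2⟩

theorem Dominates.reach_zero (h : Dominates S A β A' β' 0) (hst : Stuck S β β' 0) :
    Reach (blocks S A β) (blocks S A' β') := by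
  have hle : ∀ μ ∈ S, ∀ k, trunc (β μ) k ≤ trunc (β' μ) k := by
    intro μ hμ k
    simpa using h.loc μ hμ k
  have hsum : ∀ μ ∈ S, (β μ).sum = (β' μ).sum := by
    intro μ hμ
    apply le_antisymm
    · obtain ⟨N, hN⟩ := exists_le_bound (β μ)
      have := hle μ hμ N
      rw [trunc_eq_sum hN] at this
      exact this.trans (trunc_le_sum _ _)
    · obtain ⟨k, hk, hk'⟩ := hst μ hμ
      rw [trunc_eq_sum hk, zero_mul, add_zero] at hk'
      rw [← hk']
      exact trunc_le_sum _ _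
  refine Reach.add ?_ (Reach.sum _ _ _ fun μ hμ => reach_Hb (hsum μ hμ) (hle μ hμ) μ)
  apply reach_M_of_spread
  apply reflTransGen_spread
  · simpa using h.card.symm
  · have := h.size
    rw [Finset.sum_congr rfl hsum] at this
    omega
  · exact h.glob

/-- The size of the block needed at one eigenvalue to undo a transition of type (4). -/
theorem exists_kappa {X Y : Multiset ℕ} {d : ℕ} (hd : 1 ≤ d)
    (h : ∀ k, trunc X k ≤ trunc Y k + d * k) {k₀ : ℕ} (hk₀ : ∀ b ∈ Y, b ≤ k₀)
    (hst : trunc X k₀ = trunc Y k₀ + d * k₀) :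
    ∃ κ, (∀ k, k + trunc X k ≤ κ + trunc Y k + d * k) ∧ d * κ + Y.sum ≤ X.sum := by
  obtain ⟨d, rfl⟩ : ∃ d', d = d' + 1 := ⟨d - 1, by omega⟩
  have hex : ∃ κ, ∀ k, k + trunc X k ≤ κ + trunc Y k + (d + 1) * k := by
    refine ⟨X.sum, fun k => ?_⟩
    have := trunc_le_sum X k
    have : (d + 1) * k = d * k + k := by ring
    omega
  classical
  refine ⟨Nat.find hex, Nat.find_spec hex, ?_⟩
  have hX := trunc_le_sum X k₀
  rw [hst, trunc_eq_sum hk₀] at hX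
  rcases Nat.eq_zero_or_pos (Nat.find hex) with h0 | h0
  · rw [h0]; omega
  have hmin := Nat.find_min hex (m := Nat.find hex - 1) (by omega)
  push Not at hmin
  obtain ⟨k, hk⟩ := hmin
  generalize Nat.find hex = κ at *
  have hκk : κ ≤ k := by have := h k; omega
  rcases le_total k₀ k with h1 | h1
  · rw [trunc_eq_sum fun b hb => (hk₀ b hb).trans h1] at hk
    have h2 := trunc_le_sum X k
    have h3 : d * κ ≤ d * k := Nat.mul_le_mul_left _ hκk
    have h4 : (d + 1) * k = d * k + k := by ring
    have h5 : (d + 1) * κ = d * κ + κ := by ring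
    omega
  · have h3 : (d + 1) * κ ≤ (d + 1) * k₀ := Nat.mul_le_mul_left _ (hκk.trans h1)
    omega

theorem Dominates.reach_of_stuck (hS : S.Nonempty) (h : Dominates S A β A' β' (d + 1))
    (hst : Stuck S β β' (d + 1)) :
    ∃ A'' β'', Dominates S A β A'' β'' d ∧ Reach (blocks S A'' β'') (blocks S A' β') := by
  classical
  have hcard := h.card
  have hA' : A' ≠ 0 := by rintro rfl; rw [Multiset.card_zero] at hcard; omega
  obtain ⟨p, R, rfl, hp⟩ := exists_max_cons hA'
  have hR : R ≠ 0 := by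
    rintro rfl
    rw [Multiset.card_cons, Multiset.card_zero] at hcard
    omega
  obtain ⟨q, R, rfl, hq⟩ := exists_max_cons hR
  have hqp : q ≤ p := hp q (Multiset.mem_cons_self _ _)
  have hκ : ∀ μ, ∃ κ, μ ∈ S → (∀ k, k + trunc (β μ) k ≤ κ + trunc (β' μ) k + (d + 1) * k) ∧
      (d + 1) * κ + (β' μ).sum ≤ (β μ).sum := by
    intro μ
    by_cases hμ : μ ∈ S
    · obtain ⟨k₀, h1, h2⟩ := hst μ hμ
      obtain ⟨κ, h3⟩ := exists_kappa (by omega) (h.loc μ hμ) h1 h2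
      exact ⟨κ, fun _ => h3⟩
    · exact ⟨0, fun h => absurd h hμ⟩
  choose κ hκ using hκ
  simp only [Multiset.card_cons] at hcard
  have hcard' : R.card = A.card + 2 * d := by omega
  have hdq := h.glob q
  have hRq := defect_add_sum hq
  have hsize := h.size
  simp only [defect_cons, Multiset.sum_cons] at hdq hsize
  have hκsum : ∑ μ ∈ S, κ μ ≤ p + q + 1 := by
    have e1 : (d + 1) * ∑ μ ∈ S, κ μ + ∑ μ ∈ S, (β' μ).sum ≤ ∑ μ ∈ S, (β μ).sum := by
      rw [Finset.mul_sum, ← Finset.sum_add_distrib]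
      exact Finset.sum_le_sum fun μ hμ => (hκ μ hμ).2
    have e2 := card_mul_le_defect A q
    have e3 : R.card * q = A.card * q + 2 * (d * q) := by rw [hcard']; ring
    have e4 : d * q ≤ d * p := Nat.mul_le_mul_left _ hqp
    have e5 : (d + 1) * ∑ μ ∈ S, κ μ ≤ (d + 1) * (p + q + 1) := by
      have : (d + 1) * (p + q + 1) = d * p + d * q + p + q + d + 1 := by ring
      omega
    exact Nat.le_of_mul_le_mul_left e5 (by omega)
  obtain ⟨μ₀, hμ₀⟩ := hS
  obtain ⟨e, he⟩ := Nat.exists_eq_add_of_le hκsum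
  let ks : Option ℂ → ℕ := fun μ => κ μ + if μ = μ₀ then e else 0
  have hks : ∑ μ ∈ S, ks μ = p + q + 1 := by
    simp only [ks]
    rw [Finset.sum_add_distrib, Finset.sum_ite_eq' S μ₀, if_pos hμ₀, he]
  refine ⟨R, fun μ => ks μ ::ₘ β' μ, ⟨hcard', ?_, ?_, ?_⟩, ?_⟩
  · simp only [Multiset.sum_cons]
    rw [Finset.sum_add_distrib, hks]
    omega
  · intro k
    rcases le_or_gt k q with hk | hk
    · have := h.glob k
      simp only [defect_cons] at this
      omega
    · obtain ⟨j, rfl⟩ : ∃ j, k = q + j := ⟨k - q, by omega⟩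
      have e1 := defect_add_le A q j
      have e2 : defect R (q + j) + R.sum = _ := defect_add_sum fun m hm => (hq m hm).trans hk.le
      have e3 : R.card * (q + j) = R.card * q + A.card * j + 2 * (d * j) := by rw [hcard']; ring
      omega
  · intro μ hμ k
    have e1 := (hκ μ hμ).1 k
    have e2 := h.loc μ hμ k
    have e3 : (d + 1) * k = d * k + k := by ring
    have e4 : κ μ ≤ ks μ := Nat.le_add_right _ _
    rw [trunc_cons]
    omega
  · have e1 : blocks S R (fun μ => ks μ ::ₘ β' μ) =
        ((S.toList.map fun μ => (μ, ks μ)).map fun x => Hb x.1 x.2 : List SBlock) +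
          blocks S R β' := by
      simp only [blocks, Multiset.map_cons]
      have : (((S.toList.map fun μ => (μ, ks μ)).map fun x => Hb x.1 x.2 : List SBlock) :
          Multiset SBlock) = ∑ μ ∈ S, {Hb μ (ks μ)} := by
        have h1 := Multiset.sum_map_singleton (S.1.map fun μ => Hb μ (ks μ))
        rw [Multiset.map_map] at h1
        rw [List.map_map, ← Multiset.map_coe, Finset.coe_toList]
        exact h1.symm
      rw [this]
      simp only [← Multiset.singleton_add]
      rw [Finset.sum_add_distrib]
      abel
    rw [e1, blocks_cons, blocks_cons]
    refine Reach.single (Or.inr (Or.inr (Or.inr ⟨_, p, q, blocks S R β', ?_, ?_, rfl, rfl⟩)))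
    · rw [List.map_map]
      simpa [Function.comp_def] using S.nodup_toList
    · rw [List.map_map, ← hks, Finset.sum_eq_multiset_sum, ← Multiset.sum_coe, ← Multiset.map_coe,
        Finset.coe_toList]
      rfl

theorem Dominates.reach (hS : S.Nonempty) (h : Dominates S A β A' β' d) :
    Reach (blocks S A β) (blocks S A' β') := by
  induction d generalizing A' β' with
  | zero =>
    obtain ⟨A₁, β₁, h1, h2, h3⟩ := h.exists_stuck
    exact (h1.reach_zero h2).trans h3
  | succ d ih =>
    obtain ⟨A₁, β₁, h1, h2, h3⟩ := h.exists_stuck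
    obtain ⟨A₂, β₂, h4, h5⟩ := h1.reach_of_stuck hS h2
    exact (ih h4).trans (h5.trans h3)

end Reach

end SkewPencil

namespace SkewPencil
open FormPair

section Glue

variable {S : Finset (Option ℂ)} {A A' : Multiset ℕ} {β β' : Option ℂ → Multiset ℕ}

theorem exists_blocks (s : Multiset SBlock) :
    ∃ S₀ : Finset (Option ℂ), ∀ S, S₀ ⊆ S → ∃ A β, s = blocks S A β := by
  classical
  have key : ∀ (S : Finset (Option ℂ)) A β (μ : Option ℂ) h, μ ∈ S →
      Hb μ h ::ₘ blocks S A β = blocks S A (Function.update β μ (h ::ₘ β μ)) := by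
    intro S A β μ h hμ
    conv_lhs => rw [← Function.update_eq_self μ β]
    rw [blocks_update S A β hμ, blocks_update S A β hμ (h ::ₘ β μ)]
    simp
  induction s using Multiset.induction with
  | empty => exact ⟨∅, fun S _ => ⟨0, fun _ => 0, by simp [blocks]⟩⟩
  | cons b s ih =>
    obtain ⟨S₀, hS₀⟩ := ih
    have hH : ∀ μ h, ∀ S, insert μ S₀ ⊆ S → ∃ A β, Hb μ h ::ₘ s = blocks S A β := by
      intro μ h S hS
      obtain ⟨A, β, rfl⟩ := hS₀ S ((Finset.subset_insert _ _).trans hS)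
      exact ⟨_, _, key S A β μ h (hS (Finset.mem_insert_self _ _))⟩
    cases b with
    | H h μ => exact ⟨insert (some μ) S₀, hH (some μ) h⟩
    | K h => exact ⟨insert none S₀, hH none h⟩
    | M m =>
      refine ⟨S₀, fun S hS => ?_⟩
      obtain ⟨A, β, rfl⟩ := hS₀ S hS
      exact ⟨m ::ₘ A, β, (blocks_cons S m A β).symm⟩

theorem sum_map_blocks (f : SBlock → ℕ) :
    ((blocks S A β).map f).sum =
      (A.map fun m => f (SBlock.M m)).sum + ∑ μ ∈ S, ((β μ).map fun h => f (Hb μ h)).sum := by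
  classical
  rw [blocks, Multiset.map_add, Multiset.sum_add, Multiset.map_map]
  congr 1
  induction S using Finset.induction_on with
  | empty => simp
  | insert a S ha ih =>
    rw [Finset.sum_insert ha, Finset.sum_insert ha, Multiset.map_add, Multiset.sum_add, ih,
      Multiset.map_map]
    rfl

theorem sum_size_blocks :
    ((blocks S A β).map SBlock.size).sum = 2 * A.sum + A.card + 2 * ∑ μ ∈ S, (β μ).sum := by
  rw [sum_map_blocks, Finset.mul_sum]
  congr 1
  · induction A using Multiset.induction with
    | empty => simp
    | cons m A ih =>
      simp only [Multiset.map_cons, Multiset.sum_cons, Multiset.card_cons, ih]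
      simp only [SBlock.size]
      omega
  · refine Finset.sum_congr rfl fun μ _ => ?_
    have hval : ∀ h, (Hb μ h).size = 2 * h := by
      intro h
      cases μ <;> simp [Hb, SBlock.size, two_mul]
    simp only [hval]
    rw [Multiset.sum_map_mul_left, Multiset.map_id']

theorem sum_globalVal_blocks (k : ℕ) :
    ((blocks S A β).map (globalVal k)).sum = defect A k := by
  rw [sum_map_blocks, Finset.sum_eq_zero, add_zero]
  · rfl
  · intro μ _
    rw [Multiset.map_congr (g := fun _ => 0) rfl]
    · simp
    · intro h _
      cases μ <;> rfl

theorem sum_localVal_blocks {o : Option ℂ} (ho : o ∈ S) (k : ℕ) :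
    ((blocks S A β).map (localVal o k)).sum = A.card * k + 2 * trunc (β o) k := by
  classical
  have hval : ∀ μ h, localVal o k (Hb μ h) = if o = μ then 2 * min h k else 0 := by
    intro μ h
    cases μ <;> simp [Hb, localVal]
  rw [sum_map_blocks, Finset.sum_eq_single o]
  · congr 1
    · simp [localVal]
    · simp only [hval, if_true]
      rw [Multiset.sum_map_mul_left]
      rfl
  · intro μ _ hμ
    simp [hval, hμ.symm]
  · exact fun h => absurd ho h

theorem sizeSum_eq (l : List SBlock) : sizeSum l = (l.map SBlock.size).sum := by
  induction l with
  | nil => rfl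
  | cons b l ih => rw [sizeSum, ih, List.map_cons, List.sum_cons]

theorem FormPair.Degen.card_eq {ι κ : Type} [Fintype ι] [DecidableEq ι] [Fintype κ]
    [DecidableEq κ] {P : FormPair ι} {Q : FormPair κ} (h : Degen P Q) :
    Fintype.card ι = Fintype.card κ := by
  obtain ⟨R, hR⟩ := closure_nonempty_iff.1 ⟨Q, h⟩
  exact cong_card hR

theorem reach_of_degen {l l' : List SBlock} (h : Degen (ofList l) (ofList l')) :
    Reach (l : Multiset SBlock) (l' : Multiset SBlock) := by
  classical
  obtain ⟨S₁, h₁⟩ := exists_blocks l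
  obtain ⟨S₂, h₂⟩ := exists_blocks l'
  obtain ⟨S, hS⟩ : ∃ S, S = insert none (S₁ ∪ S₂) := ⟨_, rfl⟩
  obtain ⟨A, β, e1⟩ := h₁ S (by
    rw [hS]; exact Finset.subset_union_left.trans (Finset.subset_insert _ _))
  obtain ⟨A', β', e2⟩ := h₂ S (by
    rw [hS]; exact Finset.subset_union_right.trans (Finset.subset_insert _ _))
  have hne : S.Nonempty := by rw [hS]; exact Finset.insert_nonempty _ _
  have hsize : 2 * A.sum + A.card + 2 * ∑ μ ∈ S, (β μ).sum =
      2 * A'.sum + A'.card + 2 * ∑ μ ∈ S, (β' μ).sum := by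
    rw [← sum_size_blocks, ← sum_size_blocks, ← e1, ← e2]
    have := h.card_eq
    simp only [Fintype.card_fin, sizeSum_eq] at this
    exact this
  have hglob : ∀ k, defect A k ≤ defect A' k := by
    intro k
    rw [← sum_globalVal_blocks (S := S) (β := β), ← sum_globalVal_blocks (S := S) (β := β'),
      ← e1, ← e2]
    have := h.globalNu_le k
    rw [globalNu_ofList, globalNu_ofList] at this
    exact this
  have hloc : ∀ μ ∈ S, ∀ k,
      A.card * k + 2 * trunc (β μ) k ≤ A'.card * k + 2 * trunc (β' μ) k := by
    intro μ hμ k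
    rw [← sum_localVal_blocks hμ, ← sum_localVal_blocks hμ, ← e1, ← e2]
    have := h.localNu_le μ k
    rw [localNu_ofList, localNu_ofList] at this
    exact this
  have hcard : A.card ≤ A'.card := by
    by_contra hlt
    push Not at hlt
    obtain ⟨μ, hμ⟩ := hne
    have e3 := hloc μ hμ (2 * (β' μ).sum + 1)
    have e4 := trunc_le_sum (β' μ) (2 * (β' μ).sum + 1)
    have e5 : (A'.card + 1) * (2 * (β' μ).sum + 1) ≤ A.card * (2 * (β' μ).sum + 1) :=
      Nat.mul_le_mul_right _ hlt
    rw [add_mul, one_mul] at e5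
    omega
  obtain ⟨d, hd⟩ : ∃ d, A'.card = A.card + 2 * d := ⟨(A'.card - A.card) / 2, by omega⟩
  rw [e1, e2]
  refine Dominates.reach hne (d := d) ⟨hd, by omega, hglob, fun μ hμ k => ?_⟩
  have := hloc μ hμ k
  rw [hd, add_mul, mul_assoc] at this
  omega

theorem cong_ofList_append_empty (l z : List SBlock) (hz : ∀ b ∈ z, b.size = 0) :
    Cong (ofList l) (ofList (l ++ z)) := by
  refine Cong.trans ?_ (ofList_append l z)
  have h0 : sizeSum z = 0 := by
    rw [sizeSum_eq]
    apply List.sum_eq_zero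
    intro x hx
    obtain ⟨b, hb, rfl⟩ := List.mem_map.1 hx
    exact hz b hb
  have : IsEmpty (Fin (sizeSum z)) := by rw [h0]; exact Fin.isEmpty
  exact (ds_empty _ _).symm

theorem weakRepresentsC_add_empty {n : ℕ} {P : Pencil n n} {s z : Multiset SBlock}
    (hs : WeakRepresentsC P s) (hz : ∀ b ∈ z, b.size = 0) : WeakRepresentsC P (s + z) := by
  rw [weakRepresentsC_iff] at hs ⊢
  obtain ⟨l, rfl, hl⟩ := hs
  refine ⟨l ++ z.toList, ?_, ?_⟩
  · rw [← Multiset.coe_add, Multiset.coe_toList]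
  · exact (cong_ofList_append_empty l z.toList (by simpa using hz)).symm.trans hl

end Glue

section Gram

variable {ι κ : Type} {V : Type} [AddCommGroup V] [Module ℂ V]

/-- The pair of Gram matrices of two bilinear forms with respect to a family of vectors. -/
def gram (A B : V →ₗ[ℂ] V →ₗ[ℂ] ℂ) (b : ι → V) : FormPair ι :=
  (Matrix.of fun i j => A (b i) (b j), Matrix.of fun i j => B (b i) (b j))

/-- A pair of bilinear forms which has a basis in which it is a direct sum of canonical blocks,
up to congruence of the Gram matrices. -/
def HasCanonicalForm (A B : V →ₗ[ℂ] V →ₗ[ℂ] ℂ) : Prop :=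
  ∃ (ι : Type) (_ : Fintype ι) (_ : DecidableEq ι) (b : Module.Basis ι ℂ V) (l : List SBlock),
    Cong (gram A B b) (ofList l)

/-- Skew-symmetry of a bilinear form. -/
def IsSkewForm (A : V →ₗ[ℂ] V →ₗ[ℂ] ℂ) : Prop := ∀ x y, A x y = -A y x

theorem IsSkewForm.self {A : V →ₗ[ℂ] V →ₗ[ℂ] ℂ} (hA : IsSkewForm A) (x : V) : A x x = 0 :=
  self_eq_neg.1 (hA x x)

theorem IsSkewForm.domRestrict {A : V →ₗ[ℂ] V →ₗ[ℂ] ℂ} (hA : IsSkewForm A) (U : Submodule ℂ V) :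
    IsSkewForm (A.domRestrict₁₂ U U) := fun x y => hA x y

theorem hasCanonicalForm_of_isCompl {A B : V →ₗ[ℂ] V →ₗ[ℂ] ℂ} (hA : IsSkewForm A)
    (hB : IsSkewForm B) {U Y : Submodule ℂ V} (hUY : IsCompl U Y)
    (oA : ∀ u ∈ U, ∀ y ∈ Y, A u y = 0) (oB : ∀ u ∈ U, ∀ y ∈ Y, B u y = 0)
    (hU : HasCanonicalForm (A.domRestrict₁₂ U U) (B.domRestrict₁₂ U U))
    (hY : HasCanonicalForm (A.domRestrict₁₂ Y Y) (B.domRestrict₁₂ Y Y)) :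
    HasCanonicalForm A B := by
  obtain ⟨ι, _, _, b, l, hl⟩ := hU
  obtain ⟨κ, _, _, c, l', hl'⟩ := hY
  refine ⟨ι ⊕ κ, inferInstance, inferInstance,
    (b.prod c).map (Submodule.prodEquivOfIsCompl U Y hUY), l ++ l', ?_⟩
  have hg : gram A B ((b.prod c).map (Submodule.prodEquivOfIsCompl U Y hUY)) =
      ds (gram (A.domRestrict₁₂ U U) (B.domRestrict₁₂ U U) b)
        (gram (A.domRestrict₁₂ Y Y) (B.domRestrict₁₂ Y Y) c) := by
    refine Prod.ext ?_ ?_ <;> ext (i | i) (j | j) <;>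
      simp [gram, ds, Matrix.fromBlocks]
    · rfl
    · exact oA _ (b i).2 _ (c j).2
    · rw [hA, oA _ (b j).2 _ (c i).2, neg_zero]
    · rfl
    · rfl
    · exact oB _ (b i).2 _ (c j).2
    · rw [hB, oB _ (b j).2 _ (c i).2, neg_zero]
    · rfl
  rw [hg]
  exact (hl.ds hl').trans (ofList_append l l')

/-- Split off the span of a family with nondegenerate Gram pair. -/
theorem exists_split [Fintype ι] [DecidableEq ι] {A B : V →ₗ[ℂ] V →ₗ[ℂ] ℂ} (hA : IsSkewForm A)
    (hB : IsSkewForm B) (b : ι → V)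
    (nondeg : ∀ c : ι → ℂ, (∀ i, A (b i) (∑ j, c j • b j) = 0) →
      (∀ i, B (b i) (∑ j, c j • b j) = 0) → c = 0)
    (proj : ∀ x, ∃ c : ι → ℂ, (∀ i, A (b i) (x - ∑ j, c j • b j) = 0) ∧
      ∀ i, B (b i) (x - ∑ j, c j • b j) = 0)
    (l : List SBlock) (hl : Cong (gram A B b) (ofList l)) (hne : Nonempty ι)
    (ih : ∀ Y : Submodule ℂ V, Y ≠ ⊤ →
      HasCanonicalForm (A.domRestrict₁₂ Y Y) (B.domRestrict₁₂ Y Y)) :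
    HasCanonicalForm A B := by
  have hli : LinearIndependent ℂ b := by
    rw [Fintype.linearIndependent_iff]
    intro c hc i
    rw [nondeg c (by simp [hc]) (by simp [hc])]
    rfl
  let Y : Submodule ℂ V := (⨅ i, LinearMap.ker (A (b i))) ⊓ ⨅ i, LinearMap.ker (B (b i))
  have hYm : ∀ x, x ∈ Y ↔ (∀ i, A (b i) x = 0) ∧ ∀ i, B (b i) x = 0 := by
    intro x
    simp [Y, Submodule.mem_iInf]
  have hcompl : IsCompl (Submodule.span ℂ (Set.range b)) Y := by
    constructor
    · rw [Submodule.disjoint_def]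
      intro x hx hxY
      obtain ⟨c, rfl⟩ := (Submodule.mem_span_range_iff_exists_fun ℂ).1 hx
      rw [hYm] at hxY
      rw [nondeg c hxY.1 hxY.2]
      simp
    · rw [codisjoint_iff, eq_top_iff]
      intro x _
      obtain ⟨c, h1, h2⟩ := proj x
      rw [Submodule.mem_sup]
      exact ⟨∑ j, c j • b j, (Submodule.mem_span_range_iff_exists_fun ℂ).2 ⟨c, rfl⟩,
        x - ∑ j, c j • b j, (hYm _).2 ⟨h1, h2⟩, by abel⟩
  refine hasCanonicalForm_of_isCompl hA hB hcompl ?_ ?_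
    ⟨ι, inferInstance, inferInstance, Module.Basis.span hli, l, ?_⟩ (ih Y ?_)
  · intro u hu y hy
    obtain ⟨c, rfl⟩ := (Submodule.mem_span_range_iff_exists_fun ℂ).1 hu
    simp [((hYm y).1 hy).1]
  · intro u hu y hy
    obtain ⟨c, rfl⟩ := (Submodule.mem_span_range_iff_exists_fun ℂ).1 hu
    simp [((hYm y).1 hy).2]
  · convert hl using 1
    refine Prod.ext ?_ ?_ <;> ext i j <;> simp [gram, Module.Basis.span_apply] <;> rfl
  · intro hY
    obtain ⟨i⟩ := hne
    have hb : b i ∈ Y := hY ▸ Submodule.mem_top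
    have := (Submodule.disjoint_def.1 hcompl.disjoint) (b i) (Submodule.subset_span ⟨i, rfl⟩) hb
    exact hli.ne_zero i this

end Gram

section Regular

variable {V : Type} [AddCommGroup V] [Module ℂ V] {D A B : V →ₗ[ℂ] V →ₗ[ℂ] ℂ}
  {N : Module.End ℂ V}

theorem form_sum_smul {ι : Type} [Fintype ι] (A B : V →ₗ[ℂ] V →ₗ[ℂ] ℂ) (b : ι → V) (c : ι → ℂ)
    (i : ι) : B (b i) (∑ j, c j • b j) = ((gram A B b).2 *ᵥ c) i := by
  simp [gram, Matrix.mulVec, dotProduct, mul_comm]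

theorem form_pow_left (sa : ∀ x y, D (N x) y = D x (N y)) (i : ℕ) (x y : V) :
    D ((N ^ i) x) y = D x ((N ^ i) y) := by
  induction i generalizing x y with
  | zero => rfl
  | succ i ih => rw [pow_succ, Module.End.mul_apply, ih, sa, ← Module.End.mul_apply, pow_mul_comm',
      Module.End.mul_apply]

theorem form_pow_pow (sa : ∀ x y, D (N x) y = D x (N y)) (i j : ℕ) (x y : V) :
    D ((N ^ i) x) ((N ^ j) y) = D ((N ^ (i + j)) x) y := by
  rw [← form_pow_left sa, ← Module.End.mul_apply, ← pow_add, add_comm]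

theorem form_pow_pow_self (hD : IsSkewForm D) (sa : ∀ x y, D (N x) y = D x (N y)) (i j : ℕ)
    (x : V) : D ((N ^ i) x) ((N ^ j) x) = 0 := by
  refine self_eq_neg.1 ?_
  conv_lhs => rw [hD, form_pow_pow sa, add_comm, ← form_pow_pow sa]

theorem exists_dual_vector (sa : ∀ x y, D (N x) y = D x (N y))
    (inj : ∀ x, (∀ y, D x y = 0) → x = 0) {h : ℕ} (hN : N ^ (h + 1) = 0) {x : V}
    (hx : (N ^ h) x ≠ 0) (r : ℕ) (hr : r ≤ h) :
    ∃ y, D ((N ^ h) x) y = 1 ∧ ∀ i, h - r ≤ i → i < h → D ((N ^ i) x) y = 0 := by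
  have hz : ∀ i, h < i → (N ^ i) x = 0 := by
    intro i hi
    obtain ⟨d, rfl⟩ := Nat.exists_eq_add_of_lt hi
    rw [show h + d + 1 = d + (h + 1) by ring, pow_add, hN]
    simp
  induction r with
  | zero =>
    have : ∃ y, D ((N ^ h) x) y ≠ 0 := by
      by_contra! hc
      exact hx (inj _ hc)
    obtain ⟨y, hy⟩ := this
    refine ⟨(D ((N ^ h) x) y)⁻¹ • y, by simp [hy], fun i h1 h2 => by omega⟩
  | succ r ih =>
    obtain ⟨y, h1, h2⟩ := ih (by omega)
    refine ⟨y - D ((N ^ (h - (r + 1))) x) y • (N ^ (r + 1)) y, ?_, ?_⟩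
    · rw [map_sub, map_smul, form_pow_pow sa, hz (h + (r + 1)) (by omega), h1]
      simp
    · intro i hi hih
      rw [map_sub, map_smul, form_pow_pow sa]
      rcases eq_or_lt_of_le hi with rfl | hlt
      · rw [show h - (r + 1) + (r + 1) = h by omega, h1]
        simp
      · rw [hz (i + (r + 1)) (by omega), h2 i (by omega) hih]
        simp

theorem exists_jordan_chain_pair [Nontrivial V] (hD : IsSkewForm D)
    (sa : ∀ x y, D (N x) y = D x (N y))
    (inj : ∀ x, (∀ y, D x y = 0) → x = 0) (hN : IsNilpotent N) :
    ∃ (h : ℕ) (b : Fin (h + 1) ⊕ Fin (h + 1) → V),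
      gram (D ∘ₗ N) D b = sk (shiftPair (h + 1) (h + 1)) ∧
      ∀ i, N (b i) = 0 ∨ ∃ j, N (b i) = b j := by
  obtain ⟨h, hh⟩ : ∃ h, nilpotencyClass N = h + 1 :=
    Nat.exists_eq_succ_of_ne_zero (pos_nilpotencyClass_iff.2 hN).ne'
  have h0 := pow_nilpotencyClass hN
  have h1 := pow_pred_nilpotencyClass hN
  rw [hh] at h0 h1
  simp only [Nat.add_sub_cancel] at h1
  obtain ⟨x, hx⟩ : ∃ x, (N ^ h) x ≠ 0 := by
    by_contra! hc
    exact h1 (LinearMap.ext hc)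
  obtain ⟨y, hy1, hy2⟩ := exists_dual_vector sa inj h0 hx h le_rfl
  have hz : ∀ i, h < i → ∀ z, (N ^ i) z = 0 := by
    intro i hi z
    obtain ⟨d, rfl⟩ := Nat.exists_eq_add_of_lt hi
    rw [show h + d + 1 = d + (h + 1) by ring, pow_add, h0]
    simp
  have hxy : ∀ i j : ℕ, j ≤ h → D ((N ^ i) x) ((N ^ (h - j)) y) = if j = i then 1 else 0 := by
    intro i j hj
    rw [form_pow_pow sa]
    split_ifs with hij
    · rw [← hij, show j + (h - j) = h by omega, hy1]
    · rcases lt_or_ge i j with hlt | hge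
      · exact hy2 _ (by omega) (by omega)
      · rw [hz _ (by omega)]
        simp
  have hstep : ∀ i z, N ((N ^ i) z) = (N ^ (i + 1)) z := by
    intro i z
    rw [pow_succ', Module.End.mul_apply]
  refine ⟨h, Sum.elim (fun i => (N ^ (i : ℕ)) x) fun j => (N ^ (h - j)) y, ?_, ?_⟩
  · refine Prod.ext ?_ ?_ <;> ext (i | i) (j | j)
    · simp [gram, sk, hstep, form_pow_pow_self hD sa]
    · simp only [gram, sk, of_apply, LinearMap.comp_apply, Sum.elim_inl, Sum.elim_inr, hstep,
        fromBlocks_apply₁₂, shiftPair]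
      exact hxy _ _ (by omega)
    · simp only [gram, sk, of_apply, LinearMap.comp_apply, Sum.elim_inl, Sum.elim_inr,
        fromBlocks_apply₂₁, shiftPair, Matrix.neg_apply, transpose_apply]
      rw [sa, hD, hstep, hxy _ _ (by omega)]
    · simp [gram, sk, hstep, form_pow_pow_self hD sa]
    · simp [gram, sk, form_pow_pow_self hD sa]
    · simp only [gram, sk, of_apply, Sum.elim_inl, Sum.elim_inr,
        fromBlocks_apply₁₂, shiftPair]
      exact hxy _ _ (by omega)
    · simp only [gram, sk, of_apply, Sum.elim_inl, Sum.elim_inr,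
        fromBlocks_apply₂₁, shiftPair, Matrix.neg_apply, transpose_apply]
      rw [hD, hxy _ _ (by omega)]
    · simp [gram, sk, form_pow_pow_self hD sa]
  · rintro (i | j)
    · by_cases hi : (i : ℕ) < h
      · exact Or.inr ⟨Sum.inl ⟨i + 1, by omega⟩, hstep _ _⟩
      · exact Or.inl ((hstep _ _).trans (hz _ (by omega) _))
    · by_cases hj : (j : ℕ) = 0
      · exact Or.inl ((hstep _ _).trans (hz _ (by omega) _))
      · refine Or.inr ⟨Sum.inr ⟨j - 1, by omega⟩, (hstep _ _).trans ?_⟩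
        simp only [Sum.elim_inr]
        congr 2
        omega

theorem hasCanonicalForm_of_nilpotent [Nontrivial V] (hA : IsSkewForm A) (hB : IsSkewForm B)
    (hD : IsSkewForm D) (sa : ∀ x y, D (N x) y = D x (N y))
    (inj : ∀ x, (∀ y, D x y = 0) → x = 0) (hN : IsNilpotent N) (o : Option ℂ)
    (hg : ∀ {ι : Type} (b : ι → V), gram A B b = twist o (gram (D ∘ₗ N) D b))
    (orth : ∀ x y, D (N x) y = 0 → D x y = 0 → A x y = 0 ∧ B x y = 0)
    (orth' : ∀ x y, A x y = 0 → B x y = 0 → D x y = 0)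
    (ih : ∀ Y : Submodule ℂ V, Y ≠ ⊤ →
      HasCanonicalForm (A.domRestrict₁₂ Y Y) (B.domRestrict₁₂ Y Y)) :
    HasCanonicalForm A B := by
  obtain ⟨h, b, hb, hbN⟩ := exists_jordan_chain_pair hD sa inj hN
  obtain ⟨G, hG⟩ : ∃ G, G = (sk (shiftPair (h + 1) (h + 1))).2 := ⟨_, rfl⟩
  have hGG : G * G = -1 := by
    rw [hG, sk, shiftPair_self_snd]
    simp [fromBlocks_multiply, ← fromBlocks_one, fromBlocks_neg]
  have hform : ∀ c i, D (b i) (∑ j, c j • b j) = (G *ᵥ c) i := by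
    intro c i
    rw [form_sum_smul (D ∘ₗ N) D, hb, hG]
  refine exists_split hA hB b ?_ ?_ [Hb o (h + 1)] ?_ inferInstance ih
  · intro c h1 h2
    have : G *ᵥ c = 0 := by
      ext i
      rw [← hform]
      exact orth' _ _ (h1 i) (h2 i)
    have h3 : G *ᵥ (G *ᵥ c) = 0 := by rw [this, mulVec_zero]
    rwa [mulVec_mulVec, hGG, neg_mulVec, one_mulVec, neg_eq_zero] at h3
  · intro x
    obtain ⟨c, hc⟩ : ∃ c, c = -(G *ᵥ fun i => D (b i) x) := ⟨_, rfl⟩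
    have hcx : ∀ i, D (b i) (x - ∑ j, c j • b j) = 0 := by
      intro i
      rw [map_sub, hform, hc, mulVec_neg, mulVec_mulVec, hGG, neg_mulVec, one_mulVec, neg_neg,
        sub_self]
    have := fun i => orth (b i) (x - ∑ j, c j • b j) (by
      rcases hbN i with h0 | ⟨j, hj⟩
      · rw [h0]; simp
      · rw [hj, hcx]) (hcx i)
    exact ⟨c, fun i => (this i).1, fun i => (this i).2⟩
  · rw [hg, hb]
    exact (cong_Hb o (h + 1)).trans (ofList_singleton _)

end Regular

section Fitting

variable {V : Type} [AddCommGroup V] [Module ℂ V] [FiniteDimensional ℂ V]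
  {D A B : V →ₗ[ℂ] V →ₗ[ℂ] ℂ}

theorem exists_representing_endomorphism (inj : ∀ x, (∀ y, D x y = 0) → x = 0)
    (B : V →ₗ[ℂ] V →ₗ[ℂ] ℂ) : ∃ T : Module.End ℂ V, ∀ x y, D (T x) y = B x y := by
  have hinj : Function.Injective D := by
    rw [injective_iff_map_eq_zero]
    intro x hx
    exact inj x fun y => by rw [hx]; rfl
  let e := LinearMap.linearEquivOfInjective D hinj (Subspace.dual_finrank_eq (K := ℂ)).symm
  refine ⟨e.symm.toLinearMap ∘ₗ B, fun x y => ?_⟩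
  have : D (e.symm (B x)) = B x := e.apply_symm_apply (B x)
  rw [← this]
  rfl

theorem isNilpotent_or_injective_or_hasCanonicalForm {N : Module.End ℂ V} (hA : IsSkewForm A)
    (hB : IsSkewForm B) (sa : ∀ x y, D (N x) y = D x (N y))
    (orth : ∀ x y, D (N x) y = 0 → D x y = 0 → A x y = 0 ∧ B x y = 0)
    (ih : ∀ Y : Submodule ℂ V, Y ≠ ⊤ →
      HasCanonicalForm (A.domRestrict₁₂ Y Y) (B.domRestrict₁₂ Y Y)) :
    IsNilpotent N ∨ (∀ x, N x = 0 → x = 0) ∨ HasCanonicalForm A B := by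
  obtain ⟨n, hn, hn1⟩ := (N.eventually_isCompl_ker_pow_range_pow.and
    (Filter.eventually_ge_atTop 1)).exists
  by_cases h1 : LinearMap.ker (N ^ n) = ⊤
  · exact Or.inl ⟨n, LinearMap.ker_eq_top.1 h1⟩
  by_cases h2 : LinearMap.range (N ^ n) = ⊤
  · refine Or.inr (Or.inl fun x hx => ?_)
    have hk : LinearMap.ker (N ^ n) = ⊥ := by
      have := hn.disjoint
      rwa [h2, disjoint_top] at this
    have : x ∈ LinearMap.ker (N ^ n) := by
      obtain ⟨m, rfl⟩ := Nat.exists_eq_add_of_le' hn1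
      rw [LinearMap.mem_ker, pow_succ, Module.End.mul_apply, hx, map_zero]
    rwa [hk, Submodule.mem_bot] at this
  · have key : ∀ u ∈ LinearMap.ker (N ^ n), ∀ y ∈ LinearMap.range (N ^ n), D u y = 0 := by
      rintro u hu _ ⟨z, rfl⟩
      rw [← form_pow_left sa, LinearMap.mem_ker.1 hu]
      simp
    have hN : ∀ u ∈ LinearMap.ker (N ^ n), N u ∈ LinearMap.ker (N ^ n) := by
      intro u hu
      rw [LinearMap.mem_ker, ← Module.End.mul_apply, pow_mul_comm', Module.End.mul_apply,
        LinearMap.mem_ker.1 hu, map_zero]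
    exact Or.inr (Or.inr (hasCanonicalForm_of_isCompl hA hB hn
      (fun u hu y hy => (orth u y (key _ (hN u hu) y hy) (key u hu y hy)).1)
      (fun u hu y hy => (orth u y (key _ (hN u hu) y hy) (key u hu y hy)).2) (ih _ h1) (ih _ h2)))

theorem hasCanonicalForm_of_regular [Nontrivial V] (hA : IsSkewForm A) (hB : IsSkewForm B)
    (μ₀ : ℂ) (reg : ∀ x, (∀ y, A x y = μ₀ * B x y) → x = 0)
    (ih : ∀ Y : Submodule ℂ V, Y ≠ ⊤ →
      HasCanonicalForm (A.domRestrict₁₂ Y Y) (B.domRestrict₁₂ Y Y)) :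
    HasCanonicalForm A B := by
  by_cases hBi : ∀ x, (∀ y, B x y = 0) → x = 0
  · obtain ⟨T, hT⟩ := exists_representing_endomorphism hBi A
    obtain ⟨μ, hμ⟩ := Module.End.exists_eigenvalue T
    obtain ⟨x, hx⟩ := hμ.exists_hasEigenvector
    obtain ⟨N, hNdef⟩ : ∃ N, N = T - algebraMap ℂ _ μ := ⟨_, rfl⟩
    have hN : ∀ x y, B (N x) y = A x y - μ * B x y := by
      intro x y
      simp [hNdef, hT]
    have sa : ∀ x y, B (N x) y = B x (N y) := by
      intro x y
      rw [hB x, hN, hN, hA x, hB x]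
      ring
    have orth : ∀ x y, B (N x) y = 0 → B x y = 0 → A x y = 0 ∧ B x y = 0 := by
      intro x y h1 h2
      rw [hN, h2, mul_zero, sub_zero] at h1
      exact ⟨h1, h2⟩
    rcases isNilpotent_or_injective_or_hasCanonicalForm hA hB sa orth ih with h | h | h
    · refine hasCanonicalForm_of_nilpotent hA hB hB sa hBi h (some μ) ?_ orth
        (fun x y _ h => h) ih
      intro ι b
      refine Prod.ext ?_ ?_
      · ext i j
        simp [gram, twist, hN]
      · rfl
    · refine absurd (h x ?_) hx.2
      rw [hNdef, LinearMap.sub_apply, hx.apply_eq_smul, Module.algebraMap_end_apply, sub_self]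
    · exact h
  by_cases hAi : ∀ x, (∀ y, A x y = 0) → x = 0
  · obtain ⟨T, hT⟩ := exists_representing_endomorphism hAi B
    have sa : ∀ x y, A (T x) y = A x (T y) := by
      intro x y
      rw [hA x, hT, hT, hB x]
    have orth : ∀ x y, A (T x) y = 0 → A x y = 0 → A x y = 0 ∧ B x y = 0 :=
      fun x y h1 h2 => ⟨h2, by rwa [hT] at h1⟩
    rcases isNilpotent_or_injective_or_hasCanonicalForm hA hB sa orth ih with h | h | h
    · refine hasCanonicalForm_of_nilpotent hA hB hA sa hAi h none ?_ orth
        (fun x y h _ => h) ih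
      intro ι b
      refine Prod.ext rfl ?_
      ext i j
      simp [gram, twist, hT]
    · refine absurd (fun x hx => h x (hAi _ fun y => ?_)) hBi
      rw [hT, hx]
    · exact h
  · have hD : ∀ x y, (A - μ₀ • B) x y = A x y - μ₀ * B x y := fun x y => by simp
    have hDi : ∀ x, (∀ y, (A - μ₀ • B) x y = 0) → x = 0 := fun x hx => reg x fun y =>
      sub_eq_zero.1 ((hD x y).symm.trans (hx y))
    obtain ⟨T, hT⟩ := exists_representing_endomorphism hDi B
    have hDs : IsSkewForm (A - μ₀ • B) := by
      intro x y
      rw [hD, hD, hA x, hB x]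
      ring
    have sa : ∀ x y, (A - μ₀ • B) (T x) y = (A - μ₀ • B) x (T y) := by
      intro x y
      rw [hDs x, hT, hT, hB x]
    have orth : ∀ x y, (A - μ₀ • B) (T x) y = 0 → (A - μ₀ • B) x y = 0 →
        A x y = 0 ∧ B x y = 0 := by
      intro x y h1 h2
      rw [hT] at h1
      rw [hD, h1, mul_zero, sub_zero] at h2
      exact ⟨h2, h1⟩
    rcases isNilpotent_or_injective_or_hasCanonicalForm hA hB sa orth ih with h | h | h
    · have hu : IsUnit (1 + μ₀ • T) := (h.smul μ₀).isUnit_one_add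
      refine absurd (fun x hx => ?_) hAi
      refine ((Module.End.isUnit_iff _).1 hu).1 ((hDi _ fun y => ?_).trans (map_zero _).symm)
      rw [LinearMap.add_apply, map_add, LinearMap.add_apply, LinearMap.smul_apply, map_smul,
        LinearMap.smul_apply, hT, Module.End.one_apply, hD, hx, smul_eq_mul]
      ring
    · refine absurd (fun x hx => h x (hDi _ fun y => ?_)) hBi
      rw [hT, hx]
    · exact h

end Fitting

section Singular

variable {V : Type} [AddCommGroup V] [Module ℂ V] {A B : V →ₗ[ℂ] V →ₗ[ℂ] ℂ}

/-- The coefficients of a polynomial vector of degree at most `m` annihilated by the pencil. -/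
structure SingularChain (A B : V →ₗ[ℂ] V →ₗ[ℂ] ℂ) (m : ℕ) (v : ℕ → V) : Prop where
  zero : A (v 0) = 0
  succ : ∀ i, A (v (i + 1)) = B (v i)
  bound : ∀ i, m < i → v i = 0

theorem exists_singularChain [FiniteDimensional ℂ V]
    (sing : ∀ μ : ℂ, ∃ x, (∀ y, A x y = μ * B x y) ∧ x ≠ 0) :
    ∃ m v, SingularChain A B m v ∧ ∃ i, v i ≠ 0 := by
  classical
  let b := Module.finBasis ℂ V
  let M : Matrix (Fin (Module.finrank ℂ V)) (Fin (Module.finrank ℂ V)) (Polynomial ℂ) :=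
    Matrix.of fun i j =>
    Polynomial.C (A (b j) (b i)) - Polynomial.X * Polynomial.C (B (b j) (b i))
  have hdet : M.det = 0 := by
    refine Polynomial.funext fun μ => ?_
    rw [← Polynomial.coe_evalRingHom, RingHom.map_det, map_zero]
    obtain ⟨x, hx, hx0⟩ := sing μ
    refine Matrix.exists_mulVec_eq_zero_iff.1 ⟨b.repr x, fun h => hx0 ?_, ?_⟩
    · have : b.repr x = 0 := Finsupp.ext fun i => congrFun h i
      simpa using this
    · ext i
      have h1 : A x (b i) = μ * B x (b i) := hx (b i)
      rw [← b.sum_repr x] at h1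
      simp only [map_sum, map_smul, LinearMap.sum_apply, LinearMap.smul_apply, smul_eq_mul,
        Finset.mul_sum] at h1
      rw [← sub_eq_zero, ← Finset.sum_sub_distrib] at h1
      simp only [mulVec, dotProduct, RingHom.mapMatrix_apply, Matrix.map_apply, M, of_apply,
        Polynomial.coe_evalRingHom, Polynomial.eval_sub, Polynomial.eval_mul, Polynomial.eval_C,
        Polynomial.eval_X, Pi.zero_apply]
      rw [← h1]
      exact Finset.sum_congr rfl fun j _ => by ring
  obtain ⟨v, hv0, hv⟩ := Matrix.exists_mulVec_eq_zero_iff.2 hdet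
  have hA : ∀ (A : V →ₗ[ℂ] V →ₗ[ℂ] ℂ) k i, A (∑ j, (v j).coeff k • b j) (b i) =
      ∑ j, A (b j) (b i) * (v j).coeff k := by
    intro A k i
    simp [mul_comm]
  refine ⟨Finset.univ.sup fun j => (v j).natDegree, fun k => ∑ j, (v j).coeff k • b j,
    ⟨?_, ?_, ?_⟩, ?_⟩
  · refine b.ext fun i => ?_
    have := congrArg (fun p => Polynomial.coeff p 0) (congrFun hv i)
    rw [hA]
    simpa [mulVec, dotProduct, M, sub_mul, mul_assoc] using this
  · intro k
    refine b.ext fun i => ?_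
    have := congrArg (fun p => Polynomial.coeff p (k + 1)) (congrFun hv i)
    rw [hA, hA]
    simpa [mulVec, dotProduct, M, sub_mul, mul_assoc, sub_eq_zero] using this
  · intro k hk
    refine Finset.sum_eq_zero fun j _ => ?_
    rw [Polynomial.coeff_eq_zero_of_natDegree_lt, zero_smul]
    exact (Finset.le_sup (f := fun j => (v j).natDegree) (Finset.mem_univ j)).trans_lt hk
  · by_contra! hc
    refine hv0 (funext fun j => Polynomial.ext fun k => ?_)
    exact Fintype.linearIndependent_iff.1 b.linearIndependent _ (hc k) j

theorem exists_minimal_singularChain (h : ∃ m v, SingularChain A B m v ∧ ∃ i, v i ≠ 0) :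
    ∃ m v, SingularChain A B m v ∧ v 0 ≠ 0 ∧
      ∀ m' < m, ∀ u, SingularChain A B m' u → u 0 = 0 := by
  classical
  obtain ⟨v, hv, i, hi⟩ := Nat.find_spec h
  have hmin : ∀ m' < Nat.find h, ∀ u, SingularChain A B m' u → u 0 = 0 := by
    intro m' hm' u hu
    by_contra hc
    exact Nat.find_min h hm' ⟨u, hu, 0, hc⟩
  refine ⟨Nat.find h, v, hv, fun h0 => ?_, hmin⟩
  have hi0 : i ≠ 0 := fun hc => hi (hc ▸ h0)
  have hle : i ≤ Nat.find h := not_lt.1 fun hc => hi (hv.bound i hc)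
  refine Nat.find_min h (m := Nat.find h - 1) (by omega)
    ⟨fun j => v (j + 1), ⟨?_, fun j => hv.succ _, fun j hj => hv.bound _ (by omega)⟩, i - 1, ?_⟩
  · rw [hv.succ, h0, map_zero]
  · change v (i - 1 + 1) ≠ 0
    rwa [Nat.sub_add_cancel (by omega)]

theorem exists_dual_chain [FiniteDimensional ℂ V] (hA : IsSkewForm A) (hB : IsSkewForm B) {k : ℕ}
    {v : ℕ → V} (hv : A (v 0) = 0) (hv0 : v 0 ≠ 0)
    (hmin : ∀ u, SingularChain A B k u → u 0 = 0) :
    ∃ w : ℕ → V, B (v 0) (w 0) = 1 ∧ ∀ j < k, B (w (j + 1)) = A (w j) := by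
  classical
  let Θ : (Fin (k + 1) → V) →ₗ[ℂ] (Fin k → Module.Dual ℂ V) :=
    LinearMap.pi fun j => B ∘ₗ LinearMap.proj j.succ - A ∘ₗ LinearMap.proj j.castSucc
  have hΘ : ∀ w j, Θ w j = B (w j.succ) - A (w j.castSucc) := fun w j => rfl
  let f : Module.Dual ℂ (Fin (k + 1) → V) := B (v 0) ∘ₗ LinearMap.proj 0
  by_cases hf : f ∈ (LinearMap.ker Θ).dualAnnihilator
  · exfalso
    rw [← LinearMap.range_dualMap_eq_dualAnnihilator_ker] at hf
    obtain ⟨g, hg⟩ := hf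
    have hx : ∀ j : Fin k, ∃ x : V, ∀ φ : Module.Dual ℂ V, g (Pi.single j φ) = φ x := by
      intro j
      obtain ⟨x, hx⟩ := (Module.bijective_dual_eval ℂ V).2
        (g ∘ₗ LinearMap.single ℂ (fun _ => Module.Dual ℂ V) j)
      exact ⟨x, fun φ => (LinearMap.congr_fun hx φ).symm⟩
    choose x hx using hx
    have hgx : ∀ ψ, g ψ = ∑ j, ψ j (x j) := by
      intro ψ
      conv_lhs => rw [← Finset.univ_sum_single ψ]
      rw [map_sum]
      exact Finset.sum_congr rfl fun j _ => hx j _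
    have hw : ∀ w : Fin (k + 1) → V,
        B (v 0) (w 0) = ∑ j : Fin k, (B (w j.succ) (x j) - A (w j.castSucc) (x j)) := by
      intro w
      have := LinearMap.congr_fun hg w
      rw [LinearMap.dualMap_apply, hgx] at this
      rw [show B (v 0) (w 0) = f w from rfl, ← this]
      rfl
    let u : ℕ → V := fun i => if i = 0 then v 0 else if hi : i - 1 < k then x ⟨i - 1, hi⟩ else 0
    have hu : ∀ j : Fin k, u (j + 1) = x j := by
      intro j
      simp [u]
    refine hv0 (hmin u ⟨hv, fun i => ?_, fun i hi => ?_⟩)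
    · ext y
      by_cases hi : i < k + 1
      · have h1 := hw (Pi.single ⟨i, hi⟩ y)
        have hsum1 : ∑ j : Fin k, B ((Pi.single ⟨i, hi⟩ y : Fin (k + 1) → V) j.succ) (x j) =
            if i = 0 then 0 else B y (u i) := by
          split_ifs with h0
          · refine Finset.sum_eq_zero fun j _ => ?_
            rw [Pi.single_eq_of_ne (by simp [Fin.ext_iff, h0])]
            simp
          · rw [Finset.sum_eq_single ⟨i - 1, by omega⟩]
            · rw [show (⟨i - 1, by omega⟩ : Fin k).succ = ⟨i, hi⟩ from
                Fin.ext (by simp; omega), Pi.single_eq_same, ← hu]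
              simp only
              rw [Nat.sub_add_cancel (by omega)]
            · intro j _ hj
              rw [Pi.single_eq_of_ne]
              · simp
              · intro hc
                apply hj
                have := congrArg Fin.val hc
                simp only [Fin.val_succ] at this
                exact Fin.ext (by simp; omega)
            · simp
        have hsum2 : ∑ j : Fin k, A ((Pi.single ⟨i, hi⟩ y : Fin (k + 1) → V) j.castSucc) (x j) =
            A y (u (i + 1)) := by
          by_cases hik : i < k
          · rw [Finset.sum_eq_single ⟨i, hik⟩]
            · rw [show (⟨i, hik⟩ : Fin k).castSucc = ⟨i, hi⟩ from rfl, Pi.single_eq_same, ← hu]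
            · intro j _ hj
              rw [Pi.single_eq_of_ne]
              · simp
              · intro hc
                exact hj (Fin.ext (by simpa using congrArg Fin.val hc))
            · simp
          · rw [show u (i + 1) = 0 by simp [u, hik], map_zero]
            refine Finset.sum_eq_zero fun j _ => ?_
            rw [Pi.single_eq_of_ne (by simp [Fin.ext_iff]; omega)]
            simp
        rw [Finset.sum_sub_distrib, hsum1, hsum2, hA y] at h1
        by_cases h0 : i = 0
        · subst h0
          simp only [if_true] at h1
          change B (v 0) y = _ at h1
          rw [show u 0 = v 0 from rfl, h1]
          ring
        · rw [if_neg h0, Pi.single_eq_of_ne (by simp [Fin.ext_iff]; omega), map_zero, hB y] at h1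
          linear_combination -h1
      · have hz : ∀ i, k + 1 ≤ i → u i = 0 := by
          intro i hi
          simp only [u]
          rw [if_neg (by omega), dif_neg (by omega)]
        rw [hz (i + 1) (by omega), hz i (by omega)]
        simp
    · simp only [u]
      rw [if_neg (by omega), dif_neg (by omega)]
  · rw [Submodule.mem_dualAnnihilator] at hf
    push Not at hf
    obtain ⟨w, hw, hne⟩ := hf
    have hne' : B (v 0) (w 0) ≠ 0 := hne
    refine ⟨fun j => (B (v 0) (w 0))⁻¹ • (if hj : j < k + 1 then w ⟨j, hj⟩ else 0), ?_, ?_⟩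
    · simp [hne']
    · intro j hj
      have := congrFun (LinearMap.mem_ker.1 hw) ⟨j, hj⟩
      rw [hΘ, Pi.zero_apply, sub_eq_zero] at this
      simp only
      rw [dif_pos (by omega), dif_pos (by omega), map_smul, map_smul]
      congr 1

end Singular

section SingularBlock

variable {V : Type} [AddCommGroup V] [Module ℂ V] {A B : V →ₗ[ℂ] V →ₗ[ℂ] ℂ}

theorem shiftPair_fst_transpose_mulVec {m n : ℕ} (v : Fin m → ℂ) (j : Fin n) :
    ((shiftPair m n).1ᵀ *ᵥ v) j =
      if h : 1 ≤ (j : ℕ) ∧ (j : ℕ) - 1 < m then v ⟨j - 1, h.2⟩ else 0 := by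
  rw [mulVec, dotProduct]
  split_ifs with h
  · rw [Finset.sum_eq_single ⟨j - 1, h.2⟩]
    · simp [shiftPair, Nat.sub_add_cancel h.1]
    · intro b _ hb
      have : (j : ℕ) ≠ b + 1 := fun hh => hb (Fin.ext (by simp; omega))
      simp [shiftPair, this]
    · simp
  · apply Finset.sum_eq_zero
    intro b _
    have : (j : ℕ) ≠ b + 1 := by omega
    simp [shiftPair, this]

theorem shiftPair_snd_transpose_mulVec {m n : ℕ} (v : Fin m → ℂ) (j : Fin n) :
    ((shiftPair m n).2ᵀ *ᵥ v) j = if h : (j : ℕ) < m then v ⟨j, h⟩ else 0 := by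
  rw [mulVec, dotProduct]
  split_ifs with h
  · rw [Finset.sum_eq_single ⟨j, h⟩]
    · simp [shiftPair]
    · intro b _ hb
      have : (j : ℕ) ≠ b := fun hh => hb (Fin.ext hh.symm)
      simp [shiftPair, this]
    · simp
  · apply Finset.sum_eq_zero
    intro b _
    have : (j : ℕ) ≠ b := by omega
    simp [shiftPair, this]

theorem sk_fst_mulVec {ρ κ : Type} [Fintype ρ] [Fintype κ] (X : RectPair ρ κ) (α : ρ → ℂ)
    (β : κ → ℂ) :
    (sk X).1 *ᵥ Sum.elim α β = Sum.elim (X.1 *ᵥ β) (-(X.1ᵀ *ᵥ α)) := by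
  simp [sk, fromBlocks_mulVec, neg_mulVec]

theorem sk_snd_mulVec {ρ κ : Type} [Fintype ρ] [Fintype κ] (X : RectPair ρ κ) (α : ρ → ℂ)
    (β : κ → ℂ) :
    (sk X).2 *ᵥ Sum.elim α β = Sum.elim (X.2 *ᵥ β) (-(X.2ᵀ *ᵥ α)) := by
  simp [sk, fromBlocks_mulVec, neg_mulVec]

namespace SingularChain

variable {m : ℕ} {v : ℕ → V}

theorem snd_apply_apply (hv : SingularChain A B m v) (hA : IsSkewForm A) (hB : IsSkewForm B)
    (i j : ℕ) : B (v i) (v j) = 0 := by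
  induction j generalizing i with
  | zero => rw [← hv.succ, hA, hv.zero]; simp
  | succ j ih => rw [← hv.succ, hA, hv.succ, hB, neg_neg, ih]

theorem fst_apply_apply (hv : SingularChain A B m v) (hA : IsSkewForm A) (hB : IsSkewForm B)
    (i j : ℕ) : A (v i) (v j) = 0 := by
  cases i with
  | zero => rw [hv.zero]; simp
  | succ i => rw [hv.succ, hv.snd_apply_apply hA hB]

end SingularChain

section DualChain

variable {k : ℕ} {w : ℕ → V}

theorem dual_chain_snd (hA : IsSkewForm A) (hB : IsSkewForm B)
    (hw : ∀ j < k, B (w (j + 1)) = A (w j)) {i j : ℕ} (hi : i ≤ k) (hj : j ≤ k) :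
    B (w i) (w j) = 0 := by
  have shift : ∀ d i j, i + d ≤ k → j + d ≤ k → B (w (i + d)) (w j) = B (w i) (w (j + d)) := by
    intro d
    induction d with
    | zero => intros; rfl
    | succ d ih =>
      intro i j hi hj
      rw [← add_assoc, hw _ (by omega), hA, ← hw j (by omega), hB, neg_neg,
        ih _ _ (by omega) (by omega), show j + 1 + d = j + (d + 1) by ring]
  have key : ∀ i d, i + d ≤ k → B (w (i + d)) (w i) = 0 := by
    intro i d hd
    refine self_eq_neg.1 ?_
    conv_lhs => rw [shift d i i hd hd, hB]
  rcases le_total i j with h | h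
  · obtain ⟨d, rfl⟩ := Nat.exists_eq_add_of_le h
    rw [hB, key i d hj, neg_zero]
  · obtain ⟨d, rfl⟩ := Nat.exists_eq_add_of_le h
    exact key j d hi

theorem dual_chain_fst (hA : IsSkewForm A) (hB : IsSkewForm B)
    (hw : ∀ j < k, B (w (j + 1)) = A (w j)) {i j : ℕ} (hi : i ≤ k) (hj : j ≤ k) :
    A (w i) (w j) = 0 := by
  rcases hi.lt_or_eq with h | rfl
  · rw [← hw i h]
    exact dual_chain_snd hA hB hw h hj
  · rcases hj.lt_or_eq with h | rfl
    · rw [hA, ← hw j h, dual_chain_snd hA hB hw h hi, neg_zero]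
    · exact hA.self _

theorem dual_chain_pairing (hA : IsSkewForm A) (hB : IsSkewForm B)
    (hw : ∀ j < k, B (w (j + 1)) = A (w j)) {v : ℕ → V} (hv : SingularChain A B (k + 1) v)
    (hvw : B (v 0) (w 0) = 1) {i j : ℕ} (hj : j ≤ k) :
    B (v i) (w j) = if i = j then 1 else 0 := by
  have h0 : ∀ j < k, B (v 0) (w (j + 1)) = 0 := by
    intro j hj
    rw [hB, hw j hj, hA, hv.zero]
    simp
  have hend : ∀ i, k < i → B (v i) = 0 := by
    intro i hi
    rw [← hv.succ, hv.bound _ (by omega), map_zero]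
  have hstep : ∀ i, ∀ j < k, B (v (i + 1)) (w (j + 1)) = B (v i) (w j) := by
    intro i j hj
    rw [hB, hw j hj, hA, hv.succ, neg_neg]
  have shift : ∀ d i j, j + d ≤ k → B (v (i + d)) (w (j + d)) = B (v i) (w j) := by
    intro d
    induction d with
    | zero => intros; rfl
    | succ d ih =>
      intro i j hj
      rw [← add_assoc, ← add_assoc, hstep _ _ (by omega), ih _ _ (by omega)]
  rcases lt_trichotomy i j with h | rfl | h
  · obtain ⟨d, rfl⟩ := Nat.exists_eq_add_of_lt h
    have := shift i 0 (d + 1) (by omega)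
    rw [if_neg (by omega), show i + d + 1 = d + 1 + i by ring, ← h0 d (by omega), ← this, zero_add]
  · have := shift i 0 0 (by omega)
    rw [zero_add] at this
    rw [if_pos rfl, this, hvw]
  · rw [if_neg h.ne', ← shift (k - j) i j (by omega), hend _ (by omega)]
    simp

theorem gram_singular (hA : IsSkewForm A) (hB : IsSkewForm B)
    (hw : ∀ j < k, B (w (j + 1)) = A (w j)) {v : ℕ → V} (hv : SingularChain A B (k + 1) v)
    (hvw : B (v 0) (w 0) = 1) :
    gram A B (Sum.elim (fun j : Fin (k + 1) => w j) fun i : Fin (k + 1 + 1) => -v i) =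
      sk (shiftPair (k + 1) (k + 1 + 1)) := by
  have hBvw : ∀ (i : Fin (k + 1 + 1)) (j : Fin (k + 1)),
      B (v i) (w j) = if (i : ℕ) = j then 1 else 0 :=
    fun i j => dual_chain_pairing hA hB hw hv hvw (by omega)
  have hAvw : ∀ (i : Fin (k + 1 + 1)) (j : Fin (k + 1)),
      A (v i) (w j) = if (i : ℕ) = j + 1 then 1 else 0 := by
    rintro ⟨i, hi⟩ j
    cases i with
    | zero => simp [hv.zero]
    | succ i =>
      simp only [hv.succ, dual_chain_pairing hA hB hw hv hvw (show (j : ℕ) ≤ k by omega),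
        Nat.add_right_cancel_iff]
  refine Prod.ext ?_ ?_ <;> ext (i | i) (j | j) <;>
    simp only [gram, sk, of_apply, Sum.elim_inl, Sum.elim_inr, fromBlocks_apply₁₁,
      fromBlocks_apply₁₂, fromBlocks_apply₂₁, fromBlocks_apply₂₂, Matrix.zero_apply,
      Matrix.neg_apply, transpose_apply, shiftPair, map_neg, LinearMap.neg_apply]
  · exact dual_chain_fst hA hB hw (by omega) (by omega)
  · rw [hA, neg_neg, hAvw]
  · rw [hAvw]
  · rw [hv.fst_apply_apply hA hB]
    simp
  · exact dual_chain_snd hA hB hw (by omega) (by omega)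
  · rw [hB, neg_neg, hBvw]
  · rw [hBvw]
  · rw [hv.snd_apply_apply hA hB]
    simp

theorem hasCanonicalForm_of_dual_chain (hA : IsSkewForm A) (hB : IsSkewForm B)
    (hw : ∀ j < k, B (w (j + 1)) = A (w j)) {v : ℕ → V} (hv : SingularChain A B (k + 1) v)
    (hvw : B (v 0) (w 0) = 1)
    (ih : ∀ Y : Submodule ℂ V, Y ≠ ⊤ →
      HasCanonicalForm (A.domRestrict₁₂ Y Y) (B.domRestrict₁₂ Y Y)) :
    HasCanonicalForm A B := by
  have hg := gram_singular hA hB hw hv hvw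
  obtain ⟨b, hb⟩ : ∃ b, b = (Sum.elim (fun j : Fin (k + 1) => w j)
    fun i : Fin (k + 1 + 1) => -v i) := ⟨_, rfl⟩
  rw [← hb] at hg
  have hfB : ∀ c i, B (b i) (∑ j, c j • b j) = ((sk (shiftPair (k + 1) (k + 1 + 1))).2 *ᵥ c) i :=
    fun c i => by rw [form_sum_smul A B, hg]
  have hgA : gram B A b = ((sk (shiftPair (k + 1) (k + 1 + 1))).2,
      (sk (shiftPair (k + 1) (k + 1 + 1))).1) := by
    rw [← hg]
    rfl
  have hfA : ∀ c i, A (b i) (∑ j, c j • b j) = ((sk (shiftPair (k + 1) (k + 1 + 1))).1 *ᵥ c) i :=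
    fun c i => by rw [form_sum_smul B A, hgA]
  refine exists_split hA hB b ?_ ?_ [SBlock.M (k + 1)] ?_ ⟨Sum.inl 0⟩ ih
  · intro c h1 h2
    obtain ⟨α, β, rfl⟩ : ∃ α β, c = Sum.elim α β := ⟨_, _, (Sum.elim_comp_inl_inr c).symm⟩
    simp only [hfA, hfB, sk_fst_mulVec, sk_snd_mulVec] at h1 h2
    ext (i | i)
    · have := h2 (Sum.inr i.castSucc)
      simp only [Sum.elim_inr, Pi.neg_apply, shiftPair_snd_transpose_mulVec] at this
      rw [dif_pos (by simp; omega)] at this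
      simpa using this
    · rcases Fin.eq_castSucc_or_eq_last i with ⟨j, rfl⟩ | rfl
      · have := h2 (Sum.inl j)
        simp [shiftPair_snd_mulVec] at this
        exact this
      · have := h1 (Sum.inl (Fin.last k))
        simp [shiftPair_fst_mulVec] at this
        exact this
  · intro x
    obtain ⟨c, hc⟩ : ∃ c : Fin (k + 1) ⊕ Fin (k + 1 + 1) → ℂ, c = Sum.elim
      (fun j : Fin (k + 1) => B (v j) x)
      (fun i : Fin (k + 1 + 1) => if (i : ℕ) < k + 1 then B (w i) x else A (w k) x) := ⟨_, rfl⟩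
    refine ⟨c, ?_, ?_⟩
    · intro i
      rw [map_sub, hfA, hc, sk_fst_mulVec, sub_eq_zero, hb]
      rcases i with j | i
      · simp only [Sum.elim_inl, shiftPair_fst_mulVec]
        rw [dif_pos (by omega)]
        split_ifs with h
        · rw [hw _ (by omega)]
        · rw [show (j : ℕ) = k by omega]
      · simp only [Sum.elim_inr, Pi.neg_apply, shiftPair_fst_transpose_mulVec, map_neg,
          LinearMap.neg_apply, neg_inj]
        split_ifs with h
        · rw [← hv.succ, Nat.sub_add_cancel h.1]
        · rw [show (i : ℕ) = 0 by omega, hv.zero]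
          rfl
    · intro i
      rw [map_sub, hfB, hc, sk_snd_mulVec, sub_eq_zero, hb]
      rcases i with j | i
      · simp only [Sum.elim_inl, shiftPair_snd_mulVec]
        rw [dif_pos (by omega), if_pos (by omega)]
      · simp only [Sum.elim_inr, Pi.neg_apply, shiftPair_snd_transpose_mulVec, map_neg,
          LinearMap.neg_apply, neg_inj]
        split_ifs with h
        · rfl
        · rw [← hv.succ, hv.bound _ (by omega)]
          simp
  · rw [hg]
    exact (cong_M (k + 1)).trans (ofList_singleton _)

end DualChain

end SingularBlock

section Existence

theorem hasCanonicalForm_of_radical {V : Type} [AddCommGroup V] [Module ℂ V]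
    {A B : V →ₗ[ℂ] V →ₗ[ℂ] ℂ} (hA : IsSkewForm A) (hB : IsSkewForm B) {v : V} (hv : v ≠ 0)
    (hAv : A v = 0) (hBv : B v = 0)
    (ih : ∀ Y : Submodule ℂ V, Y ≠ ⊤ →
      HasCanonicalForm (A.domRestrict₁₂ Y Y) (B.domRestrict₁₂ Y Y)) :
    HasCanonicalForm A B := by
  obtain ⟨Y, hY⟩ := (ℂ ∙ v).exists_isCompl
  have hU : ∀ {C : V →ₗ[ℂ] V →ₗ[ℂ] ℂ}, C v = 0 → ∀ u ∈ ℂ ∙ v, ∀ y, C u y = 0 := by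
    intro C hC u hu y
    obtain ⟨a, rfl⟩ := Submodule.mem_span_singleton.1 hu
    simp [hC]
  have hcard : Module.finrank ℂ (ℂ ∙ v) = 1 := finrank_span_singleton hv
  let b := Module.finBasisOfFinrankEq ℂ (ℂ ∙ v) hcard
  refine hasCanonicalForm_of_isCompl hA hB hY (fun u hu y _ => hU hAv u hu y)
    (fun u hu y _ => hU hBv u hu y) ⟨Fin 1, inferInstance, inferInstance, b, [SBlock.M 0], ?_⟩
    (ih Y ?_)
  · refine Cong.trans (Q := sk (shiftPair 0 1)) ?_ ((cong_M 0).trans (ofList_singleton _))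
    convert cong_reindex (Equiv.emptySum (Fin 0) (Fin 1)) _ using 1
    refine Prod.ext ?_ ?_ <;> ext (i | i) (j | j)
    all_goals first | exact i.elim0 | exact j.elim0 | skip
    · exact (hU hAv _ (b i).2 (b j)).symm
    · exact (hU hBv _ (b i).2 (b j)).symm
  · rintro rfl
    have := hY.disjoint
    rw [disjoint_top, Submodule.span_singleton_eq_bot] at this
    exact hv this

theorem exists_canonicalForm (n : ℕ) : ∀ (V : Type) [AddCommGroup V] [Module ℂ V]
    [FiniteDimensional ℂ V] (A B : V →ₗ[ℂ] V →ₗ[ℂ] ℂ), Module.finrank ℂ V = n →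
    IsSkewForm A → IsSkewForm B → HasCanonicalForm A B := by
  induction n using Nat.strong_induction_on with
  | _ n ih =>
  intro V _ _ _ A B hn hA hB
  have ih' : ∀ Y : Submodule ℂ V, Y ≠ ⊤ →
      HasCanonicalForm (A.domRestrict₁₂ Y Y) (B.domRestrict₁₂ Y Y) := fun Y hY =>
    ih _ (hn ▸ Submodule.finrank_lt hY) Y _ _ rfl (hA.domRestrict Y) (hB.domRestrict Y)
  rcases subsingleton_or_nontrivial V with hV | hV
  · refine ⟨Fin 0, inferInstance, inferInstance, Module.Basis.empty V, [], ?_⟩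
    refine ⟨0, 0, ?_, ?_, ?_, ?_⟩ <;> ext i <;> exact i.elim0
  by_cases reg : ∃ μ₀ : ℂ, ∀ x, (∀ y, A x y = μ₀ * B x y) → x = 0
  · obtain ⟨μ₀, reg⟩ := reg
    exact hasCanonicalForm_of_regular hA hB μ₀ reg ih'
  · push Not at reg
    obtain ⟨m, v, hv, hv0, hmin⟩ := exists_minimal_singularChain (exists_singularChain reg)
    cases m with
    | zero =>
      refine hasCanonicalForm_of_radical hA hB hv0 hv.zero ?_ ih'
      rw [← hv.succ, hv.bound 1 one_pos, map_zero]
    | succ k =>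
      obtain ⟨w, hw0, hw⟩ := exists_dual_chain hA hB hv.zero hv0 (hmin k k.lt_succ_self)
      exact hasCanonicalForm_of_dual_chain hA hB hw hv hw0 ih'

theorem exists_cong_ofList {ι : Type} [Fintype ι] [DecidableEq ι] (P : FormPair ι)
    (h1 : P.1ᵀ = -P.1) (h2 : P.2ᵀ = -P.2) : ∃ l : List SBlock, Cong (ofList l) P := by
  have hs : ∀ {X : Matrix ι ι ℂ}, Xᵀ = -X → IsSkewForm (Matrix.toLinearMap₂' ℂ X) := by
    intro X hX x y
    rw [Matrix.toLinearMap₂'_apply', Matrix.toLinearMap₂'_apply', dotProduct_comm,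
      ← vecMul_transpose, hX, ← dotProduct_mulVec, neg_mulVec, dotProduct_neg]
  obtain ⟨κ, _, _, b, l, hl⟩ := exists_canonicalForm _ (ι → ℂ) (Matrix.toLinearMap₂' ℂ P.1)
    (Matrix.toLinearMap₂' ℂ P.2) rfl (hs h1) (hs h2)
  refine ⟨l, hl.symm.trans (Cong.symm ?_)⟩
  have hX : ∀ X : Matrix ι ι ℂ, ((Pi.basisFun ℂ ι).toMatrix b)ᵀ * X * (Pi.basisFun ℂ ι).toMatrix b =
      Matrix.of fun i j => Matrix.toLinearMap₂' ℂ X (b i) (b j) := by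
    intro X
    ext i j
    rw [of_apply, Matrix.toLinearMap₂'_apply', dotProduct_mulVec, Matrix.mul_apply']
    rfl
  exact ⟨(Pi.basisFun ℂ ι).toMatrix b, b.toMatrix (Pi.basisFun ℂ ι),
    Module.Basis.toMatrix_mul_toMatrix_flip _ _, Module.Basis.toMatrix_mul_toMatrix_flip _ _,
    hX _, hX _⟩

end Existence

section Counting

theorem nu_lt_of_chain {ρ κ : Type} [Fintype ρ] [Fintype κ] {k : ℕ} {X : RectPair ρ κ}
    (x : ℕ → κ → ℂ) (h0 : X.1 *ᵥ x 0 = 0) (hs : ∀ i < k, X.1 *ᵥ x (i + 1) = X.2 *ᵥ x i)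
    (hx : x 0 ≠ 0) : nu k k X < nu (k + 1) (k + 1) X := by
  let F : (Fin k → κ → ℂ) →ₗ[ℂ] (Fin (k + 1) → κ → ℂ) :=
    { toFun := fun y => Fin.cons 0 y
      map_add' := fun y z => by
        ext i : 1
        refine Fin.cases ?_ (fun j => ?_) i <;> simp
      map_smul' := fun c y => by
        ext i : 1
        refine Fin.cases ?_ (fun j => ?_) i <;> simp }
  have hpad : ∀ (y : Fin k → κ → ℂ) i, pad (k + 1) (F y) (i + 1) = pad k y i := by
    intro y i
    cases i with
    | zero => simp [pad, F]
    | succ i =>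
      simp only [pad, Nat.add_lt_add_iff_right]
      split_ifs with h
      · exact Fin.cons_succ (α := fun _ => κ → ℂ) 0 y ⟨i, h⟩
      · rfl
  have hFinj : Function.Injective F := fun y z hyz =>
    (Fin.cons_injective2 (α := fun _ => κ → ℂ) hyz).2
  have hle : (LinearMap.ker (chainMap k k X)).map F ≤
      LinearMap.ker (chainMap (k + 1) (k + 1) X) := by
    rintro _ ⟨y, hy, rfl⟩
    have hy' := mem_ker_chainMap.1 hy
    rw [mem_ker_chainMap]
    intro i hi
    rw [hpad]
    cases i with
    | zero => simp [pad]
    | succ i => rw [hpad]; exact hy' i (by omega)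
  rw [nu, (Submodule.equivMapOfInjective F hFinj _).finrank_eq]
  refine Submodule.finrank_lt_finrank_of_lt (lt_of_le_of_ne hle fun heq => ?_)
  have hmem : (fun i : Fin (k + 1) => x i) ∈ LinearMap.ker (chainMap (k + 1) (k + 1) X) := by
    rw [mem_ker_chainMap]
    intro i hi
    cases i with
    | zero => simp [pad, h0]
    | succ i =>
      simp only [pad]
      rw [dif_pos hi, dif_pos (by omega)]
      exact hs i (by omega)
  rw [← heq] at hmem
  obtain ⟨y, _, hy⟩ := hmem
  exact hx (congrFun hy 0).symm

theorem exists_block_of_localNu_lt {l : List SBlock} (hM : ∀ m, SBlock.M m ∉ l) {o : Option ℂ}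
    {k : ℕ} (h : localNu o k (ofList l) < localNu o (k + 1) (ofList l)) :
    ∃ h, k + 1 ≤ h ∧ Hb o h ∈ l := by
  by_contra hcon
  push Not at hcon
  refine h.not_ge ?_
  rw [localNu_ofList, localNu_ofList]
  refine List.sum_le_sum fun b hb => ?_
  have hmin : ∀ h, Hb o h ∈ l → 2 * min h (k + 1) ≤ 2 * min h k := by
    intro h hh
    have := mt (hcon h) (not_not.2 hh)
    omega
  cases b with
  | M m => exact absurd hb (hM m)
  | H h μ =>
    simp only [localVal]
    split_ifs with ho
    · subst ho
      exact hmin _ hb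
    · exact le_rfl
  | K h =>
    simp only [localVal]
    split_ifs with ho
    · subst ho
      exact hmin _ hb
    · exact le_rfl

theorem not_mem_of_localNu_one_eq_zero {l : List SBlock} {o : Option ℂ}
    (h : localNu o 1 (ofList l) = 0) (m : ℕ) : SBlock.M m ∉ l := by
  intro hm
  rw [localNu_ofList, List.sum_eq_zero_iff] at h
  have := h _ (List.mem_map_of_mem hm)
  simp [localVal] at this

theorem size_Hb (o : Option ℂ) (h : ℕ) : (Hb o h).size = 2 * h := by
  cases o <;> simp [Hb, SBlock.size, two_mul]

theorem Hb_injective {o o' : Option ℂ} {h h' : ℕ} (e : Hb o h = Hb o' h') : o = o' ∧ h = h' := by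
  cases o <;> cases o' <;> simp_all [Hb]

theorem cong_ofList_of_mem (ek : List (Option ℂ × ℕ)) : ∀ l : List SBlock,
    (ek.map Prod.fst).Nodup → (∀ x ∈ ek, x.2 ≠ 0 → ∃ h, x.2 ≤ h ∧ Hb x.1 h ∈ l) →
    sizeSum l ≤ 2 * (ek.map Prod.snd).sum →
    Cong (ofList l) (ofList (ek.map fun x => Hb x.1 x.2)) := by
  classical
  induction ek with
  | nil =>
    intro l _ _ hl
    have h0 : sizeSum l = 0 := by simpa using hl
    have h1 : IsEmpty (Fin (sizeSum l)) := by rw [h0]; exact Fin.isEmpty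
    have h2 : IsEmpty (Fin (sizeSum [])) := Fin.isEmpty
    exact (ds_empty _ _).symm.trans (empty_ds (ofList []) (ofList l))
  | cons x ek ih =>
    intro l hnd hl hs
    rw [List.map_cons, List.nodup_cons] at hnd
    rw [List.map_cons, List.sum_cons] at hs
    by_cases hx : x.2 = 0
    · refine (ih l hnd.2 (fun y hy => hl y (List.mem_cons_of_mem _ hy)) (by omega)).trans ?_
      refine Cong.trans ?_ (ofList_perm (List.perm_append_singleton (Hb x.1 x.2) _))
      exact cong_ofList_append_empty _ _ (by simp [size_Hb, hx])
    · obtain ⟨h, hh, hmem⟩ := hl x List.mem_cons_self hx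
      have hp := List.perm_cons_erase hmem
      have hsz : sizeSum l = 2 * h + sizeSum (l.erase (Hb x.1 h)) := by
        rw [sizeSum_eq, (hp.map SBlock.size).sum_eq, List.map_cons, List.sum_cons, size_Hb,
          sizeSum_eq]
      have hc := ih (l.erase (Hb x.1 h)) hnd.2 ?_ (by omega)
      · have hcard := cong_card hc
        rw [Fintype.card_fin, Fintype.card_fin, sizeSum_eq (ek.map _), List.map_map] at hcard
        have hcard' : (ek.map (SBlock.size ∘ fun x => Hb x.1 x.2)).sum =
            2 * (ek.map Prod.snd).sum := by
          rw [← List.sum_map_mul_left]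
          simp [Function.comp_def, size_Hb]
        have : h = x.2 := by omega
        subst this
        refine (ofList_perm hp).trans ((ofList_cons _ _).symm.trans ?_)
        exact ((Cong.refl _).ds hc).trans (ofList_cons _ _)
      · intro y hy hy0
        obtain ⟨h', hh', hmem'⟩ := hl y (List.mem_cons_of_mem _ hy) hy0
        refine ⟨h', hh', (List.mem_erase_of_ne ?_).2 hmem'⟩
        intro e
        exact hnd.1 ((Hb_injective e).1 ▸ List.mem_map_of_mem hy)

end Counting

end SkewPencil

namespace SkewPencil
open FormPair Polynomial

theorem nu_sk_lt_of_chain {ρ κ : Type} [Fintype ρ] [Fintype κ] {k : ℕ} {X : RectPair ρ κ}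
    (x : ℕ → κ → ℂ) (h0 : X.1 *ᵥ x 0 = 0) (hs : ∀ i < k, X.1 *ᵥ x (i + 1) = X.2 *ᵥ x i)
    (hx : x 0 ≠ 0) : nu k k (sk X) < nu (k + 1) (k + 1) (sk X) := by
  refine nu_lt_of_chain (fun i => Sum.elim 0 (x i)) ?_ (fun i hi => ?_) fun h => hx ?_
  · rw [sk_fst_mulVec, h0]
    simp
  · rw [sk_fst_mulVec, sk_snd_mulVec, hs i hi]
    simp
  · rw [← Sum.elim_comp_inr (0 : ρ → ℂ) (x 0), h]
    rfl

section Cyclic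

variable (p q : ℕ)

/-- The lower left corner of the first matrix of `cyclicPair`. -/
def cornerFst (χ : ℂ[X]) : Matrix (Fin (q + 1)) (Fin (p + 1)) ℂ :=
  Matrix.of fun t s => if (t : ℕ) = 0 then χ.coeff s else if (s : ℕ) = p then χ.coeff (p + t) else 0

/-- The lower left corner of the second matrix of `cyclicPair`. -/
def cornerSnd (χ : ℂ[X]) : Matrix (Fin (q + 1)) (Fin (p + 1)) ℂ :=
  Matrix.of fun t s => if (t : ℕ) = q then if (s : ℕ) = p then -χ.coeff (p + q + 1) else 0 else 0

/-- A square pencil of size `p + q + 1` with determinant `χ`, up to sign, degenerating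
to a direct sum of two rectangular blocks as `χ` tends to zero. -/
def cyclicPair (χ : ℂ[X]) : RectPair (Fin p ⊕ Fin (q + 1)) (Fin (p + 1) ⊕ Fin q) :=
  (fromBlocks (shiftPair p (p + 1)).1 0 (cornerFst p q χ) (-(shiftPair q (q + 1)).1ᵀ),
    fromBlocks (shiftPair p (p + 1)).2 0 (cornerSnd p q χ) (-(shiftPair q (q + 1)).2ᵀ))

variable {p q} {χ : ℂ[X]}

/-- The coordinate vector with prescribed components. -/
def cyclicVec (p q : ℕ) (E F : ℕ → ℂ) : Fin (p + 1) ⊕ Fin q → ℂ :=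
  Sum.elim (fun s => E s) fun t => F t

theorem cornerFst_mulVec (E : ℕ → ℂ) (t : Fin (q + 1)) :
    (cornerFst p q χ *ᵥ fun s : Fin (p + 1) => E s) t =
      if (t : ℕ) = 0 then ∑ s ∈ Finset.range (p + 1), χ.coeff s * E s
        else χ.coeff (p + t) * E p := by
  simp only [mulVec, dotProduct, cornerFst, of_apply]
  split_ifs with h
  · exact Fin.sum_univ_eq_sum_range (fun s => χ.coeff s * E s) (p + 1)
  · rw [Finset.sum_eq_single (Fin.last p)]
    · simp
    · intro b _ hb
      rw [if_neg fun hh : (b : ℕ) = p => hb (Fin.ext hh), zero_mul]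
    · simp

theorem cornerSnd_mulVec (E : ℕ → ℂ) (t : Fin (q + 1)) :
    (cornerSnd p q χ *ᵥ fun s : Fin (p + 1) => E s) t =
      if (t : ℕ) = q then -(χ.coeff (p + q + 1) * E p) else 0 := by
  simp only [mulVec, dotProduct, cornerSnd, of_apply]
  split_ifs with h
  · rw [Finset.sum_eq_single (Fin.last p)]
    · simp
    · intro b _ hb
      rw [if_neg fun hh : (b : ℕ) = p => hb (Fin.ext hh), zero_mul]
    · simp
  · simp

theorem cyclicPair_fst_mulVec (E F : ℕ → ℂ) :
    (cyclicPair p q χ).1 *ᵥ cyclicVec p q E F = Sum.elim (fun i : Fin p => E (i + 1))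
      fun t : Fin (q + 1) => if (t : ℕ) = 0 then ∑ s ∈ Finset.range (p + 1), χ.coeff s * E s
        else χ.coeff (p + t) * E p - F (t - 1) := by
  rw [cyclicPair, cyclicVec, fromBlocks_mulVec, Sum.elim_comp_inl, Sum.elim_comp_inr]
  ext (i | t)
  · simp [shiftPair_fst_mulVec]
  · simp only [Sum.elim_inr, Pi.add_apply, cornerFst_mulVec, neg_mulVec, Pi.neg_apply,
      shiftPair_fst_transpose_mulVec]
    split_ifs <;> first | omega | simp [sub_eq_add_neg]

theorem cyclicPair_snd_mulVec (E F : ℕ → ℂ) (hF : F q = χ.coeff (p + q + 1) * E p) :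
    (cyclicPair p q χ).2 *ᵥ cyclicVec p q E F =
      Sum.elim (fun i : Fin p => E i) fun t : Fin (q + 1) => -F t := by
  rw [cyclicPair, cyclicVec, fromBlocks_mulVec, Sum.elim_comp_inl, Sum.elim_comp_inr]
  ext (i | t)
  · simp [shiftPair_snd_mulVec]
  · simp only [Sum.elim_inr, Pi.add_apply, cornerSnd_mulVec, neg_mulVec, Pi.neg_apply,
      shiftPair_snd_transpose_mulVec]
    split_ifs with h1 h2 <;> first | omega | simp [h1, hF]

theorem coeff_of_X_pow_dvd {a b : ℂ[X]} {μ : ℂ} {k : ℕ}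
    (h : X ^ (k + 1) ∣ a - (X + C μ) * b) :
    a.coeff 0 + -μ * b.coeff 0 = 0 ∧
      ∀ i < k, a.coeff (i + 1) + -μ * b.coeff (i + 1) = b.coeff i := by
  rw [X_pow_dvd_iff] at h
  constructor
  · have := h 0 (by omega)
    simp [add_mul] at this
    linear_combination this
  · intro i hi
    have := h (i + 1) (by omega)
    simp [add_mul] at this
    linear_combination this

/-- The rows of the first matrix of `cyclicPair` evaluated at polynomial vectors. -/
def rowFst (p q : ℕ) (χ : ℂ[X]) (E F : ℕ → ℂ[X]) : Fin p ⊕ Fin (q + 1) → ℂ[X] :=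
  Sum.elim (fun i => E (i + 1))
      fun t => if (t : ℕ) = 0 then ∑ s ∈ Finset.range (p + 1), C (χ.coeff s) * E s
        else C (χ.coeff (p + t)) * E p - F (t - 1)

/-- The rows of the second matrix of `cyclicPair` evaluated at polynomial vectors. -/
def rowSnd (p q : ℕ) (E F : ℕ → ℂ[X]) : Fin p ⊕ Fin (q + 1) → ℂ[X] :=
  Sum.elim (fun i => E i) fun t => -F t

theorem fst_mulVec_coeff (E F : ℕ → ℂ[X]) (i : ℕ) :
    (cyclicPair p q χ).1 *ᵥ cyclicVec p q (fun s => (E s).coeff i) (fun t => (F t).coeff i) =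
      fun a => (rowFst p q χ E F a).coeff i := by
  rw [cyclicPair_fst_mulVec]
  ext (j | t)
  · rfl
  · simp only [rowFst, Sum.elim_inr]
    split_ifs <;> simp

theorem snd_mulVec_coeff (E F : ℕ → ℂ[X]) (hF : F q = C (χ.coeff (p + q + 1)) * E p) (i : ℕ) :
    (cyclicPair p q χ).2 *ᵥ cyclicVec p q (fun s => (E s).coeff i) (fun t => (F t).coeff i) =
      fun a => (rowSnd p q E F a).coeff i := by
  rw [cyclicPair_snd_mulVec _ _ (by simp [hF])]
  ext (j | t)
  · rfl
  · simp [rowSnd]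

theorem nu_lt_of_root {μ : ℂ} {k : ℕ} (hχ : χ.natDegree ≤ p + q + 1)
    (hμ : (X - C μ) ^ (k + 1) ∣ χ) :
    nu k k (twist (some (-μ)) (sk (cyclicPair p q χ))) <
      nu (k + 1) (k + 1) (twist (some (-μ)) (sk (cyclicPair p q χ))) := by
  obtain ⟨a, ha⟩ : ∃ a : ℂ[X], a = X + C μ := ⟨_, rfl⟩
  obtain ⟨E, hE⟩ : ∃ E : ℕ → ℂ[X], ∀ s, E s = a ^ s := ⟨_, fun _ => rfl⟩
  obtain ⟨F, hF⟩ : ∃ F : ℕ → ℂ[X], ∀ t, F t =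
    ∑ r ∈ Finset.range (q + 1 - t), C (χ.coeff (p + t + 1 + r)) * a ^ (p + r) := ⟨_, fun _ => rfl⟩
  have hFq : F q = C (χ.coeff (p + q + 1)) * E p := by
    rw [hF, hE, Nat.add_sub_cancel_left, Finset.sum_range_one]
    rfl
  have hFs : ∀ t ≤ q, C (χ.coeff (p + t)) * a ^ p + a * F t =
      ∑ r ∈ Finset.range (q + 2 - t), C (χ.coeff (p + t + r)) * a ^ (p + r) := by
    intro t ht
    rw [show q + 2 - t = q + 1 - t + 1 by omega, Finset.sum_range_succ', hF, Finset.mul_sum,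
      add_comm]
    congr 1
    refine Finset.sum_congr rfl fun r _ => ?_
    rw [show p + t + (r + 1) = p + t + 1 + r by ring]
    ring
  have hdvd : ∀ i, X ^ (k + 1) ∣ rowFst p q χ E F i - a * rowSnd p q E F i := by
    rintro (i | t)
    · simp [rowFst, rowSnd, hE, pow_succ']
    · simp only [rowFst, rowSnd, Sum.elim_inr]
      split_ifs with ht
      · have hcomp : X ^ (k + 1) ∣ χ.comp a := by
          have := map_dvd (compRingHom a) hμ
          simpa [ha] using this
        convert hcomp using 1
        rw [Polynomial.comp, eval₂_eq_sum_range' C (Nat.lt_succ_of_le hχ), Finset.sum_range_succ,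
          ht, mul_neg,
          sub_neg_eq_add, show (p + q + 1).succ = p + (q + 2) by omega, Finset.sum_range_add]
        have := hFs 0 (Nat.zero_le q)
        simp only [add_zero, Nat.sub_zero] at this
        rw [← this]
        simp only [hE]
        ring
      · have := hFs t (by omega)
        rw [hF (t - 1), show q + 1 - (t - 1 : ℕ) = q + 2 - t by omega,
          show p + (t - 1 : ℕ) + 1 = p + t by omega, ← this, hE]
        simp
  rw [twist_sk]
  refine nu_sk_lt_of_chain
    (fun i => cyclicVec p q (fun s => (E s).coeff i) fun t => (F t).coeff i) ?_ ?_ ?_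
  · rw [add_mulVec, smul_mulVec, fst_mulVec_coeff, snd_mulVec_coeff _ _ hFq]
    ext j
    exact (coeff_of_X_pow_dvd (ha ▸ hdvd j)).1
  · intro i hi
    rw [add_mulVec, smul_mulVec, fst_mulVec_coeff, snd_mulVec_coeff _ _ hFq,
      snd_mulVec_coeff _ _ hFq]
    ext j
    exact (coeff_of_X_pow_dvd (ha ▸ hdvd j)).2 i hi
  · intro h
    have := congrFun h (Sum.inl 0)
    simp [cyclicVec, hE] at this

theorem nu_lt_of_coeff {k : ℕ} (hχ : ∀ r, p + q + 1 < r + (k + 1) → χ.coeff r = 0) :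
    nu k k (twist none (sk (cyclicPair p q χ))) <
      nu (k + 1) (k + 1) (twist none (sk (cyclicPair p q χ))) := by
  obtain ⟨E, hE⟩ : ∃ E : ℕ → ℂ[X], ∀ s, E s = X ^ (p - s) := ⟨_, fun _ => rfl⟩
  obtain ⟨G, hG⟩ : ∃ G : ℕ → ℂ[X], ∀ t, G t =
    ∑ r ∈ Finset.range (p + t + 1), C (χ.coeff r) * X ^ (p + t + 1 - r) := ⟨_, fun _ => rfl⟩
  have hGs : ∀ t, G (t + 1) = X * (C (χ.coeff (p + (t + 1))) + G t) := by
    intro t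
    rw [hG, hG, ← add_assoc, Finset.sum_range_succ, mul_add, Finset.mul_sum, add_comm]
    congr 1
    · rw [show p + t + 1 + 1 - (p + t + 1) = 1 by omega]
      ring
    · refine Finset.sum_congr rfl fun r hr => ?_
      rw [Finset.mem_range] at hr
      rw [show p + t + 1 + 1 - r = p + t + 1 - r + 1 by omega]
      ring
  have hG0 : G 0 = X * ∑ s ∈ Finset.range (p + 1), C (χ.coeff s) * E s := by
    rw [hG, Finset.mul_sum]
    refine Finset.sum_congr rfl fun r hr => ?_
    rw [Finset.mem_range] at hr
    rw [hE, show p + 0 + 1 - r = p - r + 1 by omega]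
    ring
  obtain ⟨F, hF⟩ : ∃ F : ℕ → ℂ[X], ∀ t, F t = if t = q then C (χ.coeff (p + q + 1)) else -G t :=
    ⟨_, fun _ => rfl⟩
  have hEp : E p = 1 := by simp [hE]
  have hFq : F q = C (χ.coeff (p + q + 1)) * E p := by simp [hF, hEp]
  have hlast : X ^ (k + 1) ∣ C (χ.coeff (p + q + 1)) + G q := by
    have : C (χ.coeff (p + q + 1)) + G q =
        ∑ r ∈ Finset.range (p + q + 1 + 1), C (χ.coeff r) * X ^ (p + q + 1 - r) := by
      rw [Finset.sum_range_succ, hG]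
      simp [add_comm]
    rw [this]
    refine Finset.dvd_sum fun r _ => ?_
    by_cases hr : p + q + 1 < r + (k + 1)
    · simp [hχ r hr]
    · exact (pow_dvd_pow X (by omega)).mul_left _
  have hdvd : ∀ i, X ^ (k + 1) ∣ rowSnd p q E F i - (X + C 0) * rowFst p q χ E F i := by
    rw [C_0, add_zero]
    rintro (i | t)
    · simp only [rowFst, rowSnd, Sum.elim_inl, hE]
      rw [← pow_succ', show p - (i + 1 : ℕ) + 1 = p - i by omega, sub_self]
      exact dvd_zero _
    · have hrow : X * rowFst p q χ E F (Sum.inr t) = G t := by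
        simp only [rowFst, Sum.elim_inr]
        split_ifs with ht
        · rw [ht, hG0]
        · obtain ⟨u, hu⟩ := Nat.exists_eq_succ_of_ne_zero ht
          rw [hu, hGs, hF, if_neg (by omega), hEp]
          simp
      rw [hrow, rowSnd, Sum.elim_inr, hF]
      split_ifs with ht
      · rw [ht, ← neg_add']
        exact (dvd_neg).2 hlast
      · simp
  rw [twist_sk]
  refine nu_sk_lt_of_chain
    (fun i => cyclicVec p q (fun s => (E s).coeff i) fun t => (F t).coeff i) ?_ ?_ ?_
  · rw [snd_mulVec_coeff _ _ hFq]
    ext j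
    simpa using (coeff_of_X_pow_dvd (hdvd j)).1
  · intro i hi
    rw [snd_mulVec_coeff _ _ hFq, fst_mulVec_coeff]
    ext j
    simpa using (coeff_of_X_pow_dvd (hdvd j)).2 i hi
  · intro h
    have := congrFun h (Sum.inl (Fin.last p))
    simp [cyclicVec, hE] at this

end Cyclic

section CyclicFamily

variable {p q : ℕ} {χ : ℂ[X]}

theorem cyclicPair_injective {μ : ℂ} (hμ : μ ≠ 0) (hdeg : χ.natDegree ≤ p + q + 1)
    (hχ : χ.eval μ ≠ 0) (v : Fin (p + 1) ⊕ Fin q → ℂ)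
    (hv : ((cyclicPair p q χ).1 + -μ • (cyclicPair p q χ).2) *ᵥ v = 0) : v = 0 := by
  obtain ⟨E, hE⟩ : ∃ E : ℕ → ℂ, ∀ s, E s = if h : s < p + 1 then v (Sum.inl ⟨s, h⟩) else 0 :=
    ⟨_, fun _ => rfl⟩
  obtain ⟨F, hF⟩ : ∃ F : ℕ → ℂ, ∀ t, F t = if h : t < q then v (Sum.inr ⟨t, h⟩) else
      χ.coeff (p + q + 1) * E p := ⟨_, fun _ => rfl⟩
  have hFq : F q = χ.coeff (p + q + 1) * E p := by simp [hF]
  obtain rfl : v = cyclicVec p q E F := by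
    ext (s | t)
    · simpa [cyclicVec, hE] using fun h => absurd s.2 (by omega)
    · simp [cyclicVec, hF]
  rw [add_mulVec, smul_mulVec, cyclicPair_fst_mulVec, cyclicPair_snd_mulVec _ _ hFq] at hv
  have hEs : ∀ s ≤ p, E s = μ ^ s * E 0 := by
    intro s
    induction s with
    | zero => simp
    | succ s ih =>
      intro hs
      have := congrFun hv (Sum.inl ⟨s, hs⟩)
      simp only [Pi.add_apply, Pi.smul_apply, Sum.elim_inl, Pi.zero_apply, smul_eq_mul] at this
      rw [ih (by omega)] at this
      linear_combination this
  have hFt : ∀ t ≤ q,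
      (∑ s ∈ Finset.range (p + t + 1), χ.coeff s * μ ^ s) * E 0 + μ ^ (t + 1) * F t = 0 := by
    intro t
    induction t with
    | zero =>
      intro _
      have := congrFun hv (Sum.inr 0)
      simp only [Pi.add_apply, Pi.smul_apply, Sum.elim_inr, Pi.zero_apply, smul_eq_mul,
        Fin.val_zero, if_true] at this
      rw [Finset.sum_congr rfl (g := fun s => χ.coeff s * μ ^ s * E 0), ← Finset.sum_mul] at this
      · linear_combination this
      · intro s hs
        rw [Finset.mem_range] at hs
        rw [hEs s (by omega), mul_assoc]
    | succ t ih =>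
      intro ht
      have := congrFun hv (Sum.inr ⟨t + 1, by omega⟩)
      simp only [Pi.add_apply, Pi.smul_apply, Sum.elim_inr, Pi.zero_apply, smul_eq_mul,
        Nat.add_sub_cancel, Nat.succ_ne_zero, if_false] at this
      rw [hEs p le_rfl] at this
      rw [← add_assoc, Finset.sum_range_succ]
      rw [← add_assoc] at this
      linear_combination ih (by omega) + μ ^ (t + 1) * this
  have hE0 : E 0 = 0 := by
    have := hFt q le_rfl
    rw [hFq, hEs p le_rfl] at this
    have he := eval_eq_sum_range' (Nat.lt_succ_of_le hdeg) μ
    rw [Nat.succ_eq_add_one, Finset.sum_range_succ] at he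
    refine (mul_eq_zero.1 (?_ : χ.eval μ * E 0 = 0)).resolve_left hχ
    rw [he]
    linear_combination this
  ext (s | t)
  · simp [cyclicVec, hEs s (by omega), hE0]
  · have := hFt t t.2.le
    simpa [hE0, hμ, cyclicVec] using this

theorem transpose_injective {ρ κ : Type} [Fintype ρ] [Fintype κ] (X : Matrix ρ κ ℂ)
    (hcard : Fintype.card κ = Fintype.card ρ) (h : ∀ v, X *ᵥ v = 0 → v = 0) (w : ρ → ℂ)
    (hw : Xᵀ *ᵥ w = 0) : w = 0 := by
  classical
  have hsurj : Function.Surjective X.mulVecLin :=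
    (LinearMap.injective_iff_surjective_of_finrank_eq_finrank (by simpa using hcard)).1
      ((injective_iff_map_eq_zero _).2 h)
  refine dotProduct_eq_zero w fun u => ?_
  obtain ⟨v, rfl⟩ := hsurj u
  rw [mulVecLin_apply, dotProduct_mulVec, ← mulVec_transpose, hw, zero_dotProduct]

theorem nu_eq_zero_of_eval_ne_zero {μ : ℂ} (hμ : μ ≠ 0) (hdeg : χ.natDegree ≤ p + q + 1)
    (hχ : χ.eval μ ≠ 0) : nu 1 1 (twist (some (-μ)) (sk (cyclicPair p q χ))) = 0 := by
  have hinj := cyclicPair_injective hμ hdeg hχ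
  rw [twist_sk, nu_sk,
    nu_eq_zero_of_fst 1 1 le_rfl (transpose_injective _ (by simp; omega) hinj),
    nu_eq_zero_of_fst 1 1 le_rfl hinj]

theorem exists_characteristic (ek : List (Option ℂ × ℕ)) : ∃ χ : ℂ[X], χ ≠ 0 ∧
    (∀ μ k, (some μ, k) ∈ ek → (X - C μ) ^ k ∣ χ) ∧ χ.natDegree ≤ (ek.map Prod.snd).sum ∧
    ∀ k, (none, k) ∈ ek → χ.natDegree + k ≤ (ek.map Prod.snd).sum := by
  induction ek with
  | nil => exact ⟨1, one_ne_zero, by simp, by simp, by simp⟩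
  | cons x ek ih =>
    obtain ⟨χ, h0, hd, hdeg, hinf⟩ := ih
    obtain ⟨o, h⟩ := x
    simp only [List.map_cons, List.sum_cons]
    cases o with
    | none =>
      refine ⟨χ, h0, fun μ k hk => hd μ k (by simpa using hk), by omega, fun k hk => ?_⟩
      rcases List.mem_cons.1 hk with hk | hk
      · simp only [Prod.mk.injEq, true_and] at hk
        omega
      · have := hinf k hk
        omega
    | some ν =>
      have hdeg' : ((X - C ν) ^ h * χ).natDegree = h + χ.natDegree := by
        rw [natDegree_mul (pow_ne_zero _ (X_sub_C_ne_zero ν)) h0, natDegree_pow, natDegree_X_sub_C,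
          mul_one]
      refine ⟨(X - C ν) ^ h * χ, mul_ne_zero (pow_ne_zero _ (X_sub_C_ne_zero ν)) h0,
        fun μ k hk => ?_, by omega, fun k hk => ?_⟩
      · rcases List.mem_cons.1 hk with hk | hk
        · simp only [Prod.mk.injEq, Option.some.injEq] at hk
          rw [hk.1, hk.2]
          exact dvd_mul_right _ _
        · exact (hd μ k hk).mul_left _
      · have := hinf k (by simpa using hk)
        omega

theorem cong_cyclicPair {ek : List (Option ℂ × ℕ)} (hnd : (ek.map Prod.fst).Nodup)
    (hsum : p + q + 1 = (ek.map Prod.snd).sum) (h0 : χ ≠ 0)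
    (hd : ∀ μ k, (some μ, k) ∈ ek → (X - C μ) ^ k ∣ χ) (hdeg : χ.natDegree ≤ p + q + 1)
    (hinf : ∀ k, (none, k) ∈ ek → χ.natDegree + k ≤ p + q + 1) :
    Cong (ofList (ek.map fun x => Hb x.1 x.2)) (sk (cyclicPair p q χ)) := by
  obtain ⟨l, hl⟩ := exists_cong_ofList (sk (cyclicPair p q χ))
    (by simp [sk, fromBlocks_transpose, fromBlocks_neg])
    (by simp [sk, fromBlocks_transpose, fromBlocks_neg])
  have hloc : ∀ o k, localNu o k (ofList l) =
      nu k k (twist (o.map Neg.neg) (sk (cyclicPair p q χ))) :=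
    fun o k => (hl.twist _).nu_eq k k
  have hM : ∀ m, SBlock.M m ∉ l := by
    obtain ⟨μ, hμ⟩ : ∃ μ, (X * χ).eval μ ≠ 0 := by
      by_contra hcon
      push Not at hcon
      exact mul_ne_zero X_ne_zero h0 (funext fun μ => by rw [hcon μ, eval_zero])
    rw [eval_mul, eval_X, mul_ne_zero_iff] at hμ
    refine not_mem_of_localNu_one_eq_zero (o := some μ) ?_
    rw [hloc]
    exact nu_eq_zero_of_eval_ne_zero hμ.1 hdeg hμ.2
  refine (cong_ofList_of_mem ek l hnd ?_ ?_).symm.trans hl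
  · rintro ⟨o, k⟩ hx hk
    obtain ⟨k, rfl⟩ := Nat.exists_eq_succ_of_ne_zero hk
    refine exists_block_of_localNu_lt hM ?_
    rw [hloc, hloc]
    cases o with
    | none =>
      refine nu_lt_of_coeff fun r hr => coeff_eq_zero_of_natDegree_lt ?_
      have := hinf _ hx
      omega
    | some μ => exact nu_lt_of_root hdeg (hd μ _ hx)
  · have := cong_card hl
    simp only [Fintype.card_fin, Fintype.card_sum] at this
    omega

theorem cong_sk_neg_transpose {ρ κ : Type} [Fintype ρ] [DecidableEq ρ] [Fintype κ]
    [DecidableEq κ] (X : RectPair ρ κ) :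
    Cong (sk ((-X.1ᵀ, -X.2ᵀ) : RectPair κ ρ)) (sk X) := by
  convert cong_reindex (Equiv.sumComm ρ κ) (sk ((-X.1ᵀ, -X.2ᵀ) : RectPair κ ρ)) using 1
  refine Prod.ext ?_ ?_ <;> ext (i | i) (j | j) <;> simp [sk, FormPair.reindex]

theorem blockDegen_Hb_M {ek : List (Option ℂ × ℕ)} (hnd : (ek.map Prod.fst).Nodup)
    (hsum : p + q + 1 = (ek.map Prod.snd).sum) :
    BlockDegen (↑(ek.map fun x => Hb x.1 x.2)) ↑[SBlock.M p, SBlock.M q] := by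
  obtain ⟨χ, h0, hd, hdeg, hinf⟩ := exists_characteristic ek
  rw [← hsum] at hdeg
  simp only [← hsum] at hinf
  refine BlockDegen.of_lists (Degen.cong_right ?_ (ofList_pair (cong_M p)
    ((cong_sk_neg_transpose _).trans (cong_M q))))
  refine degen_of_rect_pair _ _ _ (cornerFst p q χ, cornerSnd p q χ) fun c hc => ?_
  have hc' : C c ≠ 0 := C_ne_zero.2 hc
  have h := cong_cyclicPair (χ := C c * χ) hnd hsum (mul_ne_zero hc' h0)
    (fun μ k hk => (hd μ k hk).mul_left _) (by rwa [natDegree_C_mul hc])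
    (by rwa [natDegree_C_mul hc])
  convert h using 3
  · congr 1
    ext t s
    simp [cornerFst]
  · congr 1
    ext t s
    simp [cornerSnd]

end CyclicFamily

end SkewPencil

namespace SkewPencil
open FormPair

theorem blockDegen_of_transSkew {s t : Multiset SBlock} (h : TransSkew s t) :
    BlockDegen s t := by
  rcases h with ⟨j, k, rest, hj, hjk, rfl, rfl⟩ | ⟨j, k, o, rest, hj, hjk, rfl, rfl⟩ |
    ⟨j, k, o, rest, rfl, rfl⟩ | ⟨ek, p, q, rest, hnd, hsum, rfl, rfl⟩
  · obtain ⟨j, rfl⟩ := Nat.exists_eq_add_of_le' hj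
    simpa [← Multiset.cons_coe] using (blockDegen_M_M j k hjk).add_right rest
  · obtain ⟨j, rfl⟩ := Nat.exists_eq_add_of_le' hj
    simpa [← Multiset.cons_coe] using (blockDegen_Hb_Hb o j k hjk).add_right rest
  · simpa [← Multiset.cons_coe] using (blockDegen_M_Hb o j k).add_right rest
  · simpa only [← Multiset.cons_coe, Multiset.cons_add, Multiset.coe_nil, zero_add] using
      (blockDegen_Hb_M hnd hsum).add_right rest

theorem blockDegen_of_reflTransGen {s t : Multiset SBlock}
    (h : Relation.ReflTransGen TransSkew s t) : BlockDegen s t := by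
  induction h with
  | refl =>
    rintro l l' rfl h
    exact (ofList_perm (Multiset.coe_eq_coe.1 h.symm)).degen
  | tail _ h ih => exact ih.trans (blockDegen_of_transSkew h)

theorem orbC_subset_closure_iff_degen {n : ℕ} (P Q : Pencil n n) :
    Pencil.orbC Q ⊆ closure (Pencil.orbC P) ↔
      Degen (P : FormPair (Fin n)) (Q : FormPair (Fin n)) := by
  have horb : ∀ P : Pencil n n,
      Pencil.orbC P = {R | Cong (P : FormPair (Fin n)) (R : FormPair (Fin n))} :=
    fun P => Set.ext fun R => congruent_iff_cong P R
  simp only [horb]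
  exact ⟨fun h => h (Cong.refl _), fun h _ hR => h.cong_right hR⟩

end SkewPencil

open SkewPencil SkewPencil.FormPair

/-- **Theorem 3.4**: for skew-symmetric pencils `P1`, `P2`, one has
`orbᶜ P2 ⊆ closure (orbᶜ P1)` if and only if the canonical form of `P2` can be
obtained from that of `P1` by a finite sequence of structure transitions of the
four types (1)–(4). -/
theorem orbC_subset_closure_iff_transSkew {n : ℕ} (P1 P2 : Pencil n n)
    (h1 : Pencil.IsSkew P1) (h2 : Pencil.IsSkew P2) :
    Pencil.orbC P2 ⊆ closure (Pencil.orbC P1) ↔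
      ∃ s1 s2 : Multiset SBlock, WeakRepresentsC P1 s1 ∧ WeakRepresentsC P2 s2 ∧
        Relation.ReflTransGen TransSkew s1 s2 := by
  rw [orbC_subset_closure_iff_degen]
  constructor
  · intro h
    obtain ⟨l1, hl1⟩ := exists_cong_ofList P1 h1.1 h1.2
    obtain ⟨l2, hl2⟩ := exists_cong_ofList P2 h2.1 h2.2
    obtain ⟨z, z', hz, hz', hchain⟩ :=
      reach_of_degen (Degen.cong_left hl1 (h.cong_right hl2.symm))
    exact ⟨_, _,
      weakRepresentsC_add_empty ((weakRepresentsC_iff P1 _).2 ⟨l1, rfl, hl1⟩) hz,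
      weakRepresentsC_add_empty ((weakRepresentsC_iff P2 _).2 ⟨l2, rfl, hl2⟩) hz', hchain⟩
  · rintro ⟨s1, s2, hs1, hs2, hchain⟩
    obtain ⟨l1, rfl, hl1⟩ := (weakRepresentsC_iff P1 s1).1 hs1
    obtain ⟨l2, rfl, hl2⟩ := (weakRepresentsC_iff P2 s2).1 hs2
    exact Degen.cong_left hl1.symm
      ((blockDegen_of_reflTransGen hchain l1 l2 rfl rfl).cong_right hl2)
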